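/- Let A be a cycle-finite basic indecomposable artin algebra. Then the following statements are equivalent: (i) the number of isomorphism classes of τ_A-rigid modules in ind A is finite; (ii) the number of isomorphism classes of rigid modules in ind A is finite; (iii) the number of isomorphism classes of directing modules in ind A is finite; (iv) A is of finite representation type. -/

import Mathlib

/-!
Common framework: finite length modules over a ring, the radical of the module
category, cycles of indecomposable modules, Auslander-Reiten quivers,
translation quivers notions, and classes of artin algebras.
Right `A`-modules are formalized as left `Aᵐᵒᵖ`-modules.
-/

universe u

/-- A bundled object of `mod R`: a finite length `R`-module. -/
structure ModA (R : Type u) [Ring R] : Type (u + 1) where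
  M : Type u
  [acg : AddCommGroup M]
  [mod : Module R M]
  finLen : IsFiniteLength R M

attribute [instance] ModA.acg ModA.mod

/-- A bundled (not necessarily finite length) `R`-module. -/
structure RawMod (R : Type u) [Ring R] : Type (u + 1) where
  M : Type u
  [acg : AddCommGroup M]
  [mod : Module R M]

attribute [instance] RawMod.acg RawMod.mod

/-- A module is indecomposable iff it is nonzero and its endomorphism ring has no
nontrivial idempotents. -/
def IsIndecMod (R : Type u) [Ring R] (M : Type u) [AddCommGroup M] [Module R M] : Prop :=
  Nontrivial M ∧ ∀ f : Module.End R M, f * f = f → f = 0 ∨ f = 1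

namespace ModA

variable {R : Type u} [Ring R]

/-- Indecomposability of an object of `mod R`. -/
def IsIndec (X : ModA R) : Prop := IsIndecMod R X.M

/-- Isomorphism of objects of `mod R`. -/
def Iso (X Y : ModA R) : Prop := Nonempty (X.M ≃ₗ[R] Y.M)

end ModA

/-- Membership in the radical `rad(X, Y)` of the category `mod R`: a map `f : X → Y`
belongs to the radical iff for every indecomposable `Z` and all `g : Z → X`, `h : Y → Z`
the composite `h ∘ f ∘ g` is not an isomorphism. -/
def InRad {R : Type u} [Ring R] {X Y : ModA R} (f : X.M →ₗ[R] Y.M) : Prop :=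
  ∀ Z : ModA R, Z.IsIndec → ∀ (g : Z.M →ₗ[R] X.M) (h : Y.M →ₗ[R] Z.M),
    ¬Function.Bijective (h.comp (f.comp g))

/-- The powers `rad^n` of the radical of `mod R`. -/
def radPow (R : Type u) [Ring R] : ℕ → ∀ X Y : ModA R, AddSubgroup (X.M →ₗ[R] Y.M)
  | 0, _, _ => ⊤
  | n + 1, X, Y => AddSubgroup.closure
      {f | ∃ (Z : ModA R) (g : X.M →ₗ[R] Z.M) (h : Z.M →ₗ[R] Y.M),
        InRad g ∧ h ∈ radPow R n Z Y ∧ f = h.comp g}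

/-- Membership in the infinite radical `rad^∞ = ⋂ₙ radⁿ` of `mod R`. -/
def InRadInf {R : Type u} [Ring R] {X Y : ModA R} (f : X.M →ₗ[R] Y.M) : Prop :=
  ∀ n : ℕ, f ∈ radPow R n X Y

/-- A cycle in `ind R`: a sequence of nonzero nonisomorphisms
`M₀ → M₁ → ⋯ → M_{r-1} → M_r = M₀` between indecomposable modules. -/
structure ModCycle (R : Type u) [Ring R] : Type (u + 1) where
  len : ℕ
  len_pos : 0 < len
  obj : Fin (len + 1) → ModA R
  obj_indec : ∀ i, (obj i).IsIndec
  closed : obj (Fin.last len) = obj 0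
  hom : ∀ i : Fin len, (obj i.castSucc).M →ₗ[R] (obj i.succ).M
  hom_ne_zero : ∀ i, hom i ≠ 0
  hom_not_iso : ∀ i, ¬Function.Bijective (hom i)

/-- A cycle is finite if none of its homomorphisms lies in the infinite radical. -/
def ModCycle.IsFiniteCycle {R : Type u} [Ring R] (c : ModCycle R) : Prop :=
  ∀ i, ¬InRadInf (c.hom i)

/-- The cycle passes through the module `M`. -/
def ModCycle.Passes {R : Type u} [Ring R] (c : ModCycle R) (M : ModA R) : Prop :=
  ∃ i, (c.obj i).Iso M

/-- A module is cycle-finite if it lies on a cycle and every cycle through it is finite. -/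
def IsCycleFiniteModule {R : Type u} [Ring R] (M : ModA R) : Prop :=
  (∃ c : ModCycle R, c.Passes M) ∧ ∀ c : ModCycle R, c.Passes M → c.IsFiniteCycle

/-- A module is directing if it lies on no cycle. -/
def IsDirectingModule {R : Type u} [Ring R] (M : ModA R) : Prop :=
  ¬∃ c : ModCycle R, c.Passes M

section Irreducible

variable {R : Type u} [Ring R]

/-- `f` is a split monomorphism (a section). -/
def SplitMonoMap {X Y : ModA R} (f : X.M →ₗ[R] Y.M) : Prop :=
  ∃ r : Y.M →ₗ[R] X.M, r.comp f = LinearMap.id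

/-- `f` is a split epimorphism (a retraction). -/
def SplitEpiMap {X Y : ModA R} (f : X.M →ₗ[R] Y.M) : Prop :=
  ∃ s : Y.M →ₗ[R] X.M, f.comp s = LinearMap.id

/-- `f` is an irreducible homomorphism. -/
def IsIrred {X Y : ModA R} (f : X.M →ₗ[R] Y.M) : Prop :=
  ¬SplitMonoMap f ∧ ¬SplitEpiMap f ∧
    ∀ (Z : ModA R) (g : X.M →ₗ[R] Z.M) (h : Z.M →ₗ[R] Y.M), h.comp g = f →
      SplitMonoMap g ∨ SplitEpiMap h

end Irreducible

/-- An almost split (Auslander-Reiten) sequence `0 → l → m → r → 0` in `mod R`. -/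
structure AlmostSplitSeq (R : Type u) [Ring R] : Type (u + 1) where
  l : ModA R
  m : ModA R
  r : ModA R
  f : l.M →ₗ[R] m.M
  g : m.M →ₗ[R] r.M
  inj : Function.Injective f
  surj : Function.Surjective g
  exact : LinearMap.range f = LinearMap.ker g
  not_split : ¬SplitEpiMap g
  l_indec : l.IsIndec
  r_indec : r.IsIndec
  right_almost : ∀ (Z : ModA R) (h : Z.M →ₗ[R] r.M), ¬SplitEpiMap h →
      ∃ h' : Z.M →ₗ[R] m.M, g.comp h' = h
  left_almost : ∀ (Z : ModA R) (h : l.M →ₗ[R] Z.M), ¬SplitMonoMap h →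
      ∃ h' : m.M →ₗ[R] Z.M, h'.comp f = h

/-- `N ≅ τ M` for the Auslander-Reiten translation `τ = DTr`. -/
def IsTauOf {R : Type u} [Ring R] (N M : ModA R) : Prop :=
  ∃ s : AlmostSplitSeq R, s.l.Iso N ∧ s.r.Iso M

/-- The indecomposable objects of `mod R`. -/
def IndecModA (R : Type u) [Ring R] := {X : ModA R // X.IsIndec}

/-- Isomorphism is an equivalence relation on indecomposable modules. -/
def isoSetoid (R : Type u) [Ring R] : Setoid (IndecModA R) where
  r X Y := X.1.Iso Y.1
  iseqv :=
    { refl := fun X => ⟨LinearEquiv.refl R X.1.M⟩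
      symm := fun h => h.elim fun e => ⟨e.symm⟩
      trans := fun h h' => h.elim fun e => h'.elim fun e' => ⟨e.trans e'⟩ }

/-- The vertices of the Auslander-Reiten quiver `Γ_R`: isomorphism classes of
indecomposable modules in `mod R`. -/
def ARVertex (R : Type u) [Ring R] := Quotient (isoSetoid R)

/-- The vertex of `Γ_R` given by an indecomposable module. -/
def ARVertex.mk {R : Type u} [Ring R] (X : IndecModA R) : ARVertex R :=
  Quotient.mk (isoSetoid R) X

section ARQuiver

variable {R : Type u} [Ring R]

/-- The arrows of the Auslander-Reiten quiver: `x → y` iff there is an irreducible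
homomorphism between representatives. -/
def ARArrow (x y : ARVertex R) : Prop :=
  ∃ (X Y : IndecModA R) (f : X.1.M →ₗ[R] Y.1.M),
    IsIrred f ∧ ARVertex.mk X = x ∧ ARVertex.mk Y = y

/-- `TauRel x y` iff `x = τ y` in the Auslander-Reiten quiver. -/
def TauRel (x y : ARVertex R) : Prop :=
  ∃ X Y : IndecModA R, ARVertex.mk X = x ∧ ARVertex.mk Y = y ∧ IsTauOf X.1 Y.1

/-- A vertex given by an (indecomposable) projective module. -/
def IsProjVertex (x : ARVertex R) : Prop :=
  ∃ X : IndecModA R, ARVertex.mk X = x ∧ Module.Projective R X.1.M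

/-- A vertex given by an (indecomposable) injective module. -/
def IsInjVertex (x : ARVertex R) : Prop :=
  ∃ X : IndecModA R, ARVertex.mk X = x ∧ Module.Injective R X.1.M

/-- The vertex lies on an oriented cycle of `Γ_R`. -/
def OnARCycle (x : ARVertex R) : Prop := Relation.TransGen ARArrow x x

/-- An edge (arrow in either direction) of the underlying graph of `Γ_R`. -/
def ARStep (x y : ARVertex R) : Prop := ARArrow x y ∨ ARArrow y x

/-- `D` is a connected component of the full subquiver of `Γ_R` on the vertex set `S`. -/
def IsComponentOf (S D : Set (ARVertex R)) : Prop :=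
  D ⊆ S ∧ D.Nonempty ∧
    (∀ x ∈ D, ∀ y ∈ S, ARStep x y → y ∈ D) ∧
    ∀ x ∈ D, ∀ y ∈ D, Relation.ReflTransGen (fun a b => a ∈ S ∧ b ∈ S ∧ ARStep a b) x y

/-- `C` is a connected component of `Γ_R`. -/
def IsARComponent (C : Set (ARVertex R)) : Prop := IsComponentOf Set.univ C

/-- The vertex lies on an oriented cycle all of whose vertices belong to `S`. -/
def OnCycleIn (S : Set (ARVertex R)) (x : ARVertex R) : Prop :=
  Relation.TransGen (fun a b => a ∈ S ∧ b ∈ S ∧ ARArrow a b) x x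

/-- `Γ` is a connected component of the cyclic quiver `_cΓ_R` (a cyclic component). -/
def IsCyclicComponent (Γ : Set (ARVertex R)) : Prop :=
  IsComponentOf {x | OnARCycle x} Γ

/-- A vertex represented by a cycle-finite module. -/
def IsCycleFiniteVertex (x : ARVertex R) : Prop :=
  ∃ X : IndecModA R, ARVertex.mk X = x ∧ IsCycleFiniteModule X.1

/-- A vertex represented by a directing module. -/
def IsDirectingVertex (x : ARVertex R) : Prop :=
  ∃ X : IndecModA R, ARVertex.mk X = x ∧ IsDirectingModule X.1

/-- A cycle-finite cyclic component: a cyclic component containing a cycle-finite module. -/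
def IsCycleFiniteCyclicComponent (Γ : Set (ARVertex R)) : Prop :=
  IsCyclicComponent Γ ∧ ∃ x ∈ Γ, IsCycleFiniteVertex x

/-- A full translation subquiver is cyclic if each of its vertices lies on an oriented
cycle inside it. -/
def IsCyclicSub (S : Set (ARVertex R)) : Prop := ∀ x ∈ S, OnCycleIn S x

/-- A full translation subquiver is coherent: every projective vertex is the start of an
infinite sectional path inside it, and every injective vertex is the end of an infinite
sectional path inside it. -/
def IsCoherentSub (S : Set (ARVertex R)) : Prop :=
  (∀ x ∈ S, IsProjVertex x → ∃ c : ℕ → ARVertex R, c 0 = x ∧ (∀ n, c n ∈ S) ∧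
      (∀ n, ARArrow (c n) (c (n + 1))) ∧ ∀ n, ¬TauRel (c n) (c (n + 2))) ∧
  (∀ x ∈ S, IsInjVertex x → ∃ c : ℕ → ARVertex R, c 0 = x ∧ (∀ n, c n ∈ S) ∧
      (∀ n, ARArrow (c (n + 1)) (c n)) ∧ ∀ n, ¬TauRel (c (n + 2)) (c n))

/-- `S` is a convex subquiver of (the full subquiver on) `C`: every path in `C` with
source and target in `S` has all its vertices in `S`. -/
def ConvexIn (C S : Set (ARVertex R)) : Prop :=
  ∀ (n : ℕ) (c : ℕ → ARVertex R), (∀ k ≤ n, c k ∈ C) →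
    (∀ k < n, ARArrow (c k) (c (k + 1))) → c 0 ∈ S → c n ∈ S → ∀ k ≤ n, c k ∈ S

/-- `S` is the core of the almost acyclic component `C`: the finite convex subquiver of
`C` containing all vertices lying on oriented cycles in `C`. -/
def IsCoreOf (C S : Set (ARVertex R)) : Prop :=
  S ⊆ C ∧ S.Finite ∧ ConvexIn C S ∧ ∀ x ∈ C, OnCycleIn C x → x ∈ S

/-- A component is almost acyclic if all but finitely many of its vertices do not lie on
oriented cycles. -/
def IsAlmostAcyclicComp (C : Set (ARVertex R)) : Prop := {x ∈ C | OnCycleIn C x}.Finite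

/-- A component is almost cyclic if its cyclic part is cofinite. -/
def IsAlmostCyclicComp (C : Set (ARVertex R)) : Prop := {x ∈ C | ¬OnCycleIn C x}.Finite

/-- Two vertices lie in the same `τ`-orbit. -/
def TauConn (x y : ARVertex R) : Prop :=
  Relation.ReflTransGen (fun a b => TauRel a b ∨ TauRel b a) x y

/-- The left stable part of `C`: remove the `τ`-orbits of projective vertices. -/
def leftStable (C : Set (ARVertex R)) : Set (ARVertex R) :=
  {x | x ∈ C ∧ ¬∃ y, TauConn x y ∧ IsProjVertex y}

/-- The right stable part of `C`: remove the `τ`-orbits of injective vertices. -/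
def rightStable (C : Set (ARVertex R)) : Set (ARVertex R) :=
  {x | x ∈ C ∧ ¬∃ y, TauConn x y ∧ IsInjVertex y}

/-- The stable part of `C`. -/
def stablePart (C : Set (ARVertex R)) : Set (ARVertex R) := leftStable C ∩ rightStable C

end ARQuiver

/-- The arrows of the translation quiver `ℤA∞/(τ^r)`, with vertices indexed by the
`τ`-orbit coordinate in `ZMod r` and the quasi-length (minus one) in `ℕ`. -/
def TubeArrow {r : ℕ} : ZMod r × ℕ → ZMod r × ℕ → Prop := fun u v =>
  (v.1 = u.1 ∧ v.2 = u.2 + 1) ∨ (v.1 = u.1 + 1 ∧ u.2 = v.2 + 1)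

section Tube

variable {R : Type u} [Ring R]

/-- `T` is a stable tube of rank `r`, parametrized by `φ : ℤA∞/(τ^r) → Γ_R`. -/
def IsStableTubeVia (T : Set (ARVertex R)) (r : ℕ) (φ : ZMod r × ℕ → ARVertex R) : Prop :=
  0 < r ∧ Function.Injective φ ∧ Set.range φ = T ∧
    (∀ u v, TubeArrow u v → ARArrow (φ u) (φ v)) ∧
    (∀ u v, ARArrow (φ u) (φ v) → TubeArrow u v) ∧
    ∀ (i : ZMod r) (n : ℕ), TauRel (φ (i - 1, n)) (φ (i, n))

/-- `T` is a stable tube. -/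
def IsStableTube (T : Set (ARVertex R)) : Prop := ∃ r φ, IsStableTubeVia T r φ

end Tube

section Separating

variable {R : Type u} [Ring R]

/-- A family of vertices is generalized standard if `rad^∞` vanishes between its modules. -/
def GeneralizedStandardSet (U : Set (ARVertex R)) : Prop :=
  ∀ X Y : IndecModA R, ARVertex.mk X ∈ U → ARVertex.mk Y ∈ U →
    ∀ f : X.1.M →ₗ[R] Y.1.M, InRadInf f → f = 0

/-- `S` is (isomorphic to) a composition factor (a subquotient) of `M`. -/
def IsCompFactorMod (R : Type u) [Ring R] (S : Type u) [AddCommGroup S] [Module R S]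
    (M : Type u) [AddCommGroup M] [Module R M] : Prop :=
  ∃ N' N : Submodule R M, N' ≤ N ∧
    Nonempty ((↥N ⧸ N'.comap N.subtype) ≃ₗ[R] S)

/-- A family of vertices is sincere if every simple module is a composition factor of one
of its modules. -/
def SincereSet (U : Set (ARVertex R)) : Prop :=
  ∀ (S : Type u) [AddCommGroup S] [Module R S], IsSimpleModule R S →
    ∃ x ∈ U, ∃ X : IndecModA R, ARVertex.mk X = x ∧ IsCompFactorMod R S X.1.M

/-- All homomorphisms from modules with vertex in `U` to modules with vertex in `V` vanish. -/
def HomVanish (U V : Set (ARVertex R)) : Prop :=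
  ∀ X Y : IndecModA R, ARVertex.mk X ∈ U → ARVertex.mk Y ∈ V →
    ∀ f : X.1.M →ₗ[R] Y.1.M, f = 0

/-- Every homomorphism from a module in `U` to a module in `V` factors through the
additive closure of the modules in `W`. -/
def FactorsThrough (U W V : Set (ARVertex R)) : Prop :=
  ∀ X Y : IndecModA R, ARVertex.mk X ∈ U → ARVertex.mk Y ∈ V →
    ∀ f : X.1.M →ₗ[R] Y.1.M, ∃ (k : ℕ) (Z : Fin k → IndecModA R)
      (g : ∀ i, X.1.M →ₗ[R] (Z i).1.M) (h : ∀ i, (Z i).1.M →ₗ[R] Y.1.M),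
      (∀ i, ARVertex.mk (Z i) ∈ W) ∧ f = ∑ i, (h i).comp (g i)

/-- `cs` is a separating family of components of `Γ_R`. -/
def IsSeparatingFamily (cs : Set (Set (ARVertex R))) : Prop :=
  ∃ ps qs : Set (Set (ARVertex R)),
    (∀ C ∈ ps, IsARComponent C) ∧ (∀ C ∈ cs, IsARComponent C) ∧ (∀ C ∈ qs, IsARComponent C) ∧
    (∀ C, IsARComponent C → C ∈ ps ∨ C ∈ cs ∨ C ∈ qs) ∧
    (∀ C ∈ ps, C ∉ cs ∧ C ∉ qs) ∧ (∀ C ∈ cs, C ∉ qs) ∧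
    SincereSet (⋃₀ cs) ∧ GeneralizedStandardSet (⋃₀ cs) ∧
    HomVanish (⋃₀ qs) (⋃₀ ps) ∧ HomVanish (⋃₀ qs) (⋃₀ cs) ∧ HomVanish (⋃₀ cs) (⋃₀ ps) ∧
    FactorsThrough (⋃₀ ps) (⋃₀ cs) (⋃₀ qs)

end Separating

/-! ### Classes of algebras via their Auslander-Reiten quivers.
For a ring `B`, the category `mod B` of finitely generated right `B`-modules is
realized as the category of finite length left `Bᵐᵒᵖ`-modules. -/

/-- An algebra is of finite representation type if it has only finitely many isomorphism
classes of indecomposable finitely generated (right) modules. -/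
def IsFiniteRepTypeAlg (B : Type u) [Ring B] : Prop :=
  (Set.univ : Set (ARVertex Bᵐᵒᵖ)).Finite

/-- An algebra is cycle-finite if all cycles in `ind B` are finite. -/
def IsCycleFiniteAlg (B : Type u) [Ring B] : Prop :=
  ∀ c : ModCycle Bᵐᵒᵖ, c.IsFiniteCycle

/-- A generalized multicoil algebra: an algebra whose Auslander-Reiten quiver admits a
separating family of almost cyclic coherent components. -/
def IsGeneralizedMulticoilAlgebra (B : Type u) [Ring B] : Prop :=
  ∃ cs : Set (Set (ARVertex Bᵐᵒᵖ)),
    (∀ C ∈ cs, IsARComponent C ∧ IsAlmostCyclicComp C ∧ IsCoherentSub C) ∧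
    IsSeparatingFamily cs

/-- A generalized double tilted algebra: an algebra whose Auslander-Reiten quiver admits
a separating almost acyclic component (a connecting component). -/
def IsGeneralizedDoubleTiltedAlgebra (B : Type u) [Ring B] : Prop :=
  ∃ C : Set (ARVertex Bᵐᵒᵖ),
    IsARComponent C ∧ IsAlmostAcyclicComp C ∧ IsSeparatingFamily {C}

/-- A concealed canonical algebra: an algebra whose Auslander-Reiten quiver admits a
separating family of stable tubes. -/
def IsConcealedCanonicalAlgebra (B : Type u) [Ring B] : Prop :=
  ∃ ts : Set (Set (ARVertex Bᵐᵒᵖ)), (∀ T ∈ ts, IsStableTube T) ∧ IsSeparatingFamily ts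

/-- A generic module: an indecomposable module of infinite length with finite endolength. -/
def IsGenericModule (R : Type u) [Ring R] (N : RawMod R) : Prop :=
  IsIndecMod R N.M ∧ ¬IsFiniteLength R N.M ∧ IsFiniteLength (Module.End R N.M) N.M

/-- The endolength of a module: its length over its endomorphism ring. -/
noncomputable def endolength (R : Type u) [Ring R] (N : RawMod R) : WithBot ℕ∞ :=
  Order.krullDim (Submodule (Module.End R N.M) N.M)

/-- Generic tameness in the sense of Crawley-Boevey: for each `d` there are only finitely
many isomorphism classes of generic (right) modules of endolength `d`. -/
def IsGenericallyTameAlg (B : Type u) [Ring B] : Prop :=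
  ∀ d : ℕ, ∃ (k : ℕ) (T : Fin k → RawMod Bᵐᵒᵖ),
    ∀ N : RawMod Bᵐᵒᵖ, IsGenericModule Bᵐᵒᵖ N → endolength Bᵐᵒᵖ N = (d : ℕ∞) →
      ∃ i, Nonempty (N.M ≃ₗ[Bᵐᵒᵖ] (T i).M)

/-- A tame generalized multicoil algebra. -/
def IsTameGeneralizedMulticoilAlgebra (B : Type u) [Ring B] : Prop :=
  IsGeneralizedMulticoilAlgebra B ∧ IsGenericallyTameAlg B

/-- A tame generalized double tilted algebra. -/
def IsTameGeneralizedDoubleTiltedAlgebra (B : Type u) [Ring B] : Prop :=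
  IsGeneralizedDoubleTiltedAlgebra B ∧ IsGenericallyTameAlg B

/-! ### The quiver of an algebra, convex idempotents, basic and connected algebras -/

section AlgebraSide

variable (A : Type u) [Ring A]

/-- The Jacobson radical of `A` (as a left ideal; it is in fact two-sided). -/
def jacobsonRad : Ideal A := (⊥ : Ideal A).jacobson

/-- The square of the Jacobson radical of `A`. -/
def jacobsonRadSq : Ideal A :=
  Ideal.span {x | ∃ a ∈ jacobsonRad A, ∃ b ∈ jacobsonRad A, x = a * b}

/-- A primitive idempotent of `A`. -/
def IsPrimitiveIdempotent (e : A) : Prop :=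
  IsIdempotentElem e ∧ e ≠ 0 ∧
    ∀ f g : A, IsIdempotentElem f → IsIdempotentElem g → f * g = 0 → g * f = 0 →
      e = f + g → f = 0 ∨ g = 0

/-- A complete family of pairwise orthogonal primitive idempotents of `A`; its indices
are the vertices of the quiver `Q_A` of `A`. -/
structure CompleteIdemFamily (A : Type u) [Ring A] where
  n : ℕ
  e : Fin n → A
  prim : ∀ i, IsPrimitiveIdempotent A (e i)
  orth : ∀ i j, i ≠ j → e i * e j = 0
  total : ∑ i, e i = 1

/-- There is an arrow `i → j` in the quiver `Q_A` iff `e_i (rad A) e_j ⊄ (rad A)²`. -/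
def QAarrow (E : CompleteIdemFamily A) (i j : Fin E.n) : Prop :=
  ∃ y ∈ jacobsonRad A, E.e i * y * E.e j ∉ jacobsonRadSq A

/-- A set of vertices of `Q_A` is convex if every path of `Q_A` with source and target in
it has all its vertices in it. -/
def ConvexVertexSet (E : CompleteIdemFamily A) (S : Set (Fin E.n)) : Prop :=
  ∀ (n : ℕ) (c : ℕ → Fin E.n), (∀ k < n, QAarrow A E (c k) (c (k + 1))) →
    c 0 ∈ S → c n ∈ S → ∀ k ≤ n, c k ∈ S

/-- A convex idempotent of `A`: a sum of pairwise orthogonal primitive idempotents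
corresponding to the vertices of a convex subquiver of `Q_A`. -/
def IsConvexIdempotent (e : A) : Prop :=
  ∃ (E : CompleteIdemFamily A) (S : Finset (Fin E.n)),
    ConvexVertexSet A E ↑S ∧ e = ∑ i ∈ S, E.e i

/-- The corner `eAe` of `A` at an idempotent `e`, as a nonunital subring (it is a unital
ring with unit `e`). -/
def cornerRing (e : A) : NonUnitalSubring A where
  carrier := {x | e * x = x ∧ x * e = x}
  zero_mem' := by simp
  add_mem' := by
    rintro a b ⟨ha1, ha2⟩ ⟨hb1, hb2⟩
    constructor
    · rw [mul_add, ha1, hb1]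
    · rw [add_mul, ha2, hb2]
  neg_mem' := by
    rintro a ⟨ha1, ha2⟩
    constructor
    · rw [mul_neg, ha1]
    · rw [neg_mul, ha2]
  mul_mem' := by
    rintro a b ⟨ha1, ha2⟩ ⟨hb1, hb2⟩
    constructor
    · rw [← mul_assoc, ha1]
    · rw [mul_assoc, hb2]

/-- An (indecomposable =) connected algebra: no nontrivial central idempotents. -/
def IsConnectedAlgebra : Prop :=
  Nontrivial A ∧ ∀ e : A, IsIdempotentElem e → e ∈ Set.center A → e = 0 ∨ e = 1

/-- A basic algebra: distinct orthogonal primitive idempotents have nonisomorphic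
associated indecomposable projective right modules. -/
def IsBasicAlgebra : Prop :=
  ¬∃ e f : A, IsPrimitiveIdempotent A e ∧ IsPrimitiveIdempotent A f ∧
    e * f = 0 ∧ f * e = 0 ∧
    Nonempty ((Submodule.span Aᵐᵒᵖ {e} : Submodule Aᵐᵒᵖ A) ≃ₗ[Aᵐᵒᵖ]
      (Submodule.span Aᵐᵒᵖ {f} : Submodule Aᵐᵒᵖ A))

end AlgebraSide

/-! ### Support algebras and faithful algebras of families of vertices -/

section Support

variable (A : Type u) [Ring A]

/-- The radical of a module: the intersection of its maximal submodules. -/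
def modRadical (R : Type u) [Ring R] (M : Type u) [AddCommGroup M] [Module R M] :
    Submodule R M :=
  sInf {N | IsCoatom N}

/-- The intersection `ann_A(Γ)` of the annihilators of all right `A`-modules whose
vertices belong to `Γ`, as a two-sided ideal of `A`. -/
def annTwoSidedIdeal (Γ : Set (ARVertex Aᵐᵒᵖ)) : TwoSidedIdeal A :=
  TwoSidedIdeal.mk'
    {a | ∀ x ∈ Γ, ∀ X : IndecModA Aᵐᵒᵖ, ARVertex.mk X = x →
      ∀ m : X.1.M, MulOpposite.op a • m = 0}
    (by intro x _ X _ m; simp)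
    (by
      intro a b ha hb x hx X hX m
      have : MulOpposite.op (a + b) • m = MulOpposite.op a • m + MulOpposite.op b • m := by
        rw [← add_smul]; rfl
      rw [this, ha x hx X hX m, hb x hx X hX m, add_zero])
    (by
      intro a ha x hx X hX m
      have : MulOpposite.op (-a) • m = -(MulOpposite.op a • m) := by
        rw [← neg_smul]; rfl
      rw [this, ha x hx X hX m, neg_zero])
    (by
      intro a b hb x hx X hX m
      have : MulOpposite.op (a * b) • m = MulOpposite.op b • (MulOpposite.op a • m) := by
        rw [← mul_smul]; rfl
      rw [this, hb x hx X hX _])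
    (by
      intro a b ha x hx X hX m
      have : MulOpposite.op (a * b) • m = MulOpposite.op b • (MulOpposite.op a • m) := by
        rw [← mul_smul]; rfl
      rw [this, ha x hx X hX m, smul_zero])

/-- The faithful algebra `B(Γ) = A / ann_A(Γ)` of a family `Γ` of vertices of `Γ_A`. -/
abbrev faithfulAlg (Γ : Set (ARVertex Aᵐᵒᵖ)) : Type u :=
  (annTwoSidedIdeal A Γ).ringCon.Quotient

/-- The canonical projection `A → B(Γ)`. -/
def faithfulProj (Γ : Set (ARVertex Aᵐᵒᵖ)) : A →+* faithfulAlg A Γ :=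
  RingCon.mk' (annTwoSidedIdeal A Γ).ringCon

/-- The trace ideal `t_A(Γ)`: the two-sided ideal of `A` generated by the images of all
homomorphisms of right `A`-modules from `Q` to `A`. -/
def traceIdeal (Q : Submodule Aᵐᵒᵖ A) : TwoSidedIdeal A :=
  TwoSidedIdeal.span (⋃ f : ↥Q →ₗ[Aᵐᵒᵖ] A, Set.range f)

/-- A decomposition `A = P_Γ ⊕ Q_Γ` of `A` in `mod A` such that the simple summands of
`P_Γ / rad P_Γ` are exactly the simple composition factors of the modules in `Γ`. -/
structure GammaDecomp (A : Type u) [Ring A] (Γ : Set (ARVertex Aᵐᵒᵖ)) where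
  P : Submodule Aᵐᵒᵖ A
  Q : Submodule Aᵐᵒᵖ A
  compl : IsCompl P Q
  top_factors : ∀ (S : Type u) [AddCommGroup S] [Module Aᵐᵒᵖ S], IsSimpleModule Aᵐᵒᵖ S →
    (IsCompFactorMod Aᵐᵒᵖ S (↥P ⧸ modRadical Aᵐᵒᵖ ↥P) ↔
      ∃ x ∈ Γ, ∃ X : IndecModA Aᵐᵒᵖ, ARVertex.mk X = x ∧ IsCompFactorMod Aᵐᵒᵖ S X.1.M)

end Support

/-- Restriction of scalars along a surjective ring homomorphism `π : A → B` identifies a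
vertex `y` of `Γ_B` with a vertex `x` of `Γ_A`: representatives have the same underlying
group, with the `A`-action obtained from the `B`-action through `π`. -/
def VertexRestrictsTo {A B : Type u} [Ring A] [Ring B] (π : A →+* B)
    (y : ARVertex Bᵐᵒᵖ) (x : ARVertex Aᵐᵒᵖ) : Prop :=
  ∃ (N : IndecModA Bᵐᵒᵖ) (X : IndecModA Aᵐᵒᵖ), ARVertex.mk N = y ∧ ARVertex.mk X = x ∧
    ∃ e : X.1.M ≃+ N.1.M, ∀ (a : A) (m : X.1.M),
      e (MulOpposite.op a • m) = MulOpposite.op (π a) • e m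

/-! ### `K`-module structures on Hom-groups, lengths, and Ext -/

section KLength

variable (K B : Type u) [CommRing K] [Ring B] [Algebra K B]
variable (X N : Type u) [AddCommGroup X] [Module B X] [AddCommGroup N] [Module B N]

/-- The action of `K` on `B`-linear maps, through `algebraMap K B`. -/
def homKSMul (k : K) (f : X →ₗ[B] N) : X →ₗ[B] N where
  toFun x := algebraMap K B k • f x
  map_add' x y := by show algebraMap K B k • f (x + y) = _; rw [map_add, smul_add]
  map_smul' b x := by
    simp only [map_smul, RingHom.id_apply, smul_smul]
    rw [Algebra.commutes]

/-- The `K`-module structure on the group of `B`-linear maps. -/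
def homKModule : Module K (X →ₗ[B] N) where
  smul := homKSMul K B X N
  one_smul f := LinearMap.ext fun x => by
    show algebraMap K B 1 • f x = f x
    rw [map_one, one_smul]
  mul_smul k l f := LinearMap.ext fun x => by
    show algebraMap K B (k * l) • f x = algebraMap K B k • algebraMap K B l • f x
    rw [map_mul, mul_smul]
  smul_zero k := LinearMap.ext fun x => by
    show algebraMap K B k • (0 : X →ₗ[B] N) x = 0
    simp
  smul_add k f g := LinearMap.ext fun x => by
    show algebraMap K B k • (f + g) x = algebraMap K B k • f x + algebraMap K B k • g x
    simp [smul_add]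
  add_smul k l f := LinearMap.ext fun x => by
    show algebraMap K B (k + l) • f x = algebraMap K B k • f x + algebraMap K B l • f x
    rw [map_add, add_smul]
  zero_smul f := LinearMap.ext fun x => by
    show algebraMap K B 0 • f x = 0
    rw [map_zero, zero_smul]

/-- The length `|Hom_B(X, N)|` of the group of `B`-linear maps `X → N` as a `K`-module. -/
noncomputable def homKLength : WithBot ℕ∞ :=
  letI : Module K (X →ₗ[B] N) := homKModule K B X N
  Order.krullDim (Submodule K (X →ₗ[B] N))

/-- The canonical surjection from the free module on (the underlying set of) `X` to `X`. -/
noncomputable def freeCover : (X →₀ B) →ₗ[B] X :=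
  Finsupp.linearCombination B id

/-- The length `|Ext¹_B(X, N)|` of `Ext¹` as a `K`-module, computed as the cokernel of
`Hom_B(F, N) → Hom_B(Ω X, N)` for the canonical free cover `F → X` with kernel `Ω X`. -/
noncomputable def ext1KLength : WithBot ℕ∞ :=
  letI : Module K (↥(LinearMap.ker (freeCover B X)) →ₗ[B] N) :=
    homKModule K B (↥(LinearMap.ker (freeCover B X))) N
  let D : Submodule K (↥(LinearMap.ker (freeCover B X)) →ₗ[B] N) :=
    { carrier := {f | ∃ g : (X →₀ B) →ₗ[B] N,
        f = g.comp (LinearMap.ker (freeCover B X)).subtype}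
      add_mem' := by
        rintro f₁ f₂ ⟨g₁, rfl⟩ ⟨g₂, rfl⟩
        exact ⟨g₁ + g₂, rfl⟩
      zero_mem' := ⟨0, rfl⟩
      smul_mem' := by
        rintro k f ⟨g, rfl⟩
        exact ⟨homKSMul K B _ N k g, rfl⟩ }
  Order.krullDim (Submodule K ((↥(LinearMap.ker (freeCover B X)) →ₗ[B] N) ⧸ D))

end KLength

/-- Vanishing of `Ext¹_B(X, N)`: every short exact sequence `0 → N → E → X → 0` splits. -/
def Ext1IsZero (B : Type u) [Ring B] (X : Type u) [AddCommGroup X] [Module B X]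
    (N : Type u) [AddCommGroup N] [Module B N] : Prop :=
  ∀ (E : Type u) [AddCommGroup E] [Module B E], ∀ (f : N →ₗ[B] E) (g : E →ₗ[B] X),
    Function.Injective f → Function.Surjective g → LinearMap.range f = LinearMap.ker g →
    ∃ s : X →ₗ[B] E, g.comp s = LinearMap.id

/-- The syzygy `Ω X`: the kernel of the canonical free cover of `X`. -/
noncomputable def syzygyRaw (B : Type u) [Ring B] (X : RawMod B) : RawMod B :=
  ⟨↥(LinearMap.ker (freeCover B X.M))⟩

/-- Iterated syzygies. -/
noncomputable def syzygyIter (B : Type u) [Ring B] : ℕ → RawMod B → RawMod B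
  | 0, X => X
  | n + 1, X => syzygyRaw B (syzygyIter B n X)

/-- Vanishing of `Ext^r_B(X, N)` for `r ≥ 1`, via `Ext^r(X, N) ≅ Ext¹(Ω^{r-1} X, N)`. -/
noncomputable def ExtIsZero (B : Type u) [Ring B] (X N : RawMod B) (r : ℕ) : Prop :=
  Ext1IsZero B (syzygyIter B (r - 1) X).M N.M

/-- `[X] = [M]` in the Grothendieck group `K₀`: the modules `X` and `M` have the same
composition factors including multiplicities. -/
def SameCompFactors {B : Type u} [Ring B] (X M : ModA B) : Prop :=
  ∃ (n : ℕ) (s : Fin (n + 1) → Submodule B X.M) (t : Fin (n + 1) → Submodule B M.M)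
    (σ : Equiv.Perm (Fin n)),
    s 0 = ⊥ ∧ s (Fin.last n) = ⊤ ∧ t 0 = ⊥ ∧ t (Fin.last n) = ⊤ ∧
    (∀ i : Fin n, s i.castSucc ≤ s i.succ) ∧ (∀ i : Fin n, t i.castSucc ≤ t i.succ) ∧
    ∀ i : Fin n,
      IsSimpleModule B (↥(s i.succ) ⧸ (s i.castSucc).comap (s i.succ).subtype) ∧
      Nonempty ((↥(s i.succ) ⧸ (s i.castSucc).comap (s i.succ).subtype) ≃ₗ[B]
        (↥(t (σ i).succ) ⧸ (t (σ i).castSucc).comap (t (σ i).succ).subtype))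

/-- A torsion class in `mod B`: a class of modules closed under factor modules and
extensions. -/
def IsTorsionClass (B : Type u) [Ring B] (T : Set (ModA B)) : Prop :=
  (∀ M ∈ T, ∀ (N : ModA B) (g : M.M →ₗ[B] N.M), Function.Surjective g → N ∈ T) ∧
  ∀ (X E M : ModA B) (f : X.M →ₗ[B] E.M) (g : E.M →ₗ[B] M.M),
    Function.Injective f → Function.Surjective g → LinearMap.range f = LinearMap.ker g →
    X ∈ T → M ∈ T → E ∈ T

/-- A torsion class is functorially finite iff it is of the form `Fac(M)`. -/
def IsFunctoriallyFinite (B : Type u) [Ring B] (T : Set (ModA B)) : Prop :=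
  ∃ M : ModA B,
    T = {N | ∃ (k : ℕ) (g : (Fin k → M.M) →ₗ[B] N.M), Function.Surjective g}

/-- A module `M` is `τ`-rigid if `Hom(M, τM) = 0`. -/
def IsTauRigid {B : Type u} [Ring B] (M : ModA B) : Prop :=
  ∀ N : ModA B, IsTauOf N M → ∀ f : M.M →ₗ[B] N.M, f = 0

/-- A module `M` is rigid if `Ext¹(M, M) = 0`. -/
def IsRigid {B : Type u} [Ring B] (M : ModA B) : Prop := Ext1IsZero B M.M M.M

/-- `α(M) ≤ 2`: the middle term of any almost split sequence ending at `M` has at most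
two indecomposable direct summands. -/
def AlphaLe2 {B : Type u} [Ring B] (M : ModA B) : Prop :=
  ∀ s : AlmostSplitSeq B, s.r.Iso M →
    ∀ (k : ℕ) (N : Fin k → Submodule B s.m.M),
      (∀ i, IsIndecMod B ↥(N i)) → iSupIndep N → (⨆ i, N i) = ⊤ → k ≤ 2


namespace CF

variable {R : Type u} [Ring R]

instance (X : ModA R) : IsNoetherian R X.M :=
  (isFiniteLength_iff_isNoetherian_isArtinian.1 X.finLen).1

instance (X : ModA R) : IsArtinian R X.M :=
  (isFiniteLength_iff_isNoetherian_isArtinian.1 X.finLen).2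

theorem finLen_of_inj {X : ModA R} {N : Type u} [AddCommGroup N] [Module R N]
    (f : N →ₗ[R] X.M) (hf : Function.Injective f) : IsFiniteLength R N :=
  X.finLen.of_injective hf

theorem finLen_of_surj {X : ModA R} {N : Type u} [AddCommGroup N] [Module R N]
    (f : X.M →ₗ[R] N) (hf : Function.Surjective f) : IsFiniteLength R N :=
  X.finLen.of_surjective hf

/-- A submodule as an object. -/
abbrev subObj (X : ModA R) (N : Submodule R X.M) : ModA R :=
  ⟨N, finLen_of_inj N.subtype N.injective_subtype⟩

/-- A quotient as an object. -/
abbrev quotObj (X : ModA R) (N : Submodule R X.M) : ModA R :=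
  ⟨X.M ⧸ N, finLen_of_surj N.mkQ N.mkQ_surjective⟩

theorem iso_refl (X : ModA R) : X.Iso X := ⟨LinearEquiv.refl R _⟩

theorem iso_symm {X Y : ModA R} (h : X.Iso Y) : Y.Iso X := ⟨h.some.symm⟩

theorem iso_trans {X Y Z : ModA R} (h : X.Iso Y) (h' : Y.Iso Z) : X.Iso Z :=
  ⟨h.some.trans h'.some⟩

theorem iso_of_bij {X Y : ModA R} (f : X.M →ₗ[R] Y.M) (hf : Function.Bijective f) : X.Iso Y :=
  ⟨LinearEquiv.ofBijective f hf⟩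

theorem indec_of_iso {X Y : ModA R} (h : X.Iso Y) (hX : X.IsIndec) : Y.IsIndec := by
  obtain ⟨e⟩ := h
  obtain ⟨h1, h2⟩ := hX
  refine ⟨e.symm.toEquiv.nontrivial, fun f hf => ?_⟩
  have hff : ∀ y, f (f y) = f y := fun y => by
    have := LinearMap.congr_fun hf y
    simpa using this
  rcases h2 (e.symm.toLinearMap ∘ₗ f ∘ₗ e.toLinearMap) (by ext x; simp [hff]) with h | h
  · left; ext y
    have := LinearMap.congr_fun h (e.symm y)
    simpa using this
  · right; ext y
    have := LinearMap.congr_fun h (e.symm y)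
    simp at this
    simpa using this

theorem exists_inv {X Y : ModA R} (f : X.M →ₗ[R] Y.M) (hf : Function.Bijective f) :
    ∃ g : Y.M →ₗ[R] X.M, g.comp f = LinearMap.id ∧ f.comp g = LinearMap.id := by
  let e := LinearEquiv.ofBijective f hf
  refine ⟨e.symm.toLinearMap, ?_, ?_⟩
  · ext x; exact e.symm_apply_apply x
  · ext x; exact e.apply_symm_apply x

theorem bij_of_inv {M N : Type u} [AddCommGroup M] [Module R M] [AddCommGroup N] [Module R N]
    {f : M →ₗ[R] N} {g : N →ₗ[R] M}
    (h1 : g.comp f = LinearMap.id) (h2 : f.comp g = LinearMap.id) : Function.Bijective f :=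
  ⟨Function.LeftInverse.injective (g := g) fun x => LinearMap.congr_fun h1 x,
   Function.RightInverse.surjective (g := g) fun x => LinearMap.congr_fun h2 x⟩

theorem fitting {X : ModA R} (hX : X.IsIndec) (f : Module.End R X.M) :
    Function.Bijective f ∨ IsNilpotent f := by
  obtain ⟨n, hn⟩ := Filter.eventually_atTop.1 (LinearMap.eventually_isCompl_ker_pow_range_pow f)
  have h := hn (n + 1) (by omega)
  set p : Module.End R X.M := Submodule.projection _ _ h with hp
  have hidem : p * p = p := by
    have := Submodule.isIdempotentElem_projection h
    exact this
  rcases hX.2 p hidem with h0 | h1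
  · left
    have hk : LinearMap.ker (f ^ (n + 1)) = ⊥ := by
      rw [eq_bot_iff]; intro x hx
      have : p x = x := Submodule.projection_apply_left h ⟨x, hx⟩
      rw [h0] at this
      simpa using this.symm
    have hinj : Function.Injective f := by
      have := LinearMap.ker_eq_bot.1 hk
      rw [pow_succ] at this
      exact Function.Injective.of_comp (f := ⇑(f ^ n)) this
    exact IsArtinian.bijective_of_injective_endomorphism f hinj
  · right
    refine ⟨n + 1, ?_⟩
    ext x
    have : p x ∈ LinearMap.ker (f ^ (n + 1)) := Submodule.projection_apply_mem h x
    rw [h1] at this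
    simpa using this

theorem bij_add_end {X : ModA R} (hX : X.IsIndec) {a b : Module.End R X.M} (h : a + b = 1) :
    Function.Bijective a ∨ Function.Bijective b := by
  rcases fitting hX a with h1 | h1
  · exact Or.inl h1
  · right
    have : IsUnit b := by
      have : b = 1 - a := by rw [← h]; abel
      rw [this]; exact h1.isUnit_one_sub
    exact (Module.End.isUnit_iff b).1 this

theorem bij_add {X Y : ModA R} (hX : X.IsIndec) {f g : X.M →ₗ[R] Y.M}
    (h : Function.Bijective (f + g)) : Function.Bijective f ∨ Function.Bijective g := by
  obtain ⟨e, he1, he2⟩ := exists_inv _ h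
  have heb : Function.Bijective e := bij_of_inv he2 he1
  have key := bij_add_end hX (a := e.comp f) (b := e.comp g) (by
    rw [← LinearMap.comp_add, he1]; rfl)
  rcases key with h1 | h1
  · left
    rw [LinearMap.coe_comp] at h1
    exact (Function.Bijective.of_comp_iff' heb f).1 h1
  · right
    rw [LinearMap.coe_comp] at h1
    exact (Function.Bijective.of_comp_iff' heb g).1 h1

theorem zero_not_bij {X Y : ModA R} (hX : X.IsIndec) :
    ¬ Function.Bijective (0 : X.M →ₗ[R] Y.M) := by
  intro h
  obtain ⟨x, y, hxy⟩ := hX.1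
  exact hxy (h.1 rfl)

theorem bij_sum {X Y : ModA R} (hX : X.IsIndec) {ι : Type*} (s : Finset ι)
    (f : ι → X.M →ₗ[R] Y.M) (h : Function.Bijective ⇑(∑ j ∈ s, f j)) :
    ∃ j ∈ s, Function.Bijective (f j) := by
  classical
  induction s using Finset.induction_on with
  | empty => exact absurd h (by simpa using zero_not_bij hX)
  | insert a s ha ih =>
    rw [Finset.sum_insert ha] at h
    rcases bij_add hX h with h | h
    · exact ⟨a, Finset.mem_insert_self _ _, h⟩
    · obtain ⟨j, hj, hb⟩ := ih h
      exact ⟨j, Finset.mem_insert_of_mem hj, hb⟩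

theorem ne_zero_of_bij {X Y : ModA R} (hX : X.IsIndec) {f : X.M →ₗ[R] Y.M}
    (h : Function.Bijective f) : f ≠ 0 := by
  rintro rfl; exact zero_not_bij hX h

theorem id_ne_zero {X : ModA R} (hX : X.IsIndec) : (LinearMap.id : X.M →ₗ[R] X.M) ≠ 0 :=
  ne_zero_of_bij hX Function.bijective_id

theorem bij_of_splitMono {X Y : ModA R} (hX : X.IsIndec) (hY : Y.IsIndec)
    {f : X.M →ₗ[R] Y.M} {r : Y.M →ₗ[R] X.M} (h : r.comp f = LinearMap.id) :
    Function.Bijective f ∧ Function.Bijective r := by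
  have hr : ∀ x, r (f x) = x := fun x => LinearMap.congr_fun h x
  rcases hY.2 (f.comp r) (by ext y; simp [hr]) with h0 | h1
  · exfalso
    apply id_ne_zero hX
    ext x
    have := LinearMap.congr_fun h0 (f x)
    simp only [LinearMap.comp_apply, hr] at this
    have h2 : r (f x) = 0 := by rw [this]; simp
    rw [hr] at h2
    simpa using h2
  · have h2 : f.comp r = LinearMap.id := h1
    exact ⟨bij_of_inv h h2, bij_of_inv h2 h⟩

theorem bij_of_comp_bij {X Y Z : ModA R} (hX : X.IsIndec) (hY : Y.IsIndec)
    {f : X.M →ₗ[R] Y.M} {g : Y.M →ₗ[R] Z.M} (h : Function.Bijective (g.comp f)) :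
    Function.Bijective f ∧ Function.Bijective g := by
  obtain ⟨e, he1, he2⟩ := exists_inv _ h
  have h1 := bij_of_splitMono hX hY (f := f) (r := e.comp g) (by rw [LinearMap.comp_assoc, he1])
  refine ⟨h1.1, ?_⟩
  rw [LinearMap.coe_comp] at h
  exact (Function.Bijective.of_comp_iff g h1.1).1 h

theorem splitMono_of_bij {X Y : ModA R} {f : X.M →ₗ[R] Y.M} (h : Function.Bijective f) :
    SplitMonoMap f := by
  obtain ⟨g, h1, _⟩ := exists_inv f h
  exact ⟨g, h1⟩

theorem splitEpi_of_bij {X Y : ModA R} {f : X.M →ₗ[R] Y.M} (h : Function.Bijective f) :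
    SplitEpiMap f := by
  obtain ⟨g, _, h1⟩ := exists_inv f h
  exact ⟨g, h1⟩

theorem splitMono_iff {X Y : ModA R} (hX : X.IsIndec) (hY : Y.IsIndec) {f : X.M →ₗ[R] Y.M} :
    SplitMonoMap f ↔ Function.Bijective f :=
  ⟨fun ⟨_, hr⟩ => (bij_of_splitMono hX hY hr).1, splitMono_of_bij⟩

theorem splitEpi_iff {X Y : ModA R} (hX : X.IsIndec) (hY : Y.IsIndec) {f : X.M →ₗ[R] Y.M} :
    SplitEpiMap f ↔ Function.Bijective f :=
  ⟨fun ⟨_, hr⟩ => (bij_of_splitMono hY hX hr).2, splitEpi_of_bij⟩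

theorem length_lt_top (X : ModA R) : Module.length R X.M ≠ ⊤ :=
  Module.length_ne_top_iff.2 X.finLen

/-- natural number length -/
noncomputable def len (X : ModA R) : ℕ := (Module.length R X.M).toNat

theorem coe_len (X : ModA R) : (len X : ℕ∞) = Module.length R X.M :=
  ENat.natCast_toNat (length_lt_top X)

theorem len_sub_lt {X : ModA R} (N : Submodule R X.M) (h : N ≠ ⊤) : len (subObj X N) < len X := by
  have := Submodule.length_lt (R := R) (M := X.M) h
  have h2 := coe_len (subObj X N)
  have h3 := coe_len X
  change _ = Module.length R N at h2
  rw [← h2, ← h3] at this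
  exact_mod_cast this

theorem len_quot_lt {X : ModA R} (N : Submodule R X.M) (h : N ≠ ⊥) : len (quotObj X N) < len X := by
  have := Submodule.length_quotient_lt (R := R) (M := X.M) N h
  have h2 := coe_len (quotObj X N)
  have h3 := coe_len X
  change _ = Module.length R (X.M ⧸ N) at h2
  rw [← h2, ← h3] at this
  exact_mod_cast this

theorem len_le_of_inj {X Y : ModA R} (f : X.M →ₗ[R] Y.M) (hf : Function.Injective f) :
    len X ≤ len Y := by
  have := Module.length_le_of_injective f hf
  rw [← coe_len, ← coe_len] at this
  exact_mod_cast this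

theorem len_le_of_surj {X Y : ModA R} (f : X.M →ₗ[R] Y.M) (hf : Function.Surjective f) :
    len Y ≤ len X := by
  have := Module.length_le_of_surjective f hf
  rw [← coe_len, ← coe_len] at this
  exact_mod_cast this

theorem len_iso {X Y : ModA R} (h : X.Iso Y) : len X = len Y :=
  le_antisymm (len_le_of_inj h.some.toLinearMap h.some.injective)
    (len_le_of_surj h.some.toLinearMap h.some.surjective)

/-- An indecomposable direct summand. -/
structure Summand (X : ModA R) where
  Z : ModA R
  indec : Z.IsIndec
  i : Z.M →ₗ[R] X.M
  p : X.M →ₗ[R] Z.M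
  pi : p.comp i = LinearMap.id

/-- The idempotent of a summand. -/
def Summand.e {X : ModA R} (s : Summand X) : X.M →ₗ[R] X.M := s.i.comp s.p

/-- Summand of a summand. -/
def Summand.map {X Y : ModA R} (a : X.M →ₗ[R] Y.M) (a' : Y.M →ₗ[R] X.M)
    (h : a.comp a' = LinearMap.id) (s : Summand Y) : Summand X where
  Z := s.Z
  indec := s.indec
  i := a'.comp s.i
  p := s.p.comp a
  pi := by
    rw [LinearMap.comp_assoc, ← LinearMap.comp_assoc s.i, h, LinearMap.id_comp, s.pi]

/-- Decomposition of an object into indecomposables. -/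
structure Decomp (X : ModA R) where
  ι : Type
  [fin : Fintype ι]
  s : ι → Summand X
  sum : ∑ j, (s j).e = LinearMap.id

attribute [instance] Decomp.fin

/-- objects -/
abbrev Decomp.Z {X : ModA R} (d : Decomp X) (j : d.ι) : ModA R := (d.s j).Z
/-- injections -/
abbrev Decomp.i {X : ModA R} (d : Decomp X) (j : d.ι) : (d.Z j).M →ₗ[R] X.M := (d.s j).i
/-- projections -/
abbrev Decomp.p {X : ModA R} (d : Decomp X) (j : d.ι) : X.M →ₗ[R] (d.Z j).M := (d.s j).p

theorem Decomp.indec {X : ModA R} (d : Decomp X) (j : d.ι) : (d.Z j).IsIndec := (d.s j).indec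

theorem Decomp.pi {X : ModA R} (d : Decomp X) (j : d.ι) :
    (d.p j).comp (d.i j) = LinearMap.id := (d.s j).pi

theorem Decomp.eq_sum {X : ModA R} (d : Decomp X) (x : X.M) : x = ∑ j, d.i j (d.p j x) := by
  have := LinearMap.congr_fun d.sum x
  simpa [Summand.e] using this.symm

theorem Decomp.sum' {X : ModA R} (d : Decomp X) : ∑ j, (d.i j).comp (d.p j) = LinearMap.id :=
  d.sum

theorem Decomp.comp_sum {X Y : ModA R} (d : Decomp X) (f : X.M →ₗ[R] Y.M) :
    f = ∑ j, (f.comp (d.i j)).comp (d.p j) := by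
  ext x
  conv_lhs => rw [d.eq_sum x]
  simp

theorem Decomp.sum_comp {X Y : ModA R} (d : Decomp X) (f : Y.M →ₗ[R] X.M) :
    f = ∑ j, (d.i j).comp ((d.p j).comp f) := by
  ext x
  conv_lhs => rw [d.eq_sum (f x)]
  simp

theorem Decomp.exists_comp_ne {X Y : ModA R} (d : Decomp X) {f : X.M →ₗ[R] Y.M} (hf : f ≠ 0) :
    ∃ j, f.comp (d.i j) ≠ 0 := by
  by_contra h
  push Not at h
  apply hf
  rw [d.comp_sum f]
  simp [h]

theorem Decomp.exists_ne_comp {X Y : ModA R} (d : Decomp X) {f : Y.M →ₗ[R] X.M} (hf : f ≠ 0) :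
    ∃ j, (d.p j).comp f ≠ 0 := by
  by_contra h
  push Not at h
  apply hf
  rw [d.sum_comp f]
  simp [h]

theorem exists_decomp (X : ModA R) : Nonempty (Decomp X) := by
  induction hn : len X using Nat.strong_induction_on generalizing X with
  | _ n ih =>
  by_cases hs : Subsingleton X.M
  · exact ⟨⟨Empty, fun j => j.elim, by ext x; exact Subsingleton.elim _ _⟩⟩
  by_cases hX : X.IsIndec
  · exact ⟨⟨Unit, fun _ => ⟨X, hX, LinearMap.id, LinearMap.id, rfl⟩, by simp [Summand.e]⟩⟩
  have hnt : Nontrivial X.M := not_subsingleton_iff_nontrivial.1 hs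
  obtain ⟨f, hf, hf0, hf1⟩ : ∃ f : Module.End R X.M, f * f = f ∧ f ≠ 0 ∧ f ≠ 1 := by
    by_contra hcon
    push Not at hcon
    exact hX ⟨hnt, fun f hf => or_iff_not_imp_left.2 fun h => hcon f hf h⟩
  have hff : ∀ x, f (f x) = f x := fun x => LinearMap.congr_fun hf x
  have hr : LinearMap.range f ≠ ⊤ := by
    intro h
    apply hf1
    ext x
    obtain ⟨y, rfl⟩ := LinearMap.range_eq_top.1 h x
    simp [hff]
  have hk : LinearMap.ker f ≠ ⊤ := fun h => hf0 (LinearMap.ker_eq_top.1 h)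
  obtain ⟨d1⟩ := ih _ (hn ▸ len_sub_lt _ hr) (subObj X (LinearMap.range f)) rfl
  obtain ⟨d2⟩ := ih _ (hn ▸ len_sub_lt _ hk) (subObj X (LinearMap.ker f)) rfl
  let a : X.M →ₗ[R] (subObj X (LinearMap.range f)).M := f.rangeRestrict
  let b : X.M →ₗ[R] (subObj X (LinearMap.ker f)).M :=
    LinearMap.codRestrict (LinearMap.ker f) (LinearMap.id - f) (by intro x; simp [hff])
  let a' : (subObj X (LinearMap.range f)).M →ₗ[R] X.M := (LinearMap.range f).subtype
  let b' : (subObj X (LinearMap.ker f)).M →ₗ[R] X.M := (LinearMap.ker f).subtype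
  have haa : a.comp a' = LinearMap.id := by
    ext ⟨x, y, rfl⟩
    exact hff y
  have hbb : b.comp b' = LinearMap.id := by
    ext ⟨x, hx⟩
    have : f x = 0 := hx
    change x - f x = x
    rw [this, sub_zero]
  have hab : ∀ x, a' (a x) + b' (b x) = x := by
    intro x
    change f x + (x - f x) = x
    abel
  refine ⟨⟨d1.ι ⊕ d2.ι, Sum.elim (fun j => (d1.s j).map a a' haa)
    (fun j => (d2.s j).map b b' hbb), ?_⟩⟩
  rw [Fintype.sum_sum_type]
  simp only [Sum.elim_inl, Sum.elim_inr]
  ext x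
  have h1 : ∀ j, ((d1.s j).map a a' haa).e x = a' (d1.i j (d1.p j (a x))) := fun j => rfl
  have h2 : ∀ j, ((d2.s j).map b b' hbb).e x = b' (d2.i j (d2.p j (b x))) := fun j => rfl
  simp only [LinearMap.add_apply, LinearMap.sum_apply, h1, h2]
  rw [← map_sum, ← map_sum, ← d1.eq_sum, ← d2.eq_sum, hab]
  rfl

/-- chosen decomposition -/
noncomputable def dec (X : ModA R) : Decomp X := (exists_decomp X).some

/-! Radical -/

theorem inRad_comp_right {X Y Z : ModA R} {f : Y.M →ₗ[R] Z.M} (hf : InRad f)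
    (g : X.M →ₗ[R] Y.M) : InRad (f.comp g) := fun W hW a b => by
  have := hf W hW (g.comp a) b
  exact this

theorem inRad_comp_left {X Y Z : ModA R} {f : X.M →ₗ[R] Y.M} (hf : InRad f)
    (g : Y.M →ₗ[R] Z.M) : InRad (g.comp f) := fun W hW a b => by
  have := hf W hW a (b.comp g)
  exact this

theorem inRad_add {X Y : ModA R} {f g : X.M →ₗ[R] Y.M} (hf : InRad f) (hg : InRad g) :
    InRad (f + g) := fun W hW a b h => by
  have : b.comp ((f + g).comp a) = b.comp (f.comp a) + b.comp (g.comp a) := by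
    rw [LinearMap.add_comp, LinearMap.comp_add]
  rw [this] at h
  rcases bij_add hW h with h | h
  · exact hf W hW a b h
  · exact hg W hW a b h

theorem inRad_zero {X Y : ModA R} : InRad (0 : X.M →ₗ[R] Y.M) := fun W hW a b h => by
  simp only [LinearMap.zero_comp, LinearMap.comp_zero] at h
  exact zero_not_bij hW h

theorem inRad_neg {X Y : ModA R} {f : X.M →ₗ[R] Y.M} (hf : InRad f) : InRad (-f) := by
  have := inRad_comp_left hf (-LinearMap.id : Y.M →ₗ[R] Y.M)
  simpa [LinearMap.neg_comp] using this

theorem inRad_not_bij {X Y : ModA R} (hX : X.IsIndec) {f : X.M →ₗ[R] Y.M} (hf : InRad f) :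
    ¬ Function.Bijective f := fun h => by
  obtain ⟨g, h1, h2⟩ := exists_inv f h
  apply hf X hX LinearMap.id g
  rw [LinearMap.comp_id, h1]
  exact Function.bijective_id

theorem inRad_of_not_splitMono {X Y : ModA R} (hX : X.IsIndec) {f : X.M →ₗ[R] Y.M}
    (hf : ¬ SplitMonoMap f) : InRad f := fun W hW a b h => by
  have ha := (bij_of_comp_bij hW hX (f := a) (g := b.comp f) h).2
  obtain ⟨g, h1, h2⟩ := exists_inv _ ha
  exact hf ⟨g.comp b, by rw [LinearMap.comp_assoc, h1]⟩

theorem inRad_of_not_bij {X Y : ModA R} (hX : X.IsIndec) (hY : Y.IsIndec) {f : X.M →ₗ[R] Y.M}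
    (hf : ¬ Function.Bijective f) : InRad f :=
  inRad_of_not_splitMono hX (fun h => hf ((splitMono_iff hX hY).1 h))

theorem not_splitMono_of_inRad {X Y : ModA R} (hX : X.IsIndec) {f : X.M →ₗ[R] Y.M}
    (hf : InRad f) : ¬ SplitMonoMap f := by
  rintro ⟨r, hr⟩
  apply hf X hX LinearMap.id r
  rw [LinearMap.comp_id, hr]
  exact Function.bijective_id

theorem radPow_comp_left {n : ℕ} {X Y Z : ModA R} {f : X.M →ₗ[R] Y.M} (hf : f ∈ radPow R n X Y)
    (g : Y.M →ₗ[R] Z.M) : g.comp f ∈ radPow R n X Z := by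
  induction n generalizing X Y Z with
  | zero => exact AddSubgroup.mem_top _
  | succ n ih =>
    unfold radPow at hf ⊢
    induction hf using AddSubgroup.closure_induction with
    | mem f hf =>
      obtain ⟨W, a, b, ha, hb, rfl⟩ := hf
      exact AddSubgroup.subset_closure ⟨W, a, g.comp b, ha, ih hb g, rfl⟩
    | zero => simp [zero_mem]
    | add f f' _ _ h1 h2 => rw [LinearMap.comp_add]; exact add_mem h1 h2
    | neg f _ h1 => rw [LinearMap.comp_neg]; exact neg_mem h1

theorem radPow_comp_inRad {n : ℕ} {X Y Z : ModA R} {f : Y.M →ₗ[R] Z.M} (hf : f ∈ radPow R n Y Z)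
    {g : X.M →ₗ[R] Y.M} (hg : InRad g) : f.comp g ∈ radPow R (n + 1) X Z := by
  unfold radPow
  exact AddSubgroup.subset_closure ⟨Y, g, f, hg, hf, rfl⟩

theorem radPow_comp_right {n : ℕ} {X Y Z : ModA R} {f : Y.M →ₗ[R] Z.M} (hf : f ∈ radPow R n Y Z)
    (g : X.M →ₗ[R] Y.M) : f.comp g ∈ radPow R n X Z := by
  cases n with
  | zero => exact AddSubgroup.mem_top _
  | succ n =>
    unfold radPow at hf
    induction hf using AddSubgroup.closure_induction with
    | mem f hf =>
      obtain ⟨W, a, b, ha, hb, rfl⟩ := hf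
      rw [LinearMap.comp_assoc]
      exact radPow_comp_inRad hb (inRad_comp_right ha g)
    | zero => simp [zero_mem]
    | add f f' _ _ h1 h2 => rw [LinearMap.add_comp]; exact add_mem h1 h2
    | neg f _ h1 => rw [LinearMap.neg_comp]; exact neg_mem h1

theorem radPow_succ_le (n : ℕ) (X Y : ModA R) : radPow R (n + 1) X Y ≤ radPow R n X Y := by
  induction n generalizing X Y with
  | zero => exact le_top
  | succ n ih =>
    conv_lhs => unfold radPow
    rw [AddSubgroup.closure_le]
    rintro f ⟨W, a, b, ha, hb, rfl⟩
    exact radPow_comp_inRad (ih _ _ hb) ha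

theorem radPow_anti {m n : ℕ} (h : m ≤ n) (X Y : ModA R) : radPow R n X Y ≤ radPow R m X Y := by
  induction h with
  | refl => exact le_rfl
  | step _ ih => exact (radPow_succ_le _ _ _).trans ih

theorem inRad_of_radPow_one {X Y : ModA R} {f : X.M →ₗ[R] Y.M} (hf : f ∈ radPow R 1 X Y) :
    InRad f := by
  unfold radPow at hf
  induction hf using AddSubgroup.closure_induction with
  | mem f hf =>
    obtain ⟨W, a, b, ha, hb, rfl⟩ := hf
    exact inRad_comp_left ha b
  | zero => exact inRad_zero
  | add f f' _ _ h1 h2 => exact inRad_add h1 h2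
  | neg f _ h1 => exact inRad_neg h1

theorem inRadInf_not_bij {X Y : ModA R} (hX : X.IsIndec) {f : X.M →ₗ[R] Y.M} (hf : InRadInf f) :
    ¬ Function.Bijective f := inRad_not_bij hX (inRad_of_radPow_one (hf 1))

theorem inRadInf_comp_left {X Y Z : ModA R} {f : X.M →ₗ[R] Y.M} (hf : InRadInf f)
    (g : Y.M →ₗ[R] Z.M) : InRadInf (g.comp f) := fun n => radPow_comp_left (hf n) g

theorem inRadInf_comp_right {X Y Z : ModA R} {f : Y.M →ₗ[R] Z.M} (hf : InRadInf f)
    (g : X.M →ₗ[R] Y.M) : InRadInf (f.comp g) := fun n => radPow_comp_right (hf n) g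

/-! Finiteness up to isomorphism -/

/-- Finitely many isoclasses of indecomposables with `P`. -/
def FinUp (P : ModA R → Prop) : Prop :=
  ∃ l : List (ModA R), ∀ X, X.IsIndec → P X → ∃ Y ∈ l, X.Iso Y

theorem FinUp.mono {P Q : ModA R → Prop} (h : FinUp Q) (hPQ : ∀ X, X.IsIndec → P X → Q X) :
    FinUp P := by
  obtain ⟨l, hl⟩ := h
  exact ⟨l, fun X hX hP => hl X hX (hPQ X hX hP)⟩

theorem FinUp.good {P : ModA R → Prop} (h : FinUp P) :
    ∃ l : List (ModA R), (∀ Y ∈ l, Y.IsIndec ∧ P Y) ∧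
      ∀ X, X.IsIndec → P X → ∃ Y ∈ l, X.Iso Y := by
  classical
  obtain ⟨l, hl⟩ := h
  have : ∀ Y : ModA R, ∃ Y' : ModA R, (∃ X : ModA R, X.IsIndec ∧ P X ∧ X.Iso Y) →
      (Y'.IsIndec ∧ P Y' ∧ Y'.Iso Y) := by
    intro Y
    by_cases h : ∃ X : ModA R, X.IsIndec ∧ P X ∧ X.Iso Y
    · exact ⟨h.choose, fun _ => h.choose_spec⟩
    · exact ⟨Y, fun h' => absurd h' h⟩
  choose F hF using this
  refine ⟨(l.filter (fun Y => ∃ X : ModA R, X.IsIndec ∧ P X ∧ X.Iso Y)).map F, ?_, ?_⟩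
  · intro Y hY
    simp only [List.mem_map, List.mem_filter, decide_eq_true_eq] at hY
    obtain ⟨Z, ⟨_, hZ⟩, rfl⟩ := hY
    exact ⟨(hF Z hZ).1, (hF Z hZ).2.1⟩
  · intro X hX hP
    obtain ⟨Y, hY, hXY⟩ := hl X hX hP
    refine ⟨F Y, ?_, ?_⟩
    · simp only [List.mem_map, List.mem_filter, decide_eq_true_eq]
      exact ⟨Y, ⟨hY, X, hX, hP, hXY⟩, rfl⟩
    · exact iso_trans hXY (iso_symm (hF Y ⟨X, hX, hP, hXY⟩).2.2)

theorem FinUp.bindList {Q : ModA R → ModA R → Prop} (l : List (ModA R))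
    (h : ∀ Y ∈ l, FinUp (Q Y)) : FinUp (fun X => ∃ Y ∈ l, Q Y X) := by
  classical
  induction l with
  | nil => exact ⟨[], by simp⟩
  | cons a l ih =>
    obtain ⟨l1, h1⟩ := h a (by simp)
    obtain ⟨l2, h2⟩ := ih (fun Y hY => h Y (by simp [hY]))
    refine ⟨l1 ++ l2, ?_⟩
    rintro X hX ⟨Y, hY, hQ⟩
    rcases List.mem_cons.1 hY with rfl | hY
    · obtain ⟨Z, hZ, hZ'⟩ := h1 X hX hQ
      exact ⟨Z, by simp [hZ], hZ'⟩
    · obtain ⟨Z, hZ, hZ'⟩ := h2 X hX ⟨Y, hY, hQ⟩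
      exact ⟨Z, by simp [hZ], hZ'⟩

theorem FinUp.bind {P : ModA R → Prop} {Q : ModA R → ModA R → Prop} (hP : FinUp P)
    (hQ : ∀ Y, Y.IsIndec → P Y → FinUp (Q Y))
    (hinv : ∀ X Y Z : ModA R, X.Iso Y → Q X Z → Q Y Z) :
    FinUp (fun X => ∃ Y, Y.IsIndec ∧ P Y ∧ Q Y X) := by
  obtain ⟨l, h1, h2⟩ := hP.good
  refine (FinUp.bindList l (fun Y hY => hQ Y (h1 Y hY).1 (h1 Y hY).2)).mono ?_
  rintro X hX ⟨Y, hY, hPY, hQY⟩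
  obtain ⟨Z, hZ, hYZ⟩ := h2 Y hY hPY
  exact ⟨Z, hZ, hinv _ _ _ hYZ hQY⟩

theorem FinUp.or {P Q : ModA R → Prop} (hP : FinUp P) (hQ : FinUp Q) :
    FinUp (fun X => P X ∨ Q X) := by
  obtain ⟨l, h1⟩ := hP
  obtain ⟨l', h2⟩ := hQ
  refine ⟨l ++ l', ?_⟩
  rintro X hX (h | h)
  · obtain ⟨Z, hZ, hZ'⟩ := h1 X hX h
    exact ⟨Z, by simp [hZ], hZ'⟩
  · obtain ⟨Z, hZ, hZ'⟩ := h2 X hX h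
    exact ⟨Z, by simp [hZ], hZ'⟩

theorem finUp_iso (Y : ModA R) : FinUp (fun X => X.Iso Y) := ⟨[Y], fun X _ h => ⟨Y, by simp, h⟩⟩

theorem finUp_fintype {ι : Type*} [Fintype ι] {Q : ι → ModA R → Prop} (h : ∀ j, FinUp (Q j)) :
    FinUp (fun X => ∃ j, Q j X) := by
  classical
  choose l hl using h
  refine ⟨(Finset.univ : Finset ι).toList.flatMap l, ?_⟩
  rintro X hX ⟨j, hj⟩
  obtain ⟨Y, hY, hY'⟩ := hl j X hX hj
  exact ⟨Y, by simp only [List.mem_flatMap, Finset.mem_toList, Finset.mem_univ, true_and]; exact ⟨j, hY⟩, hY'⟩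

theorem FinUp.pigeon {P : ModA R → Prop} (hP : FinUp P) (x : ℕ → ModA R)
    (hx : ∀ n, (x n).IsIndec) (hPx : ∀ n, P (x n)) : ∃ i j, i < j ∧ (x i).Iso (x j) := by
  obtain ⟨l, hl⟩ := hP
  have : ∀ n, ∃ k : Fin l.length, (x n).Iso (l.get k) := fun n => by
    obtain ⟨Y, hY, h⟩ := hl _ (hx n) (hPx n)
    obtain ⟨k, rfl⟩ := List.get_of_mem hY
    exact ⟨k, h⟩
  choose F hF using this
  obtain ⟨i, j, hij, he⟩ := Finite.exists_ne_map_eq_of_infinite F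
  rcases lt_or_gt_of_ne hij with h | h
  · exact ⟨i, j, h, iso_trans (hF i) (he ▸ iso_symm (hF j))⟩
  · exact ⟨j, i, h, iso_trans (hF j) (he ▸ iso_symm (hF i))⟩

theorem finUp_iff_finite (P : ModA R → Prop) :
    FinUp P ↔ {x : ARVertex R | ∃ X : IndecModA R, ARVertex.mk X = x ∧ P X.1}.Finite := by
  constructor
  · intro h
    obtain ⟨l, hl1, hl2⟩ := h.good
    refine Set.Finite.subset (Set.finite_range (fun k : Fin l.length =>
      ARVertex.mk ⟨l.get k, (hl1 _ (List.get_mem l k)).1⟩)) ?_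
    rintro x ⟨X, rfl, hX⟩
    obtain ⟨Y, hY, hXY⟩ := hl2 X.1 X.2 hX
    obtain ⟨k, rfl⟩ := List.get_of_mem hY
    exact ⟨k, Quotient.sound (iso_symm hXY)⟩
  · intro h
    refine ⟨h.toFinset.toList.map (fun x => (Quotient.out x).1), ?_⟩
    intro X hX hP
    refine ⟨(Quotient.out (ARVertex.mk ⟨X, hX⟩)).1, ?_, ?_⟩
    · simp only [List.mem_map, Finset.mem_toList, Set.Finite.mem_toFinset]
      exact ⟨_, ⟨⟨X, hX⟩, rfl, hP⟩, rfl⟩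
    · have : (isoSetoid R).r (Quotient.out (ARVertex.mk ⟨X, hX⟩)) ⟨X, hX⟩ := by
        apply Quotient.exact
        exact Quotient.out_eq _
      exact iso_symm this

end CF


namespace CF

variable {R : Type u} [Ring R]

theorem factor_surj {X Y Z : Type u} [AddCommGroup X] [Module R X] [AddCommGroup Y] [Module R Y]
    [AddCommGroup Z] [Module R Z] (g : X →ₗ[R] Y) (hg : Function.Surjective g) (h : X →ₗ[R] Z)
    (hk : LinearMap.ker g ≤ LinearMap.ker h) : ∃ s : Y →ₗ[R] Z, s.comp g = h := by
  refine ⟨((LinearMap.ker g).liftQ h hk).comp (g.quotKerEquivOfSurjective hg).symm.toLinearMap, ?_⟩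
  ext x
  have : (g.quotKerEquivOfSurjective hg).symm (g x) = (LinearMap.ker g).mkQ x := by
    rw [LinearEquiv.symm_apply_eq]; rfl
  simp [this]

theorem factor_inj {X Y Z : Type u} [AddCommGroup X] [Module R X] [AddCommGroup Y] [Module R Y]
    [AddCommGroup Z] [Module R Z] (f : X →ₗ[R] Y) (hf : Function.Injective f) (h : Z →ₗ[R] Y)
    (hk : LinearMap.range h ≤ LinearMap.range f) : ∃ s : Z →ₗ[R] X, f.comp s = h := by
  refine ⟨(LinearEquiv.ofInjective f hf).symm.toLinearMap.comp
    (h.codRestrict (LinearMap.range f) (fun z => hk ⟨z, rfl⟩)), ?_⟩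
  ext z
  have := (LinearEquiv.ofInjective f hf).apply_symm_apply
    (h.codRestrict (LinearMap.range f) (fun z => hk ⟨z, rfl⟩) z)
  have h2 := congrArg Subtype.val this
  exact h2

theorem eq_of_comp_surj {X Y Z : Type u} [AddCommGroup X] [Module R X] [AddCommGroup Y]
    [Module R Y] [AddCommGroup Z] [Module R Z] {g : X →ₗ[R] Y} (hg : Function.Surjective g)
    {a b : Y →ₗ[R] Z} (h : a.comp g = b.comp g) : a = b := by
  ext y
  obtain ⟨x, rfl⟩ := hg y
  exact LinearMap.congr_fun h x

theorem split_of_retract {N E X : Type u} [AddCommGroup N] [Module R N] [AddCommGroup E]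
    [Module R E] [AddCommGroup X] [Module R X] {f : N →ₗ[R] E} {g : E →ₗ[R] X}
    (hg : Function.Surjective g) (hfg : LinearMap.range f = LinearMap.ker g)
    {r : E →ₗ[R] N} (hr : r.comp f = LinearMap.id) : ∃ s : X →ₗ[R] E, g.comp s = LinearMap.id := by
  have hr' : ∀ x, r (f x) = x := fun x => LinearMap.congr_fun hr x
  have hgf : ∀ x, g (f x) = 0 := fun x => by
    have : f x ∈ LinearMap.ker g := hfg ▸ ⟨x, rfl⟩
    exact this
  obtain ⟨s, hs⟩ := factor_surj g hg (LinearMap.id - f.comp r) (by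
    rw [← hfg]
    rintro _ ⟨x, rfl⟩
    simp [hr'])
  refine ⟨s, eq_of_comp_surj hg ?_⟩
  rw [LinearMap.comp_assoc, hs]
  ext x
  simp [hgf]

theorem indec_isCompl {X : ModA R} (hX : X.IsIndec) {p q : Submodule R X.M} (h : IsCompl p q) :
    p = ⊥ ∨ q = ⊥ := by
  rcases hX.2 (Submodule.projection p q h) (Submodule.isIdempotentElem_projection h) with h0 | h1
  · left
    rw [eq_bot_iff]
    intro x hx
    have := Submodule.projection_apply_of_mem_left h hx
    rw [h0] at this
    simpa using this.symm
  · right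
    rw [eq_bot_iff]
    intro x hx
    have := Submodule.projection_apply_right h ⟨x, hx⟩
    rw [h1] at this
    simpa using this

/-- rank of a map -/
noncomputable def rk {X Y : ModA R} (f : X.M →ₗ[R] Y.M) : ℕ := len (subObj Y (LinearMap.range f))

theorem rk_comp_le_left {X Y Z : ModA R} (f : X.M →ₗ[R] Y.M) (h : Y.M →ₗ[R] Z.M) :
    rk (h.comp f) ≤ rk h :=
  len_le_of_inj (X := subObj Z (LinearMap.range (h.comp f)))
    (Y := subObj Z (LinearMap.range h)) (Submodule.inclusion (LinearMap.range_comp_le_range f h))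
    (Submodule.inclusion_injective _)

theorem rk_comp_le_right {X Y Z : ModA R} (f : X.M →ₗ[R] Y.M) (h : Y.M →ₗ[R] Z.M) :
    rk (h.comp f) ≤ rk f := by
  refine len_le_of_surj (X := subObj Y (LinearMap.range f))
    (Y := subObj Z (LinearMap.range (h.comp f)))
    ((h.comp (LinearMap.range f).subtype).codRestrict _ ?_) ?_
  · rintro ⟨_, x, rfl⟩
    exact ⟨x, rfl⟩
  · rintro ⟨_, x, rfl⟩
    exact ⟨⟨f x, x, rfl⟩, rfl⟩

theorem disjoint_of_rk {X Y Z : ModA R} (f : X.M →ₗ[R] Y.M) (h : Y.M →ₗ[R] Z.M)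
    (hr : rk f ≤ rk (h.comp f)) : LinearMap.range f ⊓ LinearMap.ker h = ⊥ := by
  let φ : (subObj Y (LinearMap.range f)).M →ₗ[R] Z.M := h.comp (LinearMap.range f).subtype
  have hφ : LinearMap.range φ = LinearMap.range (h.comp f) := by
    ext z
    constructor
    · rintro ⟨⟨_, x, rfl⟩, rfl⟩
      exact ⟨x, rfl⟩
    · rintro ⟨x, rfl⟩
      exact ⟨⟨f x, x, rfl⟩, rfl⟩
  have hk : LinearMap.ker φ = ⊥ := by
    by_contra hne
    have h1 := len_quot_lt (X := subObj Y (LinearMap.range f)) (LinearMap.ker φ) hne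
    have h2 := len_iso (X := quotObj (subObj Y (LinearMap.range f)) (LinearMap.ker φ))
      (Y := subObj Z (LinearMap.range φ)) ⟨φ.quotKerEquivRange⟩
    have h3 : len (subObj Z (LinearMap.range φ)) = rk (h.comp f) := by rw [hφ]; rfl
    have h4 : len (subObj Y (LinearMap.range f)) = rk f := rfl
    omega
  rw [eq_bot_iff]
  rintro y ⟨hy1, hy2⟩
  have : (⟨y, hy1⟩ : LinearMap.range f) ∈ LinearMap.ker φ := hy2
  rw [hk] at this
  have := congrArg Subtype.val this
  simpa using this

theorem sup_of_rk {X Y Z : ModA R} (f : X.M →ₗ[R] Y.M) (h : Y.M →ₗ[R] Z.M)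
    (hr : rk h ≤ rk (h.comp f)) : LinearMap.range f ⊔ LinearMap.ker h = ⊤ := by
  have hle : LinearMap.range (h.comp f) ≤ LinearMap.range h := LinearMap.range_comp_le_range f h
  have heq : LinearMap.range (h.comp f) = LinearMap.range h := by
    by_contra hne
    have h1 : Submodule.comap (LinearMap.range h).subtype (LinearMap.range (h.comp f)) ≠ ⊤ := by
      intro h0
      apply hne
      apply le_antisymm hle
      exact Submodule.comap_subtype_eq_top.1 h0
    have h2 := len_sub_lt (X := subObj Z (LinearMap.range h)) _ h1
    have h3 := len_iso (X := subObj (subObj Z (LinearMap.range h))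
        (Submodule.comap (LinearMap.range h).subtype (LinearMap.range (h.comp f))))
      (Y := subObj Z (LinearMap.range (h.comp f))) ⟨Submodule.comapSubtypeEquivOfLe hle⟩
    have h4 : len (subObj Z (LinearMap.range (h.comp f))) = rk (h.comp f) := rfl
    have h5 : len (subObj Z (LinearMap.range h)) = rk h := rfl
    omega
  rw [eq_top_iff]
  intro y _
  obtain ⟨x, hx⟩ : h y ∈ LinearMap.range (h.comp f) := heq ▸ ⟨y, rfl⟩
  have : y = f x + (y - f x) := by abel
  rw [this]
  exact Submodule.add_mem_sup ⟨x, rfl⟩ (by simpa [sub_eq_zero] using hx.symm)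

theorem rk_pos {X Y : ModA R} {f : X.M →ₗ[R] Y.M} (hf : f ≠ 0) : 0 < rk f := by
  have h : Module.length R (LinearMap.range f) ≠ 0 := by
    intro h
    apply hf
    rw [Module.length_eq_zero_iff] at h
    ext x
    have := Subsingleton.elim (⟨f x, x, rfl⟩ : LinearMap.range f) 0
    simpa using congrArg Subtype.val this
  have h2 := coe_len (subObj Y (LinearMap.range f))
  rw [← h2] at h
  have : len (subObj Y (LinearMap.range f)) ≠ 0 := by exact_mod_cast h
  exact Nat.pos_of_ne_zero this

/-- Composite of `n ≥ 1` nonisomorphisms between indecomposables with property `P`. -/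
inductive Chain (P : ModA R → Prop) : ℕ → ∀ X Y : ModA R, (X.M →ₗ[R] Y.M) → Prop
  | single {X Y : ModA R} (f : X.M →ₗ[R] Y.M) (hX : X.IsIndec) (hY : Y.IsIndec) (pX : P X)
      (pY : P Y) (hf : ¬ Function.Bijective f) : Chain P 1 X Y f
  | cons {n : ℕ} {X Z Y : ModA R} (f : X.M →ₗ[R] Z.M) (g : Z.M →ₗ[R] Y.M) (hX : X.IsIndec)
      (pX : P X) (hf : ¬ Function.Bijective f) (hg : Chain P n Z Y g) :
      Chain P (n + 1) X Y (g.comp f)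

theorem Chain.left {P : ModA R → Prop} {n : ℕ} {X Y : ModA R} {f : X.M →ₗ[R] Y.M}
    (h : Chain P n X Y f) : X.IsIndec ∧ P X := by
  cases h with
  | single f hX hY pX pY hf => exact ⟨hX, pX⟩
  | cons f g hX pX hf hg => exact ⟨hX, pX⟩

theorem Chain.pos {P : ModA R → Prop} {n : ℕ} {X Y : ModA R} {f : X.M →ₗ[R] Y.M}
    (h : Chain P n X Y f) : 1 ≤ n := by
  cases h <;> omega

theorem Chain.snoc {P : ModA R → Prop} {n : ℕ} {X Y W : ModA R} {f : X.M →ₗ[R] Y.M}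
    (h : Chain P n X Y f) (hW : W.IsIndec) (pW : P W) (g : Y.M →ₗ[R] W.M)
    (hg : ¬ Function.Bijective g) : Chain P (n + 1) X W (g.comp f) := by
  induction h with
  | single f hX hY pX pY hf => exact Chain.cons f g hX pX hf (Chain.single g hY hW pY pW hg)
  | cons f g' hX pX hf hg' ih =>
    rw [← LinearMap.comp_assoc]
    exact Chain.cons f _ hX pX hf (ih g hg)

theorem Chain.split {P : ModA R → Prop} {b : ℕ} (hb : 1 ≤ b) (a : ℕ) (ha : 1 ≤ a)
    {X Y : ModA R} {f : X.M →ₗ[R] Y.M} (h : Chain P (a + b) X Y f) :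
    ∃ (Z : ModA R) (g : X.M →ₗ[R] Z.M) (k : Z.M →ₗ[R] Y.M), Chain P a X Z g ∧ Chain P b Z Y k ∧
      f = k.comp g := by
  induction a, ha using Nat.le_induction generalizing X with
  | base =>
    obtain ⟨c, hc⟩ : ∃ c, c = 1 + b := ⟨_, rfl⟩
    rw [← hc] at h
    cases h with
    | single => omega
    | @cons n _ Z _ f g hX pX hf hg =>
      have : n = b := by omega
      subst this
      exact ⟨Z, f, g, Chain.single f hX hg.left.1 pX hg.left.2 hf, hg, rfl⟩
  | succ a ha ih =>
    obtain ⟨c, hc⟩ : ∃ c, c = a + 1 + b := ⟨_, rfl⟩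
    rw [← hc] at h
    cases h with
    | single => omega
    | @cons n _ Z _ f g hX pX hf hg =>
      have : n = a + b := by omega
      subst this
      obtain ⟨W, g', k, h1, h2, rfl⟩ := ih hg
      exact ⟨W, g'.comp f, k, Chain.cons f g' hX pX hf h1, h2, rfl⟩

theorem harada_sai_aux (b : ℕ) (m : ℕ) : ∀ {X Y : ModA R} {f : X.M →ₗ[R] Y.M},
    Chain (fun Z => len Z ≤ b) (2 ^ (m + 1) - 1) X Y f → f ≠ 0 → rk f + (m + 1) ≤ b := by
  induction m with
  | zero =>
    intro X Y f h hf
    cases h with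
    | single f hX hY pX pY hnb =>
      have h1 : rk f ≤ len Y := len_le_of_inj (X := subObj Y (LinearMap.range f))
        (LinearMap.range f).subtype (Submodule.injective_subtype _)
      have h2 : rk f ≤ len X := len_le_of_surj (Y := subObj Y (LinearMap.range f))
        f.rangeRestrict f.surjective_rangeRestrict
      by_contra hcon
      have e1 : rk f = b := by omega
      apply hnb
      constructor
      · rw [← LinearMap.ker_eq_bot]
        by_contra hne
        have h3 := len_quot_lt (X := X) (LinearMap.ker f) hne
        have h4 := len_iso (X := quotObj X (LinearMap.ker f))
          (Y := subObj Y (LinearMap.range f)) ⟨f.quotKerEquivRange⟩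
        have h5 : len (subObj Y (LinearMap.range f)) = rk f := rfl
        omega
      · rw [← LinearMap.range_eq_top]
        by_contra hne
        have h3 := len_sub_lt (X := Y) (LinearMap.range f) hne
        have h5 : len (subObj Y (LinearMap.range f)) = rk f := rfl
        omega
    | @cons n _ Z _ f g hX pX hf' hg => exact absurd hg.pos (by simp)
  | succ m ih =>
    intro X Y F h hF
    have hpos : 1 ≤ 2 ^ (m + 1) - 1 := by
      have : 2 ^ 1 ≤ 2 ^ (m + 1) := Nat.pow_le_pow_right (by norm_num) (by omega)
      omega
    have e : 2 ^ (m + 1 + 1) - 1 = (2 ^ (m + 1) - 1) + (1 + (2 ^ (m + 1) - 1)) := by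
      have : 2 ^ (m + 1 + 1) = 2 * 2 ^ (m + 1) := by ring
      omega
    rw [e] at h
    obtain ⟨Z, f, k, hf, hk, rfl⟩ := Chain.split (by omega) _ hpos h
    clear h
    obtain ⟨W, g, h, hg, hh, rfl⟩ := Chain.split hpos 1 le_rfl hk
    have hf0 : f ≠ 0 := by rintro rfl; simp at hF
    have hh0 : h ≠ 0 := by rintro rfl; simp at hF
    have i1 := ih hf hf0
    have i2 := ih hh hh0
    by_contra hcon
    have hgb : ¬ Function.Bijective g := by
      cases hg with
      | single _ _ _ _ _ hb => exact hb
      | @cons n _ Z _ f g hX pX hf' hg => exact absurd hg.pos (by simp)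
    have l1 := rk_comp_le_left f (h.comp g)
    have l2 := rk_comp_le_right f (h.comp g)
    have l3 := rk_comp_le_left (g.comp f) h
    have l4 := rk_comp_le_right (g.comp f) h
    have l5 := rk_comp_le_left g h
    have l6 := rk_comp_le_right f g
    rw [LinearMap.comp_assoc] at l1 l2
    rw [LinearMap.comp_assoc] at hcon
    have c1 : IsCompl (LinearMap.range f) (LinearMap.ker (h.comp g)) := by
      constructor
      · rw [disjoint_iff]
        exact disjoint_of_rk f (h.comp g) (by rw [LinearMap.comp_assoc]; omega)
      · rw [codisjoint_iff]
        exact sup_of_rk f (h.comp g) (by rw [LinearMap.comp_assoc]; omega)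
    have c2 : IsCompl (LinearMap.range (g.comp f)) (LinearMap.ker h) := by
      constructor
      · rw [disjoint_iff]
        exact disjoint_of_rk (g.comp f) h (by omega)
      · rw [codisjoint_iff]
        exact sup_of_rk (g.comp f) h (by omega)
    apply hgb
    constructor
    · rcases indec_isCompl hk.left.1 c1 with h0 | h0
      · exact absurd (LinearMap.range_eq_bot.1 h0) hf0
      · have : Function.Injective (h.comp g) := LinearMap.ker_eq_bot.1 h0
        rw [LinearMap.coe_comp] at this
        exact this.of_comp
    · rcases indec_isCompl hh.left.1 c2 with h0 | h0
      · exfalso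
        apply hF
        rw [LinearMap.comp_assoc, LinearMap.range_eq_bot.1 h0, LinearMap.comp_zero]
      · have h1 := c2.sup_eq_top
        rw [h0, sup_bot_eq, LinearMap.range_eq_top, LinearMap.coe_comp] at h1
        exact h1.of_comp

theorem Chain.mono {P Q : ModA R → Prop} (hPQ : ∀ X, X.IsIndec → P X → Q X) {n : ℕ} {X Y : ModA R}
    {f : X.M →ₗ[R] Y.M} (h : Chain P n X Y f) : Chain Q n X Y f := by
  induction h with
  | single f hX hY pX pY hf => exact Chain.single f hX hY (hPQ _ hX pX) (hPQ _ hY pY) hf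
  | cons f g hX pX hf hg ih => exact Chain.cons f g hX (hPQ _ hX pX) hf ih

theorem harada_sai {P : ModA R → Prop} (hP : FinUp P) :
    ∃ N, ∀ (n : ℕ) (X Y : ModA R) (f : X.M →ₗ[R] Y.M), N ≤ n → Chain P n X Y f → f = 0 := by
  obtain ⟨l, hl⟩ := hP
  have hb : ∃ b, ∀ Y ∈ l, len Y ≤ b := by
    clear hl
    induction l with
    | nil => exact ⟨0, by simp⟩
    | cons a l ih =>
      obtain ⟨b, hb⟩ := ih
      refine ⟨max (len a) b, ?_⟩
      intro Y hY
      rcases List.mem_cons.1 hY with rfl | hY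
      · exact le_max_left _ _
      · exact (hb Y hY).trans (le_max_right _ _)
  obtain ⟨b, hb⟩ := hb
  refine ⟨2 ^ (b + 1) - 1 + 1, ?_⟩
  intro n X Y f hn h
  have hc : Chain (fun Z => len Z ≤ b) n X Y f := h.mono (fun Z hZ pZ => by
    obtain ⟨Y, hY, hZY⟩ := hl Z hZ pZ
    rw [len_iso hZY]
    exact hb Y hY)
  obtain ⟨d, rfl⟩ : ∃ d, n = (2 ^ (b + 1) - 1) + (d + 1) := ⟨n - (2 ^ (b + 1) - 1) - 1, by omega⟩
  have hpos : 1 ≤ 2 ^ (b + 1) - 1 := by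
    have : 2 ^ 1 ≤ 2 ^ (b + 1) := Nat.pow_le_pow_right (by norm_num) (by omega)
    omega
  obtain ⟨Z, g, k, hg, hk, rfl⟩ := Chain.split (by omega) _ hpos hc
  by_cases h0 : g = 0
  · rw [h0, LinearMap.comp_zero]
  · have := harada_sai_aux b b hg h0
    have := rk_pos h0
    omega

/-! Cycles and predecessors -/

/-- nonzero noniso between indecomposables -/
def NN (X Y : ModA R) : Prop :=
  X.IsIndec ∧ Y.IsIndec ∧ ∃ f : X.M →ₗ[R] Y.M, f ≠ 0 ∧ ¬ Function.Bijective f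

/-- nonzero map between indecomposables -/
def HN (X Y : ModA R) : Prop :=
  X.IsIndec ∧ Y.IsIndec ∧ ∃ f : X.M →ₗ[R] Y.M, f ≠ 0

/-- predecessor relation -/
def Le (X Y : ModA R) : Prop := Relation.ReflTransGen HN X Y

theorem hn_of_iso {X Y : ModA R} (hX : X.IsIndec) (h : X.Iso Y) : HN X Y := by
  obtain ⟨e⟩ := h
  exact ⟨hX, indec_of_iso ⟨e⟩ hX, e.toLinearMap, ne_zero_of_bij hX e.bijective⟩

theorem le_of_iso {X Y : ModA R} (hX : X.IsIndec) (h : X.Iso Y) : Le X Y :=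
  Relation.ReflTransGen.single (hn_of_iso hX h)

theorem Le.trans {X Y Z : ModA R} (h : Le X Y) (h' : Le Y Z) : Le X Z :=
  Relation.ReflTransGen.trans h h'

theorem Le.refl (X : ModA R) : Le X X := Relation.ReflTransGen.refl

theorem le_of_hom {X Y : ModA R} (hX : X.IsIndec) (hY : Y.IsIndec) {f : X.M →ₗ[R] Y.M}
    (hf : f ≠ 0) : Le X Y := Relation.ReflTransGen.single ⟨hX, hY, f, hf⟩

theorem Le.indec_left {X Y : ModA R} (h : Le X Y) (hY : Y.IsIndec) : X.IsIndec := by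
  rcases Relation.ReflTransGen.cases_head h with h | ⟨Z, h, _⟩
  · exact h ▸ hY
  · exact h.1

theorem Le.indec_right {X Y : ModA R} (h : Le X Y) (hX : X.IsIndec) : Y.IsIndec := by
  rcases Relation.ReflTransGen.cases_tail h with h | ⟨Z, _, h⟩
  · exact h ▸ hX
  · exact h.2.1

theorem nn_hn {X Y : ModA R} (h : NN X Y) : HN X Y := ⟨h.1, h.2.1, h.2.2.choose, h.2.2.choose_spec.1⟩

theorem le_of_transNN {X Y : ModA R} (h : Relation.TransGen NN X Y) : Le X Y :=
  (Relation.TransGen.mono (p := HN) (fun _ _ => nn_hn) _ _ h).to_reflTransGen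

theorem nn_iso_right {X Y Z : ModA R} (h : NN X Y) (e : Y.Iso Z) : NN X Z := by
  obtain ⟨hX, hY, f, hf, hb⟩ := h
  refine ⟨hX, indec_of_iso e hY, e.some.toLinearMap.comp f, ?_, ?_⟩
  · intro h0
    apply hf
    ext x
    have := LinearMap.congr_fun h0 x
    simpa using this
  · intro hb'
    apply hb
    rw [LinearMap.coe_comp] at hb'
    exact (Function.Bijective.of_comp_iff' e.some.bijective f).1 hb'

theorem nn_iso_left {X Y Z : ModA R} (e : X.Iso Y) (h : NN Y Z) : NN X Z := by
  obtain ⟨hX, hY, f, hf, hb⟩ := h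
  refine ⟨indec_of_iso (iso_symm e) hX, hY, f.comp e.some.toLinearMap, ?_, ?_⟩
  · intro h0
    apply hf
    ext x
    have := LinearMap.congr_fun h0 (e.some.symm x)
    simpa using this
  · intro hb'
    apply hb
    rw [LinearMap.coe_comp] at hb'
    exact (Function.Bijective.of_comp_iff f e.some.bijective).1 hb'

theorem transNN_iso_right {X Y Z : ModA R} (h : Relation.TransGen NN X Y) (e : Y.Iso Z) :
    Relation.TransGen NN X Z := by
  cases h with
  | single h => exact Relation.TransGen.single (nn_iso_right h e)
  | tail h h' => exact Relation.TransGen.tail h (nn_iso_right h' e)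

theorem le_cases {X Y : ModA R} (h : Le X Y) : X.Iso Y ∨ Relation.TransGen NN X Y := by
  induction h with
  | refl => exact Or.inl (iso_refl X)
  | @tail Y Z _ h ih =>
    obtain ⟨hY, hZ, f, hf⟩ := h
    by_cases hb : Function.Bijective f
    · rcases ih with ih | ih
      · exact Or.inl (iso_trans ih (iso_of_bij f hb))
      · exact Or.inr (transNN_iso_right ih (iso_of_bij f hb))
    · have hYZ : NN Y Z := ⟨hY, hZ, f, hf, hb⟩
      rcases ih with ih | ih
      · exact Or.inr (Relation.TransGen.single (nn_iso_left ih hYZ))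
      · exact Or.inr (Relation.TransGen.tail ih hYZ)

theorem seq_of_trans {r : ModA R → ModA R → Prop} {X Y : ModA R} (h : Relation.ReflTransGen r X Y) :
    ∃ (n : ℕ) (c : ℕ → ModA R), c 0 = X ∧ c n = Y ∧ ∀ i < n, r (c i) (c (i + 1)) := by
  induction h using Relation.ReflTransGen.head_induction_on with
  | refl => exact ⟨0, fun _ => Y, rfl, rfl, by simp⟩
  | @head X Z h _ ih =>
    obtain ⟨n, c, h0, h1, h2⟩ := ih
    refine ⟨n + 1, fun k => Nat.casesOn k X (fun k => c k), rfl, h1, ?_⟩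
    intro i hi
    cases i with
    | zero => change r X (c 0); rw [h0]; exact h
    | succ i => exact h2 i (by omega)

theorem mkCycle (b : Prop) (n : ℕ) (hn : 0 < n) (c : ℕ → ModA R) (hc : c n = c 0)
    (hi : ∀ i ≤ n, (c i).IsIndec)
    (h : ∀ i < n, ∃ f : (c i).M →ₗ[R] (c (i + 1)).M, f ≠ 0 ∧ ¬ Function.Bijective f ∧
      (i = 0 → b → InRadInf f)) :
    ∃ C : ModCycle R, C.Passes (c 0) ∧ (b → ¬ C.IsFiniteCycle) := by
  choose F hF using h
  refine ⟨⟨n, hn, fun i => c i.val, fun i => hi _ (by omega), by simpa using hc,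
    fun i => F i.val i.2, fun i => (hF i.val i.2).1, fun i => (hF i.val i.2).2.1⟩, ?_, ?_⟩
  · exact ⟨0, iso_refl _⟩
  · intro hb hcon
    exact hcon ⟨0, hn⟩ ((hF 0 hn).2.2 rfl hb)

theorem not_directing_of_trans {X : ModA R} (h : Relation.TransGen NN X X) :
    ¬ IsDirectingModule X := by
  obtain ⟨Z, h1, h2⟩ := Relation.TransGen.head'_iff.1 h
  obtain ⟨n, c, h0, hn, hs⟩ := seq_of_trans h2
  intro hd
  apply hd
  let c' : ℕ → ModA R := fun k => Nat.casesOn k X (fun k => c k)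
  have hs' : ∀ i < n + 1, NN (c' i) (c' (i + 1)) := by
    intro i hi
    cases i with
    | zero => change NN X (c 0); rw [h0]; exact h1
    | succ i => exact hs i (by omega)
  have hcl : c' (n + 1) = c' 0 := hn
  obtain ⟨C, hC, _⟩ := mkCycle False (n + 1) (by omega) c' hcl (by
    intro i hi
    rcases Nat.lt_or_eq_of_le hi with h | h
    · exact (hs' i h).1
    · rw [h, hcl]; exact h1.1) (by
    intro i hi
    obtain ⟨_, _, f, hf, hb⟩ := hs' i hi
    exact ⟨f, hf, hb, fun _ h => h.elim⟩)
  exact ⟨C, hC⟩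

theorem trans_of_not_directing {X : ModA R} (h : ¬ IsDirectingModule X) :
    Relation.TransGen NN X X := by
  unfold IsDirectingModule at h
  push Not at h
  obtain ⟨C, i, ⟨e⟩⟩ := h
  have hstep : ∀ k : Fin C.len, NN (C.obj k.castSucc) (C.obj k.succ) := fun k =>
    ⟨C.obj_indec _, C.obj_indec _, C.hom k, C.hom_ne_zero k, C.hom_not_iso k⟩
  have h1 : ∀ (k : ℕ) (hk : k < C.len + 1), Relation.ReflTransGen NN (C.obj 0) (C.obj ⟨k, hk⟩) := by
    intro k
    induction k with
    | zero => intro hk; exact Relation.ReflTransGen.refl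
    | succ k ih =>
      intro hk
      exact (ih (by omega)).tail (hstep ⟨k, by omega⟩)
  have h2 : ∀ (d k : ℕ) (hk : k + d = C.len), Relation.ReflTransGen NN (C.obj ⟨k, by omega⟩)
      (C.obj 0) := by
    intro d
    induction d with
    | zero =>
      intro k hk
      rw [← C.closed]
      have : (⟨k, by omega⟩ : Fin (C.len + 1)) = Fin.last C.len := Fin.ext (by simpa using hk)
      rw [this]
    | succ d ih =>
      intro k hk
      exact (ih (k + 1) (by omega)).head (hstep ⟨k, by omega⟩)
  have h00 : Relation.TransGen NN (C.obj 0) (C.obj 0) :=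
    Relation.TransGen.head' (hstep ⟨0, C.len_pos⟩)
      (h2 (C.len - 1) 1 (by have := C.len_pos; omega))
  have hii : Relation.TransGen NN (C.obj i) (C.obj i) :=
    (Relation.TransGen.trans_right (h2 (C.len - i.val) i.val (by omega)) h00).trans_left
      (h1 i.val i.2)
  have hX : Relation.TransGen NN X (C.obj i) := by
    rcases Relation.TransGen.head'_iff.1 hii with ⟨Z, hZ, hZ'⟩
    exact Relation.TransGen.head' (nn_iso_left ⟨e.symm⟩ hZ) hZ'
  exact transNN_iso_right hX ⟨e⟩

/-- cycle finiteness for left modules -/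
def CycFin (R : Type u) [Ring R] : Prop := ∀ c : ModCycle R, c.IsFiniteCycle

theorem CycFin.irrefl (hcf : CycFin R) {X Y : ModA R} (hX : X.IsIndec) {f : X.M →ₗ[R] Y.M}
    (hf : f ≠ 0) (hf' : InRadInf f) (hY : Y.IsIndec) (h : Le Y X) : False := by
  have key : ∀ Z : ModA R, Z.IsIndec → ∀ g : X.M →ₗ[R] Z.M, g ≠ 0 → InRadInf g →
      Relation.ReflTransGen NN Z X → False := by
    intro Z hZ g hg hg' h2
    obtain ⟨n, c, h0, hn, hs⟩ := seq_of_trans h2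
    let c' : ℕ → ModA R := fun k => Nat.casesOn k X (fun k => c k)
    have hcl : c' (n + 1) = c' 0 := hn
    obtain ⟨C, _, hC⟩ := mkCycle True (n + 1) (by omega) c' hcl (by
      intro i hi
      cases i with
      | zero => exact hX
      | succ i =>
        rcases Nat.lt_or_eq_of_le hi with h | h
        · exact (hs i (by omega)).1
        · rw [h, hcl]; exact hX) (by
      intro i hi
      cases i with
      | zero =>
        subst h0
        exact ⟨g, hg, inRadInf_not_bij hX hg', fun _ _ => hg'⟩
      | succ i =>
        obtain ⟨_, _, f, hf, hb⟩ := hs i (by omega)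
        exact ⟨f, hf, hb, fun h _ => by omega⟩)
    exact hC trivial (hcf C)
  rcases le_cases h with ⟨⟨e⟩⟩ | h
  · refine key X hX (e.toLinearMap.comp f) ?_ (inRadInf_comp_left hf' _) Relation.ReflTransGen.refl
    intro h0
    apply hf
    ext x
    have := LinearMap.congr_fun h0 x
    simpa using this
  · exact key Y hY f hf hf' h.to_reflTransGen

theorem nonsplit_middle {N E X : ModA R} (hN : N.IsIndec) (hX : X.IsIndec) {f : N.M →ₗ[R] E.M}
    {g : E.M →ₗ[R] X.M} (hg : Function.Surjective g) (hfg : LinearMap.range f = LinearMap.ker g)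
    (hns : ¬ ∃ s : X.M →ₗ[R] E.M, g.comp s = LinearMap.id) :
    ∃ Z, NN N Z ∧ NN Z X := by
  classical
  let d := dec E
  have : ∃ j, g.comp (d.i j) ≠ 0 ∧ (d.p j).comp f ≠ 0 := by
    by_contra hcon
    push Not at hcon
    let e : E.M →ₗ[R] E.M := ∑ j ∈ Finset.univ.filter (fun j => g.comp (d.i j) ≠ 0),
      (d.i j).comp (d.p j)
    obtain ⟨s, hs⟩ := factor_surj g hg e (by
      rw [← hfg]
      rintro _ ⟨x, rfl⟩
      simp only [e, LinearMap.mem_ker, LinearMap.sum_apply, LinearMap.comp_apply]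
      apply Finset.sum_eq_zero
      intro j hj
      have h1 := hcon j (Finset.mem_filter.1 hj).2
      have h2 : d.p j (f x) = 0 := LinearMap.congr_fun h1 x
      rw [h2, map_zero])
    apply hns
    refine ⟨s, eq_of_comp_surj hg ?_⟩
    rw [LinearMap.comp_assoc, hs, LinearMap.id_comp]
    ext x
    conv_rhs => rw [d.eq_sum x]
    simp only [e, LinearMap.sum_apply, LinearMap.comp_apply, map_sum]
    apply Finset.sum_subset (Finset.filter_subset _ _)
    intro j _ hj
    have : g.comp (d.i j) = 0 := by
      by_contra h
      exact hj (Finset.mem_filter.2 ⟨Finset.mem_univ _, h⟩)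
    exact LinearMap.congr_fun this _
  obtain ⟨j, h1, h2⟩ := this
  refine ⟨d.Z j, ⟨hN, d.indec j, _, h2, ?_⟩, ⟨d.indec j, hX, _, h1, ?_⟩⟩
  · intro hb
    obtain ⟨r, hr, _⟩ := exists_inv _ hb
    exact hns (split_of_retract hg hfg (r := r.comp (d.p j)) (by rw [LinearMap.comp_assoc, hr]))
  · intro hb
    obtain ⟨r, _, hr⟩ := exists_inv _ hb
    exact hns ⟨(d.i j).comp r, by rw [← LinearMap.comp_assoc, hr]⟩

theorem finLen_ext {N X : ModA R} {E : Type u} [AddCommGroup E] [Module R E] {f : N.M →ₗ[R] E}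
    {g : E →ₗ[R] X.M} (hfg : LinearMap.range f = LinearMap.ker g) : IsFiniteLength R E := by
  rw [isFiniteLength_iff_isNoetherian_isArtinian]
  exact ⟨isNoetherian_of_range_eq_ker f g hfg, isArtinian_of_range_eq_ker f g hfg⟩

theorem rigid_of_directing {M : ModA R} (hM : M.IsIndec) (h : IsDirectingModule M) : IsRigid M := by
  intro E _ _ f g hf hg hfg
  by_contra hns
  obtain ⟨Z, h1, h2⟩ := nonsplit_middle (E := ⟨E, finLen_ext hfg⟩) hM hM hg hfg hns
  exact not_directing_of_trans (Relation.TransGen.head h1 (Relation.TransGen.single h2)) h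

theorem tauRigid_of_directing {M : ModA R} (hM : M.IsIndec) (h : IsDirectingModule M) :
    IsTauRigid M := by
  rintro N ⟨s, h1, h2⟩ f
  by_contra hf
  obtain ⟨Z, h3, h4⟩ := nonsplit_middle s.l_indec s.r_indec s.surj s.exact s.not_split
  have h5 : Le M s.l := (le_of_hom hM (indec_of_iso h1 s.l_indec) hf).trans
    (le_of_iso (indec_of_iso h1 s.l_indec) (iso_symm h1))
  have h6 : Relation.TransGen NN s.l M := transNN_iso_right
    (Relation.TransGen.head h3 (Relation.TransGen.single h4)) h2
  rcases le_cases h5 with h7 | h7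
  · obtain ⟨W, h8, h9⟩ := Relation.TransGen.head'_iff.1 h6
    exact not_directing_of_trans (Relation.TransGen.head' (nn_iso_left h7 h8) h9) h
  · exact not_directing_of_trans (h7.trans h6) h

end CF


namespace CF

variable {R : Type u} [Ring R]

/-- The abstract properties of an artin algebra which we use. -/
class Nice (R : Type u) [Ring R] : Prop where
  finLen : IsFiniteLength R R
  las : ∀ U : ModA R, U.IsIndec → ∃ (E : ModA R) (lam : U.M →ₗ[R] E.M), ¬ SplitMonoMap lam ∧
    ∀ (Y : ModA R) (h : U.M →ₗ[R] Y.M), ¬ SplitMonoMap h → ∃ h' : E.M →ₗ[R] Y.M, h'.comp lam = h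
  stab : ∀ X Y : ModA R, ∃ N, ∀ n, N ≤ n → radPow R n X Y = radPow R N X Y

/-- Minimal left almost split map. -/
structure Las (U : ModA R) where
  E : ModA R
  lam : U.M →ₗ[R] E.M
  not_split : ¬ SplitMonoMap lam
  factor : ∀ (Y : ModA R) (h : U.M →ₗ[R] Y.M), ¬ SplitMonoMap h →
    ∃ h' : E.M →ₗ[R] Y.M, h'.comp lam = h
  minimal : ∀ φ : E.M →ₗ[R] E.M, φ.comp lam = lam → Function.Bijective φ

theorem exists_las [Nice R] {U : ModA R} (hU : U.IsIndec) : Nonempty (Las U) := by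
  classical
  have hex : ∃ (n : ℕ) (E : ModA R) (lam : U.M →ₗ[R] E.M), len E = n ∧ ¬ SplitMonoMap lam ∧
      ∀ (Y : ModA R) (h : U.M →ₗ[R] Y.M), ¬ SplitMonoMap h →
        ∃ h' : E.M →ₗ[R] Y.M, h'.comp lam = h := by
    obtain ⟨E, lam, h1, h2⟩ := Nice.las U hU
    exact ⟨len E, E, lam, rfl, h1, h2⟩
  obtain ⟨E, lam, hn, h1, h2⟩ := Nat.find_spec hex
  refine ⟨⟨E, lam, h1, h2, ?_⟩⟩
  intro φ hφ
  have htop : LinearMap.range φ = ⊤ := by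
    by_contra hne
    have hlt := len_sub_lt (X := E) (LinearMap.range φ) hne
    refine Nat.find_min hex (hn ▸ hlt) ⟨subObj E (LinearMap.range φ),
      φ.rangeRestrict.comp lam, rfl, ?_, ?_⟩
    · rintro ⟨r, hr⟩
      exact h1 ⟨r.comp φ.rangeRestrict, hr⟩
    · intro Y h hh
      obtain ⟨h', rfl⟩ := h2 Y h hh
      refine ⟨h'.comp (LinearMap.range φ).subtype, ?_⟩
      conv_rhs => rw [← hφ]
      rfl
  exact IsNoetherian.bijective_of_surjective_endomorphism φ (LinearMap.range_eq_top.1 htop)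

/-- chosen minimal left almost split map -/
noncomputable def las [Nice R] {U : ModA R} (hU : U.IsIndec) : Las U := (exists_las hU).some

/-- injective relative to finite length modules -/
def InjL (U : ModA R) : Prop :=
  ∀ (Y : ModA R) (f : U.M →ₗ[R] Y.M), Function.Injective f → SplitMonoMap f

theorem Las.inj {U : ModA R} (L : Las U) (h : ¬ InjL U) : Function.Injective L.lam := by
  unfold InjL at h
  push Not at h
  obtain ⟨Y, f, hf, hns⟩ := h
  obtain ⟨f', rfl⟩ := L.factor Y f hns
  rw [LinearMap.coe_comp] at hf
  exact hf.of_comp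

theorem Las.surj {U : ModA R} (L : Las U) (h : InjL U) : Function.Surjective L.lam := by
  have hns : ¬ SplitMonoMap (Y := subObj L.E (LinearMap.range L.lam)) L.lam.rangeRestrict := by
    rintro ⟨r, hr⟩
    apply L.not_split
    apply h
    have hinj : Function.Injective L.lam.rangeRestrict :=
      Function.LeftInverse.injective (g := r) fun x => LinearMap.congr_fun hr x
    intro x y hxy
    exact hinj (Subtype.ext hxy)
  obtain ⟨t, ht⟩ := L.factor (subObj L.E (LinearMap.range L.lam)) _ hns
  have hb := L.minimal ((LinearMap.range L.lam).subtype.comp t) (by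
    rw [LinearMap.comp_assoc, ht]; rfl)
  intro y
  obtain ⟨z, hz⟩ := hb.2 y
  obtain ⟨x, hx⟩ := (t z).2
  exact ⟨x, by rw [hx]; exact hz⟩

theorem splitMono_of_splitEpi {N E X : ModA R} {f : N.M →ₗ[R] E.M} {g : E.M →ₗ[R] X.M}
    (hf : Function.Injective f) (hfg : LinearMap.range f = LinearMap.ker g)
    (h : SplitEpiMap g) : SplitMonoMap f := by
  obtain ⟨s, hs⟩ := h
  have hgf : g.comp f = 0 := by
    ext x
    have : f x ∈ LinearMap.ker g := hfg ▸ ⟨x, rfl⟩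
    exact this
  obtain ⟨r, hr⟩ := factor_inj f hf (LinearMap.id - s.comp g) (by
    rw [hfg]
    rintro _ ⟨x, rfl⟩
    have := LinearMap.congr_fun hs (g x)
    simp only [LinearMap.comp_apply, LinearMap.id_apply] at this
    simp [this])
  refine ⟨r, ?_⟩
  ext x
  apply hf
  have := LinearMap.congr_fun hr (f x)
  have h2 := LinearMap.congr_fun hgf x
  simp only [LinearMap.comp_apply, LinearMap.zero_apply] at h2
  simpa [h2] using this

theorem Las.right_almost {U : ModA R} (L : Las U) (hi : Function.Injective L.lam) (Z : ModA R)
    (h : Z.M →ₗ[R] (quotObj L.E (LinearMap.range L.lam)).M) (hns : ¬ SplitEpiMap h) :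
    ∃ h' : Z.M →ₗ[R] L.E.M, (LinearMap.range L.lam).mkQ.comp h' = h := by
  let π : L.E.M →ₗ[R] (quotObj L.E (LinearMap.range L.lam)).M := (LinearMap.range L.lam).mkQ
  have hπl : ∀ u, π (L.lam u) = 0 := fun u => by
    have : L.lam u ∈ LinearMap.ker (LinearMap.range L.lam).mkQ := by
      rw [Submodule.ker_mkQ]; exact ⟨u, rfl⟩
    exact this
  have hπk : ∀ e, π e = 0 → ∃ u, L.lam u = e := fun e he => by
    have : e ∈ LinearMap.ker (LinearMap.range L.lam).mkQ := he
    rw [Submodule.ker_mkQ] at this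
    exact this
  let P : Submodule R (L.E.M × Z.M) :=
    LinearMap.ker (π.comp (LinearMap.fst R L.E.M Z.M) - h.comp (LinearMap.snd R L.E.M Z.M))
  have hP : ∀ x : P, π x.1.1 = h x.1.2 := fun x => by
    have := LinearMap.mem_ker.1 x.2
    exact sub_eq_zero.1 this
  let a : P →ₗ[R] L.E.M := (LinearMap.fst R L.E.M Z.M).comp P.subtype
  let b : P →ₗ[R] Z.M := (LinearMap.snd R L.E.M Z.M).comp P.subtype
  let ι : U.M →ₗ[R] P := LinearMap.codRestrict P ((LinearMap.inl R L.E.M Z.M).comp L.lam) (by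
    intro u
    simp [P, hπl])
  have hb : Function.Surjective b := by
    intro z
    obtain ⟨e, he⟩ := (LinearMap.range L.lam).mkQ_surjective (h z)
    refine ⟨⟨(e, z), ?_⟩, rfl⟩
    have he' : π e = h z := he
    simp [P, he']
  have hιb : LinearMap.range ι = LinearMap.ker b := by
    ext x
    constructor
    · rintro ⟨u, rfl⟩
      rfl
    · intro hx
      have hx2 : x.1.2 = 0 := hx
      have := hP x
      rw [hx2, map_zero] at this
      obtain ⟨u, hu⟩ := hπk _ this
      refine ⟨u, Subtype.ext (Prod.ext hu hx2.symm)⟩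
  let PO : ModA R := ⟨P, finLen_ext (N := U) (X := Z) hιb⟩
  by_cases hsp : SplitMonoMap (Y := PO) ι
  · obtain ⟨r, hr⟩ := hsp
    obtain ⟨s, hs⟩ := split_of_retract (r := r) hb hιb hr
    refine ⟨a.comp s, ?_⟩
    ext z
    have h1 : π (a (s z)) = h (b (s z)) := hP (s z)
    have h2 : b (s z) = z := LinearMap.congr_fun hs z
    rw [h2] at h1
    exact h1
  · exfalso
    obtain ⟨t, ht⟩ := L.factor PO ι hsp
    let a1 : PO.M →ₗ[R] L.E.M := a
    let b1 : PO.M →ₗ[R] Z.M := b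
    have hφ := L.minimal (a1.comp t) (by
      rw [LinearMap.comp_assoc, ht]
      rfl)
    obtain ⟨q, hq⟩ := factor_surj π (LinearMap.range L.lam).mkQ_surjective (b1.comp t) (by
      intro e he
      obtain ⟨u, rfl⟩ := hπk e he
      have : t (L.lam u) = ι u := LinearMap.congr_fun ht u
      change b1 (t (L.lam u)) = 0
      rw [this]
      rfl)
    have hs : Function.Surjective (h.comp q) := by
      intro c
      obtain ⟨e, rfl⟩ := (LinearMap.range L.lam).mkQ_surjective c
      obtain ⟨e', rfl⟩ := hφ.2 e
      refine ⟨π e', ?_⟩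
      have h1 : q (π e') = b1 (t e') := LinearMap.congr_fun hq e'
      rw [LinearMap.comp_apply, h1]
      exact (hP (t e')).symm
    have hbij := IsNoetherian.bijective_of_surjective_endomorphism
      (M := (quotObj L.E (LinearMap.range L.lam)).M) (h.comp q) hs
    obtain ⟨v, _, hv⟩ := exists_inv _ hbij
    exact hns ⟨q.comp v, by rw [← LinearMap.comp_assoc, hv]⟩

theorem Las.coker_indec {U : ModA R} (L : Las U) (hi : Function.Injective L.lam) :
    (quotObj L.E (LinearMap.range L.lam)).IsIndec := by
  let C := quotObj L.E (LinearMap.range L.lam)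
  let π : L.E.M →ₗ[R] C.M := (LinearMap.range L.lam).mkQ
  have hex : LinearMap.range L.lam = LinearMap.ker π := (Submodule.ker_mkQ _).symm
  have hπ : ¬ SplitEpiMap π := fun h => L.not_split (splitMono_of_splitEpi hi hex h)
  have hsurj : ∀ e : C.M →ₗ[R] C.M, e.comp e = e → SplitEpiMap e → e = LinearMap.id := by
    rintro e he ⟨s, hs⟩
    calc e = e.comp (e.comp s) := by rw [hs, LinearMap.comp_id]
      _ = LinearMap.id := by rw [← LinearMap.comp_assoc, he, hs]
  refine ⟨?_, ?_⟩
  · by_contra hnt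
    rw [not_nontrivial_iff_subsingleton] at hnt
    exact hπ ⟨0, by ext x; exact Subsingleton.elim _ _⟩
  · intro e he
    have he' : e.comp e = e := he
    by_cases h1 : SplitEpiMap (X := C) (Y := C) e
    · exact Or.inr (hsurj e he' h1)
    by_cases h2 : SplitEpiMap (X := C) (Y := C) (LinearMap.id - e)
    · left
      have := hsurj (LinearMap.id - e) (by
        rw [LinearMap.comp_sub, LinearMap.sub_comp, LinearMap.sub_comp, he']
        simp) h2
      rw [sub_eq_self] at this
      exact this
    exfalso
    obtain ⟨a, ha⟩ := L.right_almost hi C e h1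
    obtain ⟨b, hb⟩ := L.right_almost hi C _ h2
    apply hπ
    refine ⟨a + b, ?_⟩
    rw [LinearMap.comp_add]
    change (LinearMap.range L.lam).mkQ.comp a + (LinearMap.range L.lam).mkQ.comp b = _
    rw [ha, hb]
    ext x; simp

/-- The almost split sequence starting at a noninjective indecomposable. -/
noncomputable def arSeq [Nice R] {U : ModA R} (hU : U.IsIndec) (hn : ¬ InjL U) :
    AlmostSplitSeq R where
  l := U
  m := (las hU).E
  r := quotObj (las hU).E (LinearMap.range (las hU).lam)
  f := (las hU).lam
  g := (LinearMap.range (las hU).lam).mkQ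
  inj := (las hU).inj hn
  surj := Submodule.mkQ_surjective _
  exact := (Submodule.ker_mkQ _).symm
  not_split := fun h => (las hU).not_split
    (splitMono_of_splitEpi ((las hU).inj hn) (Submodule.ker_mkQ _).symm h)
  l_indec := hU
  r_indec := (las hU).coker_indec ((las hU).inj hn)
  right_almost := (las hU).right_almost ((las hU).inj hn)
  left_almost := (las hU).factor

theorem ars_not_splitMono (s : AlmostSplitSeq R) : ¬ SplitMonoMap s.f := by
  rintro ⟨r, hr⟩
  exact s.not_split (split_of_retract s.surj s.exact hr)

theorem ars_comp (s : AlmostSplitSeq R) : s.g.comp s.f = 0 := by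
  ext x
  have : s.f x ∈ LinearMap.ker s.g := s.exact ▸ ⟨x, rfl⟩
  exact this

theorem ars_r_not_proj (s : AlmostSplitSeq R) : ¬ Module.Projective R s.r.M := by
  intro h
  obtain ⟨t, ht⟩ := Module.projective_lifting_property s.g LinearMap.id s.surj
  exact s.not_split ⟨t, ht⟩

theorem ars_lift (s : AlmostSplitSeq R) {Z : ModA R} (h : Z.M →ₗ[R] s.m.M)
    (h0 : s.g.comp h = 0) : ∃ w : Z.M →ₗ[R] s.l.M, s.f.comp w = h := by
  apply factor_inj _ s.inj
  rw [s.exact]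
  rintro _ ⟨x, rfl⟩
  exact LinearMap.congr_fun h0 x

theorem ars_colift (s : AlmostSplitSeq R) {Z : ModA R} (h : s.m.M →ₗ[R] Z.M)
    (h0 : h.comp s.f = 0) : ∃ w : s.r.M →ₗ[R] Z.M, w.comp s.g = h := by
  apply factor_surj _ s.surj
  rw [← s.exact]
  rintro _ ⟨x, rfl⟩
  exact LinearMap.congr_fun h0 x

theorem bij_one_add {X : ModA R} (hX : X.IsIndec) {a b : X.M →ₗ[R] X.M}
    (h : a = LinearMap.id + b) (hb : ¬ Function.Bijective b) : Function.Bijective a := by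
  rcases bij_add_end hX (a := a) (b := -b) (by rw [h]; simp; rfl) with h1 | h1
  · exact h1
  · exfalso
    apply hb
    have : b = (LinearEquiv.neg R (M := X.M)).toLinearMap.comp (-b) := by ext x; simp
    rw [this, LinearMap.coe_comp]
    exact (LinearEquiv.neg R (M := X.M)).bijective.comp h1

theorem ars_l_of_r (s s' : AlmostSplitSeq R) (h : s.r.Iso s'.r) : s.l.Iso s'.l := by
  obtain ⟨e⟩ := h
  have hns : ¬ SplitEpiMap (e.toLinearMap.comp s.g) := by
    rintro ⟨t, ht⟩
    apply s.not_split
    refine ⟨t.comp e.toLinearMap, ?_⟩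
    ext x
    have := LinearMap.congr_fun ht (e x)
    simpa using this
  have hns' : ¬ SplitEpiMap (e.symm.toLinearMap.comp s'.g) := by
    rintro ⟨t, ht⟩
    apply s'.not_split
    refine ⟨t.comp e.symm.toLinearMap, ?_⟩
    ext x
    have := LinearMap.congr_fun ht (e.symm x)
    simpa using this
  obtain ⟨a, ha⟩ := s'.right_almost _ _ hns
  obtain ⟨b, hb⟩ := s.right_almost _ _ hns'
  have ha' : ∀ x, s'.g (a x) = e (s.g x) := fun x => LinearMap.congr_fun ha x
  have hb' : ∀ x, s.g (b x) = e.symm (s'.g x) := fun x => LinearMap.congr_fun hb x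
  have hc : ∀ x, s.g (s.f x) = 0 := fun x => LinearMap.congr_fun (ars_comp s) x
  have hc' : ∀ x, s'.g (s'.f x) = 0 := fun x => LinearMap.congr_fun (ars_comp s') x
  obtain ⟨α, hα⟩ := ars_lift s' (a.comp s.f) (by ext x; simp [ha', hc])
  obtain ⟨β, hβ⟩ := ars_lift s (b.comp s'.f) (by ext x; simp [hb', hc'])
  obtain ⟨w, hw⟩ := ars_lift s (b.comp a - LinearMap.id) (by ext x; simp [hb', ha'])
  have key : β.comp α = LinearMap.id + w.comp s.f := by
    ext x
    apply s.inj
    have h1 : s.f (β (α x)) = b (s'.f (α x)) := LinearMap.congr_fun hβ _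
    have h2 : s'.f (α x) = a (s.f x) := LinearMap.congr_fun hα _
    have h3 : s.f (w (s.f x)) = b (a (s.f x)) - s.f x := LinearMap.congr_fun hw _
    simp [h1, h2, h3]
  have hbij := bij_one_add s.l_indec key (fun hb => by
    obtain ⟨r, hr, _⟩ := exists_inv _ hb
    exact ars_not_splitMono s ⟨r.comp w, by rw [LinearMap.comp_assoc, hr]⟩)
  exact iso_of_bij α (bij_of_comp_bij s.l_indec s'.l_indec hbij).1

theorem ars_r_of_l (s s' : AlmostSplitSeq R) (h : s.l.Iso s'.l) : s.r.Iso s'.r := by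
  obtain ⟨e⟩ := h
  have hns : ¬ SplitMonoMap (s'.f.comp e.toLinearMap) := by
    rintro ⟨t, ht⟩
    apply ars_not_splitMono s'
    refine ⟨e.toLinearMap.comp t, ?_⟩
    ext x
    have := LinearMap.congr_fun ht (e.symm x)
    simp at this
    simp [this]
  have hns' : ¬ SplitMonoMap (s.f.comp e.symm.toLinearMap) := by
    rintro ⟨t, ht⟩
    apply ars_not_splitMono s
    refine ⟨e.symm.toLinearMap.comp t, ?_⟩
    ext x
    have := LinearMap.congr_fun ht (e x)
    simp at this
    simp [this]
  obtain ⟨a, ha⟩ := s.left_almost _ _ hns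
  obtain ⟨b, hb⟩ := s'.left_almost _ _ hns'
  have ha' : ∀ x, a (s.f x) = s'.f (e x) := fun x => LinearMap.congr_fun ha x
  have hb' : ∀ x, b (s'.f x) = s.f (e.symm x) := fun x => LinearMap.congr_fun hb x
  have hc : ∀ x, s.g (s.f x) = 0 := fun x => LinearMap.congr_fun (ars_comp s) x
  have hc' : ∀ x, s'.g (s'.f x) = 0 := fun x => LinearMap.congr_fun (ars_comp s') x
  obtain ⟨α, hα⟩ := ars_colift s (s'.g.comp a) (by ext x; simp [ha', hc'])
  obtain ⟨β, hβ⟩ := ars_colift s' (s.g.comp b) (by ext x; simp [hb', hc])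
  obtain ⟨w, hw⟩ := ars_colift s (b.comp a - LinearMap.id) (by ext x; simp [hb', ha'])
  have key : β.comp α = LinearMap.id + s.g.comp w := by
    refine eq_of_comp_surj s.surj ?_
    ext x
    have h1 : α (s.g x) = s'.g (a x) := LinearMap.congr_fun hα _
    have h2 : β (s'.g (a x)) = s.g (b (a x)) := LinearMap.congr_fun hβ _
    have h3 : w (s.g x) = b (a x) - x := LinearMap.congr_fun hw _
    simp [h1, h2, h3]
  have hbij := bij_one_add s.r_indec key (fun hb => by
    obtain ⟨r, _, hr⟩ := exists_inv _ hb
    exact s.not_split ⟨w.comp r, by rw [← LinearMap.comp_assoc, hr]⟩)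
  exact iso_of_bij α (bij_of_comp_bij s.r_indec s'.r_indec hbij).1

theorem ars_not_injL (s : AlmostSplitSeq R) {U : ModA R} (h : s.l.Iso U) : ¬ InjL U := by
  intro hi
  obtain ⟨e⟩ := h
  obtain ⟨r, hr⟩ := hi s.m (s.f.comp e.symm.toLinearMap) (by
    rw [LinearMap.coe_comp]; exact s.inj.comp e.symm.injective)
  apply ars_not_splitMono s
  refine ⟨e.symm.toLinearMap.comp r, ?_⟩
  ext x
  have := LinearMap.congr_fun hr (e x)
  simp at this
  simp [this]

theorem tau_l_iso {U U' C C' : ModA R} (h : IsTauOf U C) (h' : IsTauOf U' C') (hC : C.Iso C') :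
    U.Iso U' := by
  obtain ⟨s, h1, h2⟩ := h
  obtain ⟨s', h1', h2'⟩ := h'
  exact iso_trans (iso_symm h1) (iso_trans (ars_l_of_r s s'
    (iso_trans h2 (iso_trans hC (iso_symm h2')))) h1')

theorem tau_r_iso {U U' C C' : ModA R} (h : IsTauOf U C) (h' : IsTauOf U' C') (hC : U.Iso U') :
    C.Iso C' := by
  obtain ⟨s, h1, h2⟩ := h
  obtain ⟨s', h1', h2'⟩ := h'
  exact iso_trans (iso_symm h2) (iso_trans (ars_r_of_l s s'
    (iso_trans h1 (iso_trans hC (iso_symm h1')))) h2')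

theorem tau_iso {U U' C C' : ModA R} (h : IsTauOf U C) (hU : U.Iso U') (hC : C.Iso C') :
    IsTauOf U' C' := by
  obtain ⟨s, h1, h2⟩ := h
  exact ⟨s, iso_trans h1 hU, iso_trans h2 hC⟩

theorem tau_indec_r {U C : ModA R} (h : IsTauOf U C) : C.IsIndec := by
  obtain ⟨s, h1, h2⟩ := h
  exact indec_of_iso h2 s.r_indec

theorem tau_indec_l {U C : ModA R} (h : IsTauOf U C) : U.IsIndec := by
  obtain ⟨s, h1, h2⟩ := h
  exact indec_of_iso h1 s.l_indec

theorem exists_tauInv [Nice R] {U : ModA R} (hU : U.IsIndec) (hn : ¬ InjL U) :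
    ∃ C, IsTauOf U C := ⟨(arSeq hU hn).r, arSeq hU hn, iso_refl _, iso_refl _⟩

/-! Irreducible maps -/

theorem comp_symm_cancel {X Y Z : ModA R} (e : X.M ≃ₗ[R] Y.M) (f : Y.M →ₗ[R] Z.M) :
    (f.comp e.toLinearMap).comp e.symm.toLinearMap = f := by ext x; simp

theorem irred_iso_right {X Y Z : ModA R} {f : X.M →ₗ[R] Y.M} (hf : IsIrred f)
    (e : Y.M ≃ₗ[R] Z.M) : IsIrred (X := X) (Y := Z) (e.toLinearMap.comp f) := by
  obtain ⟨h1, h2, h3⟩ := hf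
  refine ⟨?_, ?_, ?_⟩
  · rintro ⟨r, hr⟩
    exact h1 ⟨r.comp e.toLinearMap, hr⟩
  · rintro ⟨s, hs⟩
    refine h2 ⟨s.comp e.toLinearMap, ?_⟩
    ext y
    have := LinearMap.congr_fun hs (e y)
    simpa using this
  · intro W g h hgh
    rcases h3 W g (e.symm.toLinearMap.comp h) (by
      rw [LinearMap.comp_assoc, hgh]; ext x; simp) with h4 | ⟨s, hs⟩
    · exact Or.inl h4
    · right
      refine ⟨s.comp e.symm.toLinearMap, ?_⟩
      ext z
      have := LinearMap.congr_fun hs (e.symm z)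
      simpa using this

theorem irred_iso_left {X Y Z : ModA R} {f : Y.M →ₗ[R] Z.M} (hf : IsIrred f)
    (e : X.M ≃ₗ[R] Y.M) : IsIrred (X := X) (Y := Z) (f.comp e.toLinearMap) := by
  obtain ⟨h1, h2, h3⟩ := hf
  refine ⟨?_, ?_, ?_⟩
  · rintro ⟨r, hr⟩
    refine h1 ⟨e.toLinearMap.comp r, ?_⟩
    ext y
    have := LinearMap.congr_fun hr (e.symm y)
    simp at this
    simp [this]
  · rintro ⟨s, hs⟩
    exact h2 ⟨e.toLinearMap.comp s, hs⟩
  · intro W g h hgh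
    rcases h3 W (g.comp e.symm.toLinearMap) h (by
      rw [← LinearMap.comp_assoc, hgh]; ext x; simp) with ⟨r, hr⟩ | h4
    · left
      refine ⟨e.symm.toLinearMap.comp r, ?_⟩
      ext x
      have := LinearMap.congr_fun hr (e x)
      simp at this
      simp [this]
    · exact Or.inr h4

/-- arrows of the AR quiver -/
def Arr (U W : ModA R) : Prop := U.IsIndec ∧ W.IsIndec ∧ ∃ f : U.M →ₗ[R] W.M, IsIrred f

theorem arr_iso {U U' W W' : ModA R} (h : Arr U W) (hU : U.Iso U') (hW : W.Iso W') : Arr U' W' := by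
  obtain ⟨h1, h2, f, hf⟩ := h
  obtain ⟨e⟩ := hU
  obtain ⟨e'⟩ := hW
  exact ⟨indec_of_iso ⟨e⟩ h1, indec_of_iso ⟨e'⟩ h2, _,
    irred_iso_right (irred_iso_left hf e.symm) e'⟩

theorem irred_not_bij {X Y : ModA R} {f : X.M →ₗ[R] Y.M} (hf : IsIrred f) :
    ¬ Function.Bijective f := fun h => hf.1 (splitMono_of_bij h)

theorem irred_ne_zero {X Y : ModA R} (hX : X.IsIndec) (hY : Y.IsIndec) {f : X.M →ₗ[R] Y.M}
    (hf : IsIrred f) : f ≠ 0 := by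
  rintro rfl
  rcases hf.2.2 ⟨PUnit, IsFiniteLength.of_subsingleton⟩ 0 0 (by simp) with ⟨r, hr⟩ | ⟨r, hr⟩
  · exact id_ne_zero hX (by rw [← hr]; simp)
  · exact id_ne_zero hY (by rw [← hr]; simp)

theorem Arr.nn {U W : ModA R} (h : Arr U W) : NN U W := by
  obtain ⟨h1, h2, f, hf⟩ := h
  exact ⟨h1, h2, f, irred_ne_zero h1 h2 hf, irred_not_bij hf⟩

theorem Arr.le {U W : ModA R} (h : Arr U W) : Le U W :=
  Relation.ReflTransGen.single (nn_hn h.nn)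

theorem Las.irred_factor {U Y : ModA R} (L : Las U) {f : U.M →ₗ[R] Y.M} (hf : IsIrred f) :
    ∃ (r : L.E.M →ₗ[R] Y.M) (s : Y.M →ₗ[R] L.E.M), r.comp L.lam = f ∧ r.comp s = LinearMap.id := by
  obtain ⟨r, hr⟩ := L.factor Y f hf.1
  rcases hf.2.2 L.E L.lam r hr with h | ⟨s, hs⟩
  · exact absurd h L.not_split
  · exact ⟨r, s, hr, hs⟩

theorem Las.irred_comp {U Z : ModA R} (hU : U.IsIndec) (hZ : Z.IsIndec) (L : Las U)
    {r : L.E.M →ₗ[R] Z.M} {s : Z.M →ₗ[R] L.E.M} (hrs : r.comp s = LinearMap.id) :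
    IsIrred (r.comp L.lam) := by
  have h1 : ¬ SplitMonoMap (r.comp L.lam) := by
    rintro ⟨t, ht⟩
    exact L.not_split ⟨t.comp r, ht⟩
  refine ⟨h1, ?_, ?_⟩
  · intro h2
    exact h1 (splitMono_of_bij ((splitEpi_iff hU hZ).1 h2))
  · intro W g h hgh
    by_cases hg : SplitMonoMap g
    · exact Or.inl hg
    right
    obtain ⟨g', rfl⟩ := L.factor W g hg
    have hφ := L.minimal (LinearMap.id + s.comp (h.comp g' - r)) (by
      have h2 : (h.comp g' - r).comp L.lam = 0 := by
        rw [LinearMap.sub_comp, LinearMap.comp_assoc, hgh, sub_self]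
      rw [LinearMap.add_comp, LinearMap.comp_assoc, h2, LinearMap.comp_zero, add_zero,
        LinearMap.id_comp])
    obtain ⟨v, _, hv⟩ := exists_inv _ hφ
    have h3 : r.comp (LinearMap.id + s.comp (h.comp g' - r)) = h.comp g' := by
      rw [LinearMap.comp_add, ← LinearMap.comp_assoc, hrs, LinearMap.id_comp, LinearMap.comp_id]
      abel
    refine ⟨g'.comp (v.comp s), ?_⟩
    rw [← LinearMap.comp_assoc, ← h3, LinearMap.comp_assoc, ← LinearMap.comp_assoc s, hv,
      LinearMap.id_comp, hrs]

theorem Las.comp_irred {U X : ModA R} (hX : X.IsIndec) (s : AlmostSplitSeq R) (hs : s.l = U)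
    {r : s.m.M →ₗ[R] X.M} {t : X.M →ₗ[R] s.m.M} (hrt : r.comp t = LinearMap.id)
    (hr : ¬ Function.Bijective (r.comp s.f)) :
    IsIrred (s.g.comp t) := by
  have h1 : ¬ SplitEpiMap (s.g.comp t) := by
    rintro ⟨σ, hσ⟩
    exact s.not_split ⟨t.comp σ, hσ⟩
  refine ⟨fun h2 => h1 (splitEpi_of_bij ((splitMono_iff hX s.r_indec).1 h2)), h1, ?_⟩
  intro W g h hgh
  by_cases hh : SplitEpiMap h
  · exact Or.inr hh
  left
  obtain ⟨h', rfl⟩ := s.right_almost W h hh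
  obtain ⟨w, hw⟩ := ars_lift s (h'.comp g - t) (by
    rw [LinearMap.comp_sub, ← LinearMap.comp_assoc, hgh, sub_self])
  have key : (r.comp h').comp g = LinearMap.id + (r.comp s.f).comp w := by
    have h2 : h'.comp g = t + s.f.comp w := by rw [hw]; abel
    rw [LinearMap.comp_assoc, h2, LinearMap.comp_add, hrt]
    rfl
  have hb := bij_one_add hX key (fun hb => hr (bij_of_comp_bij hX s.l_indec hb).2)
  obtain ⟨v, hv, _⟩ := exists_inv _ hb
  exact ⟨v.comp (r.comp h'), by rw [LinearMap.comp_assoc, hv]⟩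

theorem ars_irred_factor (s : AlmostSplitSeq R) {Y : ModA R} {f : s.l.M →ₗ[R] Y.M}
    (hf : IsIrred f) : ∃ (r : s.m.M →ₗ[R] Y.M) (t : Y.M →ₗ[R] s.m.M), r.comp s.f = f ∧
      r.comp t = LinearMap.id := by
  obtain ⟨r, hr⟩ := s.left_almost Y f hf.1
  rcases hf.2.2 s.m s.f r hr with h | ⟨t, ht⟩
  · exact absurd h (ars_not_splitMono s)
  · exact ⟨r, t, hr, ht⟩

theorem arr_tau {U W C : ModA R} (h : Arr U W) (hC : IsTauOf U C) : Arr W C := by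
  obtain ⟨s, h1, h2⟩ := hC
  have h' := arr_iso h (iso_symm h1) (iso_refl W)
  obtain ⟨hU, hW, f, hf⟩ := h'
  obtain ⟨r, t, hr, hrt⟩ := ars_irred_factor s hf
  have := Las.comp_irred hW s rfl hrt (by rw [hr]; exact irred_not_bij hf)
  exact arr_iso ⟨hW, s.r_indec, _, this⟩ (iso_refl W) h2

theorem arr_tau_tau {U W C D : ModA R} (h : Arr U W) (hC : IsTauOf U C) (hD : IsTauOf W D) :
    Arr C D := arr_tau (arr_tau h hC) hD

theorem hn_of_arr_tau {U Y C : ModA R} (h : Arr Y C) (hC : IsTauOf U C) : HN U Y := by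
  obtain ⟨s, h1, h2⟩ := hC
  obtain ⟨hY, hC, y, hy⟩ := arr_iso h (iso_refl Y) (iso_symm h2)
  obtain ⟨y', hy'⟩ := s.right_almost Y y hy.2.1
  rcases hy.2.2 s.m y' s.g hy' with ⟨t, ht⟩ | h3
  · have hne : t.comp s.f ≠ 0 := by
      intro h0
      obtain ⟨q, hq⟩ := ars_colift s t h0
      apply hy.1
      refine ⟨q, ?_⟩
      rw [← hy', ← LinearMap.comp_assoc, hq, ht]
    have hl : HN s.l Y := ⟨s.l_indec, hY, _, hne⟩
    obtain ⟨e⟩ := h1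
    refine ⟨indec_of_iso ⟨e⟩ s.l_indec, hY, (t.comp s.f).comp e.symm.toLinearMap, ?_⟩
    intro h0
    apply hne
    ext x
    have := LinearMap.congr_fun h0 (e x)
    simpa using this
  · exact absurd h3 s.not_split

theorem summand_iso {E Z : ModA R} (hZ : Z.IsIndec) {r : E.M →ₗ[R] Z.M} {s : Z.M →ₗ[R] E.M}
    (hrs : r.comp s = LinearMap.id) (d : Decomp E) : ∃ j, Z.Iso (d.Z j) := by
  have h : (∑ j, (r.comp (d.i j)).comp ((d.p j).comp s)) = (LinearMap.id : Z.M →ₗ[R] Z.M) := by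
    rw [← hrs]
    conv_rhs => rw [d.comp_sum r]
    ext x
    simp
  obtain ⟨j, _, hj⟩ := bij_sum hZ Finset.univ _ (by rw [h]; exact Function.bijective_id)
  exact ⟨j, iso_of_bij _ (bij_of_comp_bij hZ (d.indec j) hj).1⟩

theorem finUp_arr [Nice R] (U : ModA R) : FinUp (fun W => Arr U W) := by
  by_cases hU : U.IsIndec
  · let L := las hU
    refine (finUp_fintype (fun j => finUp_iso ((dec L.E).Z j))).mono ?_
    rintro W hW ⟨_, _, f, hf⟩
    obtain ⟨r, s, _, hrs⟩ := L.irred_factor hf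
    exact summand_iso hW hrs (dec L.E)
  · exact ⟨[], fun X _ h => absurd h.1 hU⟩

theorem las_step [Nice R] {U Y : ModA R} (hU : U.IsIndec) {f : U.M →ₗ[R] Y.M} (hf : f ≠ 0)
    (hns : ¬ SplitMonoMap f) : ∃ (W : ModA R) (a : U.M →ₗ[R] W.M) (b : W.M →ₗ[R] Y.M),
      W.IsIndec ∧ IsIrred a ∧ b.comp a ≠ 0 := by
  let L := las hU
  obtain ⟨f', rfl⟩ := L.factor Y f hns
  have : ∃ j, (f'.comp ((dec L.E).i j)).comp (((dec L.E).p j).comp L.lam) ≠ 0 := by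
    by_contra hcon
    push Not at hcon
    apply hf
    rw [(dec L.E).comp_sum f']
    ext x
    simp only [LinearMap.comp_apply, LinearMap.sum_apply, LinearMap.zero_apply]
    apply Finset.sum_eq_zero
    intro j _
    exact LinearMap.congr_fun (hcon j) x
  obtain ⟨j, hj⟩ := this
  exact ⟨_, _, _, (dec L.E).indec j, L.irred_comp hU ((dec L.E).indec j) ((dec L.E).pi j), hj⟩

theorem radPow_factor [Nice R] {U Y : ModA R} (hU : U.IsIndec) {m : ℕ} {f : U.M →ₗ[R] Y.M}
    (hf : f ∈ radPow R (m + 1) U Y) :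
    ∃ f' ∈ radPow R m (las hU).E Y, f'.comp (las hU).lam = f := by
  unfold radPow at hf
  induction hf using AddSubgroup.closure_induction with
  | mem f hf =>
    obtain ⟨W, a, b, ha, hb, rfl⟩ := hf
    obtain ⟨a', rfl⟩ := (las hU).factor W a (not_splitMono_of_inRad hU ha)
    exact ⟨b.comp a', radPow_comp_right hb a', rfl⟩
  | zero => exact ⟨0, zero_mem _, by simp⟩
  | add f f' _ _ h1 h2 =>
    obtain ⟨g, hg, rfl⟩ := h1
    obtain ⟨g', hg', rfl⟩ := h2
    exact ⟨g + g', add_mem hg hg', by rw [LinearMap.add_comp]⟩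
  | neg f _ h1 =>
    obtain ⟨g, hg, rfl⟩ := h1
    exact ⟨-g, neg_mem hg, by rw [LinearMap.neg_comp]⟩

theorem radInf_factor [Nice R] {U Y : ModA R} (hU : U.IsIndec) {f : U.M →ₗ[R] Y.M}
    (hf : InRadInf f) :
    ∃ f' : (las hU).E.M →ₗ[R] Y.M, InRadInf f' ∧ f'.comp (las hU).lam = f := by
  obtain ⟨N, hN⟩ := Nice.stab (las hU).E Y
  obtain ⟨f', hf', h⟩ := radPow_factor hU (hf (N + 1))
  refine ⟨f', fun n => ?_, h⟩
  rcases le_total N n with h1 | h1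
  · rw [hN n h1]; exact hf'
  · exact radPow_anti h1 _ _ hf'

theorem las_step_inf [Nice R] {U Y : ModA R} (hU : U.IsIndec) {f : U.M →ₗ[R] Y.M} (hf : f ≠ 0)
    (hi : InRadInf f) : ∃ (W : ModA R) (a : U.M →ₗ[R] W.M) (b : W.M →ₗ[R] Y.M),
      W.IsIndec ∧ IsIrred a ∧ InRadInf b ∧ b.comp a ≠ 0 := by
  let L := las hU
  obtain ⟨f', hf', rfl⟩ := radInf_factor hU hi
  have : ∃ j, (f'.comp ((dec L.E).i j)).comp (((dec L.E).p j).comp L.lam) ≠ 0 := by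
    by_contra hcon
    push Not at hcon
    apply hf
    rw [(dec L.E).comp_sum f']
    ext x
    simp only [LinearMap.comp_apply, LinearMap.sum_apply, LinearMap.zero_apply]
    apply Finset.sum_eq_zero
    intro j _
    exact LinearMap.congr_fun (hcon j) x
  obtain ⟨j, hj⟩ := this
  exact ⟨_, _, _, (dec L.E).indec j, L.irred_comp hU ((dec L.E).indec j) ((dec L.E).pi j),
    inRadInf_comp_right hf' _, hj⟩

end CF


namespace CF

variable {R : Type u} [Ring R]

theorem Decomp.exists_mid {E Y T : ModA R} (d : Decomp E) (f : E.M →ₗ[R] Y.M)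
    (g : T.M →ₗ[R] E.M) (h : f.comp g ≠ 0) :
    ∃ j, (f.comp (d.i j)).comp ((d.p j).comp g) ≠ 0 := by
  by_contra hcon
  push Not at hcon
  apply h
  rw [d.comp_sum f]
  ext x
  simp only [LinearMap.comp_apply, LinearMap.sum_apply, LinearMap.zero_apply]
  apply Finset.sum_eq_zero
  intro j _
  exact LinearMap.congr_fun (hcon j) x

/-- one step, keeping a composite nonzero -/
theorem las_step_inf' [Nice R] {T U Y : ModA R} (hU : U.IsIndec) {a : T.M →ₗ[R] U.M}
    {f : U.M →ₗ[R] Y.M} (hf : f.comp a ≠ 0)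
    (hi : InRadInf f) : ∃ (W : ModA R) (c : U.M →ₗ[R] W.M) (b : W.M →ₗ[R] Y.M),
      W.IsIndec ∧ IsIrred c ∧ InRadInf b ∧ b.comp (c.comp a) ≠ 0 := by
  let L := las hU
  obtain ⟨f', hf', rfl⟩ := radInf_factor hU hi
  obtain ⟨j, hj⟩ := (dec L.E).exists_mid f' (L.lam.comp a) hf
  exact ⟨_, _, _, (dec L.E).indec j, L.irred_comp hU ((dec L.E).indec j) ((dec L.E).pi j),
    inRadInf_comp_right hf' _, hj⟩

theorem las_step' [Nice R] {T U Y : ModA R} (hU : U.IsIndec) {a : T.M →ₗ[R] U.M}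
    {f : U.M →ₗ[R] Y.M} (hf : f.comp a ≠ 0)
    (hns : ¬ SplitMonoMap f) : ∃ (W : ModA R) (c : U.M →ₗ[R] W.M) (b : W.M →ₗ[R] Y.M),
      W.IsIndec ∧ IsIrred c ∧ b.comp (c.comp a) ≠ 0 := by
  let L := las hU
  obtain ⟨f', rfl⟩ := L.factor Y f hns
  obtain ⟨j, hj⟩ := (dec L.E).exists_mid f' (L.lam.comp a) hf
  exact ⟨_, _, _, (dec L.E).indec j, L.irred_comp hU ((dec L.E).indec j) ((dec L.E).pi j), hj⟩

/-- only finitely many sources of nonzero maps to `Y` -/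
def LF (Y : ModA R) : Prop := FinUp (fun U => HN U Y)

def V (X : ModA R) : Prop := X.IsIndec ∧ ∀ Y, Le Y X → LF Y

theorem V.of_le {X Y : ModA R} (h : V X) (hY : Le Y X) : V Y :=
  ⟨hY.indec_left h.1, fun _ hZ => h.2 _ (hZ.trans hY)⟩

theorem V.lf {X : ModA R} (h : V X) : LF X := h.2 X (Le.refl X)

theorem finUp_not_radPow [Nice R] (n : ℕ) : ∀ X : ModA R,
    FinUp (fun U => ∃ f : X.M →ₗ[R] U.M, f ∉ radPow R n X U) := by
  induction n with
  | zero => exact fun X => ⟨[], fun U _ ⟨f, hf⟩ => absurd (by simp [radPow]) hf⟩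
  | succ n ih =>
    intro X
    refine FinUp.mono (finUp_fintype (ι := (dec X).ι) (Q := fun j U => U.Iso ((dec X).Z j) ∨
      ∃ f : (las ((dec X).indec j)).E.M →ₗ[R] U.M, f ∉ radPow R n _ U) ?_) ?_
    · exact fun j => (finUp_iso _).or (ih _)
    · rintro U hU ⟨f, hf⟩
      have : ∃ j, f.comp ((dec X).i j) ∉ radPow R (n + 1) _ U := by
        by_contra hcon
        push Not at hcon
        apply hf
        rw [(dec X).comp_sum f]
        exact sum_mem fun j _ => radPow_comp_right (hcon j) _
      obtain ⟨j, hj⟩ := this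
      refine ⟨j, ?_⟩
      by_cases hs : SplitMonoMap (f.comp ((dec X).i j))
      · left
        exact iso_symm (iso_of_bij _ ((splitMono_iff ((dec X).indec j) hU).1 hs))
      · right
        obtain ⟨f', hf'⟩ := (las ((dec X).indec j)).factor U _ hs
        refine ⟨f', fun h => hj ?_⟩
        rw [← hf']
        exact radPow_comp_inRad h (inRad_of_not_splitMono ((dec X).indec j)
          (las ((dec X).indec j)).not_split)

/-- the regular module -/
abbrev RO (R : Type u) [Ring R] [Nice R] : ModA R := ⟨R, Nice.finLen⟩

theorem exists_from_RO [Nice R] {U Y : ModA R} {g : U.M →ₗ[R] Y.M} (hg : g ≠ 0) :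
    ∃ a : (RO R).M →ₗ[R] U.M, g.comp a ≠ 0 := by
  obtain ⟨x, hx⟩ : ∃ x, g x ≠ 0 := by
    by_contra hcon
    push Not at hcon
    exact hg (LinearMap.ext hcon)
  refine ⟨LinearMap.toSpanSingleton R U.M x, fun h => hx ?_⟩
  have := LinearMap.congr_fun h (1 : R)
  simpa using this

theorem exists_radInf_of_not_lf [Nice R] {Y : ModA R} (h : ¬ LF Y) :
    ∃ (j : (dec (RO R)).ι) (f : ((dec (RO R)).Z j).M →ₗ[R] Y.M), f ≠ 0 ∧ InRadInf f := by
  have h1 : ∀ n, radPow R n (RO R) Y ≠ ⊥ := by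
    intro n hn
    apply h
    refine (finUp_not_radPow n (RO R)).mono ?_
    rintro U hU ⟨_, _, g, hg⟩
    obtain ⟨a, ha⟩ := exists_from_RO hg
    refine ⟨a, fun h => ha ?_⟩
    have := radPow_comp_left h g
    rw [hn] at this
    exact AddSubgroup.mem_bot.1 this
  obtain ⟨N, hN⟩ := Nice.stab (RO R) Y
  obtain ⟨⟨f, hf⟩, hf0'⟩ := AddSubgroup.ne_bot_iff_exists_ne_zero.1 (h1 N)
  have hf0 : f ≠ 0 := fun h => hf0' (Subtype.ext h)
  have hf' : InRadInf (X := RO R) f := by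
    intro n
    rcases le_total N n with h1 | h1
    · rw [hN n h1]; exact hf
    · exact radPow_anti h1 _ _ hf
  obtain ⟨j, hj⟩ := (dec (RO R)).exists_comp_ne hf0
  exact ⟨j, _, hj, inRadInf_comp_right hf' _⟩

theorem exists_boundary [Nice R] {P : ModA R → Prop} (hP : FinUp P) {Q Y : ModA R}
    (hQ : Q.IsIndec) (pQ : P Q) {f : Q.M →ₗ[R] Y.M} (hf : f ≠ 0) (hi : InRadInf f) :
    ∃ (X Z : ModA R) (g : Z.M →ₗ[R] Y.M), P X ∧ Arr X Z ∧ ¬ P Z ∧ g ≠ 0 ∧ InRadInf g := by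
  by_contra hcon
  push Not at hcon
  have key : ∀ n, ∃ (X : ModA R) (a : Q.M →ₗ[R] X.M) (b : X.M →ₗ[R] Y.M), Chain P (n + 1) Q X a ∧
      X.IsIndec ∧ P X ∧ InRadInf b ∧ b.comp a ≠ 0 := by
    intro n
    induction n with
    | zero =>
      obtain ⟨W, c, b, hW, hc, hb, h0⟩ := las_step_inf hQ hf hi
      have hPW : P W := by
        by_contra hPW
        exact hcon Q W b pQ ⟨hQ, hW, c, hc⟩ hPW (by rintro rfl; simp at h0) hb
      exact ⟨W, c, b, Chain.single c hQ hW pQ hPW (irred_not_bij hc), hW, hPW, hb, h0⟩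
    | succ n ih =>
      obtain ⟨X, a, b, hch, hX, hPX, hb, h0⟩ := ih
      obtain ⟨W, c, b', hW, hc, hb', h0'⟩ := las_step_inf' hX h0 hb
      have hPW : P W := by
        by_contra hPW
        exact hcon X W b' hPX ⟨hX, hW, c, hc⟩ hPW (by rintro rfl; simp at h0') hb'
      exact ⟨W, _, b', hch.snoc hW hPW c (irred_not_bij hc), hW, hPW, hb', h0'⟩
  obtain ⟨N, hN⟩ := harada_sai hP
  obtain ⟨X, a, b, hch, -, -, -, h0⟩ := key N
  exact h0 (by rw [hN _ _ _ _ (by omega) hch]; simp)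

theorem V_infinite [Nice R] (hcf : CycFin R) (hinf : ¬ FinUp (fun _ : ModA R => True)) :
    ¬ FinUp (V (R := R)) := by
  intro hV
  have ⟨Y0, hY0, hY0'⟩ : ∃ Y : ModA R, Y.IsIndec ∧ ¬ LF Y := by
    by_contra hcon
    push Not at hcon
    exact hinf (hV.mono fun X hX _ => ⟨hX, fun Y hY => hcon Y (hY.indec_left hX)⟩)
  let B : ModA R → Prop := fun Z => Z.IsIndec ∧ ¬ V Z ∧
    ((∃ j, Z.Iso ((dec (RO R)).Z j)) ∨ ∃ X, X.IsIndec ∧ V X ∧ Arr X Z)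
  have hB : FinUp B := by
    refine FinUp.mono (FinUp.or (finUp_fintype (ι := (dec (RO R)).ι)
      (fun j => finUp_iso ((dec (RO R)).Z j)))
      (FinUp.bind hV (fun Y _ _ => finUp_arr Y) ?_)) (fun Z _ h => h.2.2)
    exact fun X Y Z e h => arr_iso h e (iso_refl Z)
  have h1 : ∀ Y : ModA R, Y.IsIndec → ¬ LF Y → ∃ (Z : ModA R) (f : Z.M →ₗ[R] Y.M), B Z ∧ f ≠ 0 ∧
      InRadInf f := by
    intro Y hY hn
    obtain ⟨j, f, hf, hi⟩ := exists_radInf_of_not_lf hn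
    by_cases hVj : V ((dec (RO R)).Z j)
    · obtain ⟨X, Z, g, hX, hXZ, hZ, hg, hgi⟩ := exists_boundary hV ((dec (RO R)).indec j) hVj hf hi
      exact ⟨Z, g, ⟨hXZ.2.1, hZ, Or.inr ⟨X, hXZ.1, hX, hXZ⟩⟩, hg, hgi⟩
    · exact ⟨_, f, ⟨(dec (RO R)).indec j, hVj, Or.inl ⟨j, iso_refl _⟩⟩, hf, hi⟩
  let Lt : ModA R → ModA R → Prop := fun Z' Z => ∃ (Y : ModA R) (f : Z'.M →ₗ[R] Y.M),
    Y.IsIndec ∧ f ≠ 0 ∧ InRadInf f ∧ Le Y Z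
  have h2 : ∀ Z : {Z // B Z}, ∃ Z' : {Z // B Z}, Lt Z'.1 Z.1 := by
    rintro ⟨Z, hZ⟩
    have : ∃ Y, Le Y Z ∧ ¬ LF Y := by
      by_contra hcon
      push Not at hcon
      exact hZ.2.1 ⟨hZ.1, hcon⟩
    obtain ⟨Y, hYZ, hY⟩ := this
    obtain ⟨Z', f, hZ', hf, hi⟩ := h1 Y (hYZ.indec_left hZ.1) hY
    exact ⟨⟨Z', hZ'⟩, Y, f, hYZ.indec_left hZ.1, hf, hi, hYZ⟩
  choose nx hnx using h2
  obtain ⟨Z0, f0, hZ0, -, -⟩ := h1 Y0 hY0 hY0'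
  let z : ℕ → {Z // B Z} := fun n => nx^[n] ⟨Z0, hZ0⟩
  have hz : ∀ n, Lt (z (n + 1)).1 (z n).1 := by
    intro n
    have : z (n + 1) = nx (z n) := Function.iterate_succ_apply' nx n _
    rw [this]
    exact hnx _
  have hlt : ∀ i k, Lt (z (i + k + 1)).1 (z i).1 := by
    intro i k
    induction k with
    | zero => exact hz i
    | succ k ih =>
      obtain ⟨Y, f, hY, hf, hi, hle⟩ := hz (i + k + 1)
      obtain ⟨Y', f', hY', hf', hi', hle'⟩ := ih
      exact ⟨Y, f, hY, hf, hi, hle.trans ((le_of_hom (z (i + k + 1)).2.1 hY' hf').trans hle')⟩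
  obtain ⟨i, j, hij, e⟩ := hB.pigeon (fun n => (z n).1) (fun n => (z n).2.1) (fun n => (z n).2)
  obtain ⟨k, rfl⟩ : ∃ k, j = i + k + 1 := ⟨j - i - 1, by omega⟩
  obtain ⟨Y, f, hY, hf, hi, hle⟩ := hlt i k
  exact hcf.irrefl (z (i + k + 1)).2.1 hf hi hY (hle.trans (le_of_iso (z i).2.1 e))

end CF


namespace CF

variable {R : Type u} [Ring R]

def Path : ℕ → ModA R → ModA R → Prop
  | 0, U, X => U.IsIndec ∧ U.Iso X
  | n + 1, U, X => ∃ W, Arr U W ∧ Path n W X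

theorem Path.indec {n : ℕ} {U X : ModA R} (h : Path n U X) : U.IsIndec := by
  cases n with
  | zero => exact h.1
  | succ n => obtain ⟨W, h, -⟩ := h; exact h.1

theorem Path.iso_left {n : ℕ} {U U' X : ModA R} (h : Path n U X) (e : U.Iso U') :
    Path n U' X := by
  cases n with
  | zero => exact ⟨indec_of_iso e h.1, iso_trans (iso_symm e) h.2⟩
  | succ n => obtain ⟨W, h, h'⟩ := h; exact ⟨W, arr_iso h e (iso_refl W), h'⟩

theorem Path.trans {m : ℕ} : ∀ {n : ℕ} {U W X : ModA R}, Path m U W → Path n W X →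
    Path (m + n) U X := by
  induction m with
  | zero =>
    intro n U W X h h'
    rw [Nat.zero_add]
    exact h'.iso_left (iso_symm h.2)
  | succ m ih =>
    rintro n U W X ⟨Z, h, h'⟩ h''
    rw [show m + 1 + n = (m + n) + 1 by omega]
    exact ⟨Z, h, ih h' h''⟩

theorem Path.le {n : ℕ} : ∀ {U X : ModA R}, Path n U X → Le U X := by
  induction n with
  | zero => intro U X h; exact le_of_iso h.1 h.2
  | succ n ih => rintro U X ⟨W, h, h'⟩; exact h.le.trans (ih h')

theorem hn_of_iso_left {U U' Y : ModA R} (e : U.Iso U') (h : HN U Y) : HN U' Y := by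
  obtain ⟨hU, hY, f, hf⟩ := h
  obtain ⟨e'⟩ := e
  refine ⟨indec_of_iso ⟨e'⟩ hU, hY, f.comp e'.symm.toLinearMap, fun h => hf ?_⟩
  ext x
  have := LinearMap.congr_fun h (e' x)
  simpa using this

theorem exists_path [Nice R] {U Y : ModA R} (hU : U.IsIndec) (hY : Y.IsIndec) (hl : LF Y)
    {f : U.M →ₗ[R] Y.M} (hf : f ≠ 0) : ∃ n, Path n U Y := by
  by_contra hcon
  have hns : ∀ (X : ModA R) (b : X.M →ₗ[R] Y.M), X.IsIndec → (∀ m, Path m X Y → ∃ k, Path k U Y) →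
      ¬ SplitMonoMap b := by
    intro X b hX hp hs
    exact hcon (hp 0 ⟨hX, iso_of_bij b ((splitMono_iff hX hY).1 hs)⟩)
  have key : ∀ n, ∃ (X : ModA R) (a : U.M →ₗ[R] X.M) (b : X.M →ₗ[R] Y.M),
      Chain (fun Z => HN Z Y) (n + 1) U X a ∧
      X.IsIndec ∧ b.comp a ≠ 0 ∧ (∀ m, Path m X Y → ∃ k, Path k U Y) := by
    intro n
    induction n with
    | zero =>
      obtain ⟨W, c, b, hW, hc, h0⟩ := las_step hU hf (hns U f hU fun m h => ⟨m, h⟩)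
      exact ⟨W, c, b, Chain.single c hU hW ⟨hU, hY, f, hf⟩
        ⟨hW, hY, b, by rintro rfl; simp at h0⟩ (irred_not_bij hc), hW, h0,
        fun m h => ⟨m + 1, W, ⟨hU, hW, c, hc⟩, h⟩⟩
    | succ n ih =>
      obtain ⟨X, a, b, hch, hX, h0, hp⟩ := ih
      obtain ⟨W, c, b', hW, hc, h0'⟩ := las_step' hX h0 (hns X b hX hp)
      exact ⟨W, _, b', hch.snoc hW ⟨hW, hY, b', by rintro rfl; simp at h0'⟩ c (irred_not_bij hc),
        hW, h0', fun m h => hp (m + 1) ⟨W, ⟨hX, hW, c, hc⟩, h⟩⟩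
  obtain ⟨N, hN⟩ := harada_sai hl
  obtain ⟨X, a, b, hch, -, h0, -⟩ := key N
  exact h0 (by rw [hN _ _ _ _ (by omega) hch]; simp)

theorem exists_path_of_le [Nice R] {U X : ModA R} (hX : V X) (h : Le U X) : ∃ n, Path n U X := by
  induction h using Relation.ReflTransGen.head_induction_on with
  | refl => exact ⟨0, hX.1, iso_refl X⟩
  | head h h' ih =>
    obtain ⟨n, hn⟩ := ih
    obtain ⟨h1, h2, f, hf⟩ := h
    obtain ⟨m, hm⟩ := exists_path h1 h2 (hX.2 _ h') hf
    exact ⟨m + n, hm.trans hn⟩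

theorem exists_path_pos [Nice R] {U X : ModA R} (hX : V X) (h : Relation.TransGen NN U X) :
    ∃ n, Path (n + 1) U X := by
  obtain ⟨Y, hUY, hYX⟩ := Relation.TransGen.head'_iff.1 h
  have hle : Le Y X := by
    rcases (Relation.reflTransGen_iff_eq_or_transGen.1 hYX) with rfl | h
    · exact Le.refl _
    · exact le_of_transNN h
  obtain ⟨hU, hY, f, hf, hb⟩ := hUY
  obtain ⟨W, a, b, hW, ha, h0⟩ := las_step hU hf (fun h => hb ((splitMono_iff hU hY).1 h))
  have hWY : Le W Y := le_of_hom hW hY (f := b) (by rintro rfl; simp at h0)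
  obtain ⟨n, hn⟩ := exists_path_of_le hX (hWY.trans hle)
  exact ⟨n, W, ⟨hU, hW, a, ha⟩, hn⟩

theorem finUp_path [Nice R] (n : ℕ) {X : ModA R} (hX : V X) : FinUp (fun U => Path n U X) := by
  induction n with
  | zero => exact (finUp_iso X).mono fun U _ h => h.2
  | succ n ih =>
    refine FinUp.mono (FinUp.bind ih (Q := fun W U => Arr U W) ?_ ?_) ?_
    · intro W _ hW
      exact (hX.2 W hW.le).mono fun U _ h => nn_hn h.nn
    · exact fun A B C e h => arr_iso h (iso_refl C) e
    · rintro U hU ⟨W, h, h'⟩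
      exact ⟨W, h.2.1, h', h⟩

/-- sectional chains: `f` is the first irreducible map, `h` the composite of the rest. -/
inductive SC : ℕ → ∀ U W X : ModA R, (U.M →ₗ[R] W.M) → (W.M →ₗ[R] X.M) → Prop
  | base {U W X : ModA R} (f : U.M →ₗ[R] W.M) (h : W.M →ₗ[R] X.M) (hU : U.IsIndec)
      (hW : W.IsIndec) (hf : IsIrred f) (hh : Function.Bijective h) : SC 0 U W X f h
  | step {n : ℕ} {U W W' X : ModA R} (f : U.M →ₗ[R] W.M) (f' : W.M →ₗ[R] W'.M)
      (h : W'.M →ₗ[R] X.M) (hU : U.IsIndec) (hf : IsIrred f)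
      (ht : ¬ IsTauOf U W') (hs : SC n W W' X f' h) : SC (n + 1) U W X f (h.comp f')

theorem good_section {W Z E : ModA R} (hW : W.IsIndec) (hZ : Z.IsIndec) (hn : ¬ Z.Iso W)
    {r : E.M →ₗ[R] W.M} {s0 : W.M →ₗ[R] E.M} (h0 : r.comp s0 = LinearMap.id)
    {r' : E.M →ₗ[R] Z.M} {s' : Z.M →ₗ[R] E.M} (h' : r'.comp s' = LinearMap.id) :
    ∃ s : W.M →ₗ[R] E.M, r.comp s = LinearMap.id ∧ r'.comp s = 0 := by
  have hb : Function.Bijective (r.comp (s0 - s'.comp (r'.comp s0))) := by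
    refine bij_one_add hW (b := -((r.comp s').comp (r'.comp s0))) ?_ ?_
    · ext x
      have := LinearMap.congr_fun h0 x
      simp only [LinearMap.comp_apply, LinearMap.sub_apply, map_sub, LinearMap.add_apply,
        LinearMap.neg_apply, LinearMap.id_apply] at this ⊢
      rw [this, sub_eq_add_neg]
    · intro hb
      have hb' : Function.Bijective ((r.comp s').comp (r'.comp s0)) := by
        have h2 := (LinearEquiv.neg R (M := W.M)).bijective.comp hb
        convert h2 using 1
        ext x
        simp
      exact hn (iso_symm (iso_of_bij _ (bij_of_comp_bij hW hZ hb').1))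
  obtain ⟨v, hv1, hv2⟩ := exists_inv _ hb
  refine ⟨(s0 - s'.comp (r'.comp s0)).comp v, hv2, ?_⟩
  ext x
  have := LinearMap.congr_fun h' (r' (s0 (v x)))
  simp only [LinearMap.comp_apply, LinearMap.sub_apply, map_sub, LinearMap.id_apply,
    LinearMap.zero_apply] at this ⊢
  rw [this, sub_self]

/-- `φ` is zero or irreducible to an object not isomorphic to `W`. -/
def Other (U W Z : ModA R) (φ : U.M →ₗ[R] Z.M) : Prop :=
  φ = 0 ∨ (Z.IsIndec ∧ IsIrred φ ∧ ¬ Z.Iso W)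

theorem sec_noninj (s : AlmostSplitSeq R) {W Z X : ModA R} (hW : W.IsIndec)
    {f : s.l.M →ₗ[R] W.M} (hf : IsIrred f) {h : W.M →ₗ[R] X.M} {φ : s.l.M →ₗ[R] Z.M}
    {t : Z.M →ₗ[R] X.M} (hφ : Other s.l W Z φ) (he : h.comp f = t.comp φ) :
    ∃ (φ' : W.M →ₗ[R] s.r.M) (t' : s.r.M →ₗ[R] X.M), IsIrred φ' ∧ h = t'.comp φ' := by
  obtain ⟨r, s0, hr, hrs⟩ := ars_irred_factor s hf
  have : ∃ (r' : s.m.M →ₗ[R] Z.M) (σ : W.M →ₗ[R] s.m.M), r'.comp s.f = φ ∧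
      r.comp σ = LinearMap.id ∧ r'.comp σ = 0 := by
    rcases hφ with h0 | ⟨hZ, hi, hn⟩
    · exact ⟨0, s0, by simp [h0], hrs, by simp⟩
    · obtain ⟨r', s', hr', hrs'⟩ := ars_irred_factor s hi
      obtain ⟨σ, h1, h2⟩ := good_section hW hZ hn hrs hrs'
      exact ⟨r', σ, hr', h1, h2⟩
  obtain ⟨r', σ, hr', h1, h2⟩ := this
  obtain ⟨w, hw⟩ := ars_colift s (h.comp r - t.comp r') (by
    rw [LinearMap.sub_comp, LinearMap.comp_assoc, LinearMap.comp_assoc, hr, hr', he, sub_self])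
  refine ⟨s.g.comp σ, w, Las.comp_irred hW s rfl h1 (by rw [hr]; exact irred_not_bij hf), ?_⟩
  rw [← LinearMap.comp_assoc, hw, LinearMap.sub_comp, LinearMap.comp_assoc, LinearMap.comp_assoc,
    h1, h2]
  simp

theorem sec_inj [Nice R] {U W Z X : ModA R} (hU : U.IsIndec) (hI : InjL U) (hW : W.IsIndec)
    {f : U.M →ₗ[R] W.M} (hf : IsIrred f) {h : W.M →ₗ[R] X.M} {φ : U.M →ₗ[R] Z.M}
    {t : Z.M →ₗ[R] X.M} (hφ : Other U W Z φ) (he : h.comp f = t.comp φ) : h = 0 := by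
  let L := las hU
  obtain ⟨r, s0, hr, hrs⟩ := L.irred_factor hf
  have : ∃ (r' : L.E.M →ₗ[R] Z.M) (σ : W.M →ₗ[R] L.E.M), r'.comp L.lam = φ ∧
      r.comp σ = LinearMap.id ∧ r'.comp σ = 0 := by
    rcases hφ with h0 | ⟨hZ, hi, hn⟩
    · exact ⟨0, s0, by simp [h0], hrs, by simp⟩
    · obtain ⟨r', s', hr', hrs'⟩ := L.irred_factor hi
      obtain ⟨σ, h1, h2⟩ := good_section hW hZ hn hrs hrs'
      exact ⟨r', σ, hr', h1, h2⟩
  obtain ⟨r', σ, hr', h1, h2⟩ := this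
  have hw : h.comp r = t.comp r' := by
    apply eq_of_comp_surj (L.surj hI)
    rw [LinearMap.comp_assoc, LinearMap.comp_assoc, hr, hr', he]
  have := congrArg (fun k => LinearMap.comp k σ) hw
  simp only [LinearMap.comp_assoc, h1, h2] at this
  simpa using this

theorem SC.ne [Nice R] {n : ℕ} {U W X : ModA R} {f : U.M →ₗ[R] W.M} {h : W.M →ₗ[R] X.M}
    (H : SC n U W X f h) : ∀ (Z : ModA R) (φ : U.M →ₗ[R] Z.M) (t : Z.M →ₗ[R] X.M),
      Other U W Z φ → h.comp f ≠ t.comp φ := by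
  induction H with
  | @base U W X f h hU hW hf hh =>
    intro Z φ t hφ he
    by_cases hI : InjL U
    · have := sec_inj hU hI hW hf hφ he
      subst this
      exact zero_not_bij hW hh
    · obtain ⟨φ', t', hi, he'⟩ := sec_noninj (arSeq hU hI) hW hf hφ he
      obtain ⟨v, hv, -⟩ := exists_inv _ hh
      exact hi.1 ⟨v.comp t', by rw [LinearMap.comp_assoc, ← he', hv]⟩
  | @step n U W W' X f f' h hU hf ht hs ih =>
    intro Z φ t hφ he
    have hW : W.IsIndec := by
      cases hs with
      | base _ _ h1 => exact h1
      | step _ _ _ h1 => exact h1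
    by_cases hI : InjL U
    · have := sec_inj hU hI hW hf hφ he
      exact ih Z 0 0 (Or.inl rfl) (by rw [this]; simp)
    · obtain ⟨φ', t', hi, he'⟩ := sec_noninj (arSeq hU hI) hW hf hφ he
      exact ih _ φ' t' (Or.inr ⟨(arSeq hU hI).r_indec, hi,
        fun e => ht ⟨arSeq hU hI, iso_refl _, e⟩⟩) he'

theorem SC.ne_zero [Nice R] {n : ℕ} {U W X : ModA R} {f : U.M →ₗ[R] W.M} {h : W.M →ₗ[R] X.M}
    (H : SC n U W X f h) : h.comp f ≠ 0 := by
  have := H.ne X 0 0 (Or.inl rfl)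
  simpa using this

theorem SC.indec {n : ℕ} {U W X : ModA R} {f : U.M →ₗ[R] W.M} {h : W.M →ₗ[R] X.M}
    (H : SC n U W X f h) : U.IsIndec ∧ W.IsIndec ∧ X.IsIndec ∧ IsIrred f := by
  induction H with
  | base f h hU hW hf hh => exact ⟨hU, hW, indec_of_iso (iso_of_bij _ hh) hW, hf⟩
  | step f f' h hU hf ht hs ih => exact ⟨hU, ih.1, ih.2.2.1, hf⟩

theorem SC.chain [Nice R] {n : ℕ} {U W X : ModA R} {f : U.M →ₗ[R] W.M} {h : W.M →ₗ[R] X.M}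
    (H : SC n U W X f h) : Chain (fun Z => HN Z X) (n + 1) U X (h.comp f) := by
  induction H with
  | base f h hU hW hf hh =>
    have hX := indec_of_iso (iso_of_bij _ hh) hW
    exact Chain.single _ hU hX ⟨hU, hX, _, (SC.base f h hU hW hf hh).ne_zero⟩
      ⟨hX, hX, _, id_ne_zero hX⟩ fun hb => irred_not_bij hf (bij_of_comp_bij hU hW hb).1
  | step f f' h hU hf ht hs ih =>
    exact Chain.cons f _ hU ⟨hU, hs.indec.2.2.1, _, (SC.step f f' h hU hf ht hs).ne_zero⟩
      (irred_not_bij hf) ih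

def SP (n : ℕ) (U W X : ModA R) : Prop := ∃ f h, SC n U W X f h

theorem SP.hn [Nice R] {n : ℕ} {U W X : ModA R} (H : SP n U W X) : HN U X := by
  obtain ⟨f, h, H⟩ := H
  exact ⟨H.indec.1, H.indec.2.2.1, _, H.ne_zero⟩

theorem SP.bound [Nice R] {X : ModA R} (hX : LF X) : ∃ N, ∀ n U W, SP n U W X → n < N := by
  obtain ⟨N, hN⟩ := harada_sai hX
  refine ⟨N, fun n U W ⟨f, h, H⟩ => ?_⟩
  by_contra hn
  exact H.ne_zero (hN _ _ _ _ (by omega) H.chain)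

theorem SP.path {n : ℕ} {U W X : ModA R} (H : SP n U W X) : Path n W X := by
  obtain ⟨f, h, H⟩ := H
  induction H with
  | base f h hU hW hf hh => exact ⟨hW, iso_of_bij _ hh⟩
  | step f f' h hU hf ht hs ih => exact ⟨_, ⟨hs.indec.1, hs.indec.2.1, f', hs.indec.2.2.2⟩, ih⟩

theorem hook [Nice R] (n : ℕ) : ∀ {U X : ModA R}, (∀ W, Le U W → Le W X → ¬ InjL W) →
    Path (n + 1) U X → (∃ W, SP n U W X) ∨
      ∃ m, n = m + 1 ∧ ∀ C, IsTauOf U C → Path m C X := by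
  induction n with
  | zero =>
    rintro U X - ⟨W, ⟨hU, hW, f, hf⟩, -, ⟨e⟩⟩
    exact Or.inl ⟨W, f, e.toLinearMap, SC.base f _ hU hW hf e.bijective⟩
  | succ n ih =>
    rintro U X hn ⟨W, hUW, hW⟩
    have hle := hUW.le
    rcases ih (fun W' h h' => hn W' (hle.trans h) h') hW with ⟨W', f', h', H⟩ | ⟨m, rfl, hm⟩
    · by_cases ht : IsTauOf U W'
      · refine Or.inr ⟨n, rfl, fun C hC => ?_⟩
        have : Path n W' X := SP.path ⟨f', h', H⟩
        exact this.iso_left (tau_r_iso ht hC (iso_refl U))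
      · left
        obtain ⟨hU, hW, f, hf⟩ := hUW
        exact ⟨W, f, _, SC.step f f' h' hU hf ht H⟩
    · refine Or.inr ⟨m + 1, rfl, fun C hC => ?_⟩
      obtain ⟨D, hD⟩ := exists_tauInv hUW.2.1 (hn W hle hW.le)
      exact ⟨D, arr_tau_tau hUW hC hD, hm D hD⟩

theorem tau_seq_iso {u : ℕ → ModA R} (hu : ∀ k, IsTauOf (u k) (u (k + 1))) (i d : ℕ)
    (h : (u i).Iso (u (i + d))) : (u 0).Iso (u d) := by
  induction i with
  | zero => simpa using h
  | succ i ih =>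
    apply ih
    rw [show i + 1 + d = (i + d) + 1 by omega] at h
    exact tau_l_iso (hu i) (hu (i + d)) h

theorem tau_not_proj {U C : ModA R} (h : IsTauOf U C) : ¬ Module.Projective R C.M := by
  obtain ⟨s, -, ⟨e⟩⟩ := h
  intro hp
  exact ars_r_not_proj s (Module.Projective.of_equiv e.symm)

theorem Q_proj [Nice R] (j : (dec (RO R)).ι) : Module.Projective R ((dec (RO R)).Z j).M :=
  Module.Projective.of_split ((dec (RO R)).i j) ((dec (RO R)).p j) ((dec (RO R)).pi j)

theorem exists_Q [Nice R] {U : ModA R} (hU : U.IsIndec) : ∃ j, HN ((dec (RO R)).Z j) U := by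
  obtain ⟨a, ha⟩ := exists_from_RO (id_ne_zero hU)
  have ha' : a ≠ 0 := by rintro rfl; simp at ha
  obtain ⟨j, hj⟩ := (dec (RO R)).exists_comp_ne ha'
  exact ⟨j, (dec (RO R)).indec j, hU, _, hj⟩

theorem finUp_path_lt [Nice R] (n : ℕ) {X : ModA R} (hX : V X) :
    FinUp (fun U => ∃ m < n, Path m U X) := by
  refine (finUp_fintype (ι := Fin n) (fun m => finUp_path m.1 hX)).mono ?_
  rintro U _ ⟨m, hm, h⟩
  exact ⟨⟨m, hm⟩, h⟩

/-- Key lemma. -/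
theorem key_finite [Nice R] {X : ModA R} (hX : V X) (hn : ∀ I, Le I X → ¬ InjL I) :
    FinUp (fun U => Le U X) := by
  by_contra hinf
  have h1 : ∀ n, ∃ j, ∃ m, n ≤ m ∧ Path m ((dec (RO R)).Z j) X := by
    intro n
    have : ∃ U, Le U X ∧ ¬ ∃ m < n, Path m U X := by
      by_contra hcon
      push Not at hcon
      exact hinf ((finUp_path_lt n hX).mono fun U _ h => hcon U h)
    obtain ⟨U, hU, hno⟩ := this
    obtain ⟨m, hm⟩ := exists_path_of_le hX hU
    obtain ⟨j, hj1, hj2, f, hf⟩ := exists_Q hm.indec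
    obtain ⟨k, hk⟩ := exists_path hj1 hj2 (hX.2 U hU) hf
    refine ⟨j, k + m, ?_, hk.trans hm⟩
    by_contra hlt
    exact hno ⟨m, by omega, hm⟩
  let Long : ModA R → Prop := fun U => ∀ n, ∃ m, n ≤ m ∧ Path m U X
  have h2 : ∃ j, Long ((dec (RO R)).Z j) := by
    by_contra hcon
    simp only [Long] at hcon
    push Not at hcon
    choose b hb using hcon
    obtain ⟨j, m, hm, hp⟩ := h1 (∑ j, b j)
    refine hb j m (le_trans (Finset.single_le_sum (f := b) (fun _ _ => Nat.zero_le _)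
      (Finset.mem_univ j)) hm) hp
  obtain ⟨j, hj⟩ := h2
  obtain ⟨N, hN⟩ := SP.bound hX.lf
  have hno : ∀ U W, Le U W → Le W X → ¬ InjL W := fun _ W _ h => hn W h
  have h3 : ∀ U : {U // Long U}, ∃ C : {U // Long U}, IsTauOf U.1 C.1 := by
    rintro ⟨U, hU⟩
    obtain ⟨m0, -, hm0⟩ := hU 0
    obtain ⟨C, hC⟩ := exists_tauInv hm0.indec (hn U hm0.le)
    refine ⟨⟨C, fun n => ?_⟩, hC⟩
    obtain ⟨m, hm, hp⟩ := hU (N + n + 3)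
    obtain ⟨m', rfl⟩ : ∃ m', m = m' + 1 := ⟨m - 1, by omega⟩
    rcases hook m' (hno U) hp with ⟨W, hW⟩ | ⟨k, rfl, hk⟩
    · have := hN _ _ _ hW
      omega
    · exact ⟨k, by omega, hk C hC⟩
  choose nx hnx using h3
  let u : ℕ → {U // Long U} := fun n => nx^[n] ⟨_, hj⟩
  have hu : ∀ n, IsTauOf (u n).1 (u (n + 1)).1 := by
    intro n
    have : u (n + 1) = nx (u n) := Function.iterate_succ_apply' nx n _
    rw [this]
    exact hnx _
  have h4 : ∀ n k, Path n (u k).1 X → ∃ k', k ≤ k' ∧ HN (u k').1 X := by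
    intro n
    induction n using Nat.strong_induction_on with
    | _ n ih =>
      intro k hp
      cases n with
      | zero => exact ⟨k, le_rfl, hn_of_iso hp.1 hp.2⟩
      | succ n =>
        rcases hook n (hno _) hp with ⟨W, hW⟩ | ⟨m, rfl, hm⟩
        · exact ⟨k, le_rfl, hW.hn⟩
        · obtain ⟨k', hk', h⟩ := ih m (by omega) (k + 1) (hm _ (hu k))
          exact ⟨k', by omega, h⟩
  obtain ⟨φ, hφ, hφ'⟩ := Nat.exists_strictMono_subsequence (P := fun k => HN (u k).1 X) (by
    intro n
    obtain ⟨m, -, hm⟩ := (u (n + 1)).2 0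
    obtain ⟨k', hk', h⟩ := h4 m (n + 1) hm
    exact ⟨k', by omega, h⟩)
  obtain ⟨a, b, hab, e⟩ := hX.lf.pigeon (fun n => (u (φ n)).1) (fun n => (hφ' n).1) hφ'
  have hlt := hφ hab
  obtain ⟨d, hd⟩ : ∃ d, φ b = φ a + (d + 1) := ⟨φ b - φ a - 1, by omega⟩
  have e' : (u (φ a)).1.Iso (u (φ a + (d + 1))).1 := by rw [← hd]; exact e
  have e0 := tau_seq_iso (u := fun n => (u n).1) hu (φ a) (d + 1) e'
  obtain ⟨e0⟩ := e0
  refine tau_not_proj (hu d) ?_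
  have : Module.Projective R (u 0).1.M := Q_proj j
  exact Module.Projective.of_equiv e0

theorem lemmaD [Nice R] {X : ModA R} (hX : V X) (hfin : FinUp (fun U => Le U X))
    (hnd : ¬ IsDirectingModule X) : ∃ I, InjL I ∧ Le I X ∧ Le X I := by
  by_contra hcon
  push Not at hcon
  obtain ⟨c, hc⟩ := exists_path_pos hX (trans_of_not_directing hnd)
  have hloop : ∀ n, ∃ m, n ≤ m ∧ Path m X X := by
    intro n
    induction n with
    | zero => exact ⟨c + 1, by omega, hc⟩
    | succ n ih =>
      obtain ⟨m, hm, hp⟩ := ih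
      exact ⟨c + 1 + m, by omega, hc.trans hp⟩
  let C : ModA R → Prop := fun U => Le U X ∧ Le X U
  have h1 : ∀ U : {U // C U}, ∃ D : {U // C U}, IsTauOf U.1 D.1 := by
    rintro ⟨U, hU, hU'⟩
    have hUi := hU.indec_left hX.1
    have hn : ∀ W, Le U W → Le W U → ¬ InjL W := fun W h h' hI =>
      hcon W hI (h'.trans hU) (hU'.trans h)
    obtain ⟨D, hD⟩ := exists_tauInv hUi (hn U (Le.refl _) (Le.refl _))
    have hVU := hX.of_le hU
    obtain ⟨N, hN⟩ := SP.bound hVU.lf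
    obtain ⟨a, ha⟩ := exists_path_of_le hX hU
    obtain ⟨b, hb⟩ := exists_path_of_le hVU hU'
    obtain ⟨m, hm, hp⟩ := hloop (N + 3)
    have hP : Path ((a + m + b - 1) + 1) U U := by
      rw [show a + m + b - 1 + 1 = a + m + b by omega]
      exact (ha.trans hp).trans hb
    refine ⟨⟨D, ?_⟩, hD⟩
    have hP' := hP
    obtain ⟨W, hUW, -⟩ := hP'
    have hUD : Le U D := hUW.le.trans (arr_tau hUW hD).le
    rcases hook _ hn hP with ⟨W, hW⟩ | ⟨k, hk, hk'⟩
    · have := hN _ _ _ hW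
      omega
    · exact ⟨(hk' D hD).le.trans hU, hU'.trans hUD⟩
  choose nx hnx using h1
  have h2 : ∀ U, C U → ∃ U', C U' ∧ IsTauOf U' U := by
    intro U hU
    let u : ℕ → {U // C U} := fun n => nx^[n] ⟨U, hU⟩
    have hu : ∀ n, IsTauOf (u n).1 (u (n + 1)).1 := by
      intro n
      have : u (n + 1) = nx (u n) := Function.iterate_succ_apply' nx n _
      rw [this]
      exact hnx _
    obtain ⟨i, j, hij, e⟩ := hfin.pigeon (fun n => (u n).1)
      (fun n => (u n).2.1.indec_left hX.1) (fun n => (u n).2.1)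
    obtain ⟨d, rfl⟩ : ∃ d, j = i + (d + 1) := ⟨j - i - 1, by omega⟩
    have e0 : U.Iso (u (d + 1)).1 := tau_seq_iso (u := fun n => (u n).1) hu i (d + 1) e
    exact ⟨(u d).1, (u d).2, tau_iso (hu d) (iso_refl _) (iso_symm e0)⟩
  have h3 : ∀ n U, Path n U X → C U := by
    intro n
    induction n with
    | zero =>
      intro U h
      exact ⟨le_of_iso h.1 h.2, le_of_iso hX.1 (iso_symm h.2)⟩
    | succ n ih =>
      rintro U ⟨W, hUW, hW⟩
      have hCW := ih W hW
      obtain ⟨U', hU', ht⟩ := h2 W hCW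
      exact ⟨hUW.le.trans hCW.1, hU'.2.trans (Relation.ReflTransGen.single (hn_of_arr_tau hUW ht))⟩
  obtain ⟨j, hj1, hj2, f, hf⟩ := exists_Q hX.1
  obtain ⟨n, hn⟩ := exists_path hj1 hj2 hX.lf hf
  obtain ⟨U', -, ht⟩ := h2 _ (h3 n _ hn)
  exact tau_not_proj ht (Q_proj j)

end CF


namespace CF

section Dual

variable (K : Type u) [CommRing K]

/-- Abstract injectivity (in the same universe). -/
def InjK (I : Type u) [AddCommGroup I] [Module K I] : Prop :=
  ∀ (A B : Type u) [AddCommGroup A] [Module K A] [AddCommGroup B] [Module K B]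
    (f : A →ₗ[K] B), Function.Injective f → ∀ h : A →ₗ[K] I, ∃ h' : B →ₗ[K] I, h'.comp f = h

theorem InjK.ker {I : Type u} [AddCommGroup I] [Module K I] (H : InjK K I) {A B : Type u}
    [AddCommGroup A] [Module K A] [AddCommGroup B] [Module K B] (g : A →ₗ[K] B) (h : A →ₗ[K] I)
    (hk : ∀ x, g x = 0 → h x = 0) : ∃ s : B →ₗ[K] I, s.comp g = h := by
  obtain ⟨s, hs⟩ := H (A ⧸ LinearMap.ker g) B ((LinearMap.ker g).liftQ g le_rfl)
    (LinearMap.ker_eq_bot.1 (Submodule.ker_liftQ_eq_bot _ _ _ le_rfl))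
    ((LinearMap.ker g).liftQ h (fun x hx => hk x hx))
  refine ⟨s, ?_⟩
  ext x
  have := LinearMap.congr_fun hs ((LinearMap.ker g).mkQ x)
  simp only [LinearMap.comp_apply] at this ⊢
  exact this

theorem injK_char : InjK K (CharacterModule K) := by
  intro A B _ _ _ _ f hf h
  let c : CharacterModule A :=
    { toFun := fun a => h a (1 : K)
      map_zero' := by rw [map_zero]; rfl
      map_add' := fun x y => by rw [map_add]; rfl }
  obtain ⟨d, hd⟩ := CharacterModule.dual_surjective_of_injective f hf c
  refine ⟨{ toFun := fun b => ({ toFun := fun k => d (k • b), map_zero' := ?_, map_add' := ?_ } : K →+ AddCircle (1 : ℚ))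
            map_add' := ?_, map_smul' := ?_ }, ?_⟩
  · rw [zero_smul]; exact map_zero d
  · intro x y; rw [add_smul]; exact map_add d _ _
  · intro x y
    apply CharacterModule.ext
    intro k
    change d (k • (x + y)) = d (k • x) + d (k • y)
    rw [smul_add]; exact map_add d _ _
  · intro r x
    apply CharacterModule.ext
    intro k
    change d (k • (r • x)) = d ((r • k) • x)
    rw [smul_smul, smul_eq_mul, mul_comm]
  · refine LinearMap.ext fun a => ?_
    apply CharacterModule.ext
    intro k
    change d (k • f a) = h a k
    have : d (f (k • a)) = c (k • a) := congrArg (fun t : CharacterModule A => t (k • a)) hd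
    rw [map_smul] at this
    rw [this]
    change h (k • a) 1 = _
    rw [map_smul]
    change h a (k • 1) = _
    simp

theorem exists_char_max (m : Ideal K) (hm : m.IsMaximal) :
    ∃ x : CharacterModule K, x ≠ 0 ∧ ∀ k ∈ m, k • x = 0 := by
  have h1 : (Ideal.Quotient.mk m 1) ≠ 0 := by
    rw [Ne, Ideal.Quotient.eq_zero_iff_mem]
    exact fun h => hm.ne_top (m.eq_top_of_isUnit_mem h isUnit_one)
  obtain ⟨c, hc⟩ := CharacterModule.exists_character_apply_ne_zero_of_ne_zero h1
  let x : CharacterModule K := (AddMonoidHom.comp c (Ideal.Quotient.mk m).toAddMonoidHom)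
  refine ⟨x, ?_, ?_⟩
  · intro h
    apply hc
    exact congrArg (fun t : CharacterModule K => t 1) h
  · intro k hk
    apply CharacterModule.ext
    intro a
    change c (Ideal.Quotient.mk m (k * a)) = 0
    rw [Ideal.Quotient.eq_zero_iff_mem.2 (m.mul_mem_right a hk)]
    exact map_zero c

/-- Socle is multiplicity free. -/
def MF {I : Type u} [AddCommGroup I] [Module K I] (N : Submodule K I) : Prop :=
  ∀ m : Ideal K, m.IsMaximal → ∀ x ∈ N, ∀ y ∈ N, (∀ k ∈ m, k • x = 0) → (∀ k ∈ m, k • y = 0) →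
    x ≠ 0 → ∃ k : K, y = k • x

theorem exists_inv_mod {m : Ideal K} (hm : m.IsMaximal) {k : K} (hk : k ∉ m) :
    ∃ k', k' * k - 1 ∈ m := by
  obtain ⟨y, i, hi, h⟩ := hm.exists_inv hk
  exact ⟨y, by rw [← h]; simpa using m.neg_mem hi⟩

theorem smul_inv_mod {I : Type u} [AddCommGroup I] [Module K I] {m : Ideal K} {z : I}
    (hz : ∀ k ∈ m, k • z = 0) {k k' : K} (h : k' * k - 1 ∈ m) : k' • (k • z) = z := by
  have := hz _ h
  rw [sub_smul, one_smul, sub_eq_zero] at this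
  rw [smul_smul, this]

theorem exists_maxMF : ∃ J : Submodule K (CharacterModule K), Maximal (MF K) J := by
  suffices H : ∃ m, ⊥ ≤ m ∧ Maximal (· ∈ {N : Submodule K (CharacterModule K) | MF K N}) m by
    obtain ⟨J, -, hJ⟩ := H
    exact ⟨J, hJ⟩
  apply zorn_le_nonempty₀
  · intro c hc hch y hy
    refine ⟨sSup c, ?_, fun z hz => le_sSup hz⟩
    intro m hm x hx w hw h1 h2 h3
    rw [Submodule.mem_sSup_of_directed ⟨y, hy⟩ hch.directedOn] at hx hw
    obtain ⟨N1, hN1, hx⟩ := hx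
    obtain ⟨N2, hN2, hw⟩ := hw
    obtain ⟨N3, hN3, h13, h23⟩ := hch.directedOn N1 hN1 N2 hN2
    exact hc hN3 m hm x (h13 hx) w (h23 hw) h1 h2 h3
  · intro m hm x hx y hy h1 h2 h3
    exact absurd ((Submodule.mem_bot K).1 hx) h3

theorem exists_J_max {J : Submodule K (CharacterModule K)} (hJ : Maximal (MF K) J)
    (m : Ideal K) (hm : m.IsMaximal) : ∃ x ∈ J, x ≠ 0 ∧ ∀ k ∈ m, k • x = 0 := by
  by_contra hno
  push Not at hno
  obtain ⟨x, hx0, hx⟩ := exists_char_max K m hm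
  have hJ' : ∀ j ∈ J, (∀ k ∈ m, k • j = 0) → j = 0 := by
    intro j hj h
    by_contra hne
    obtain ⟨k, hk, hk'⟩ := hno j hj hne
    exact hk' (h k hk)
  have hP : MF K (J ⊔ Submodule.span K {x}) := by
    intro m' hm' z hz w hw hz1 hw1 hz0
    obtain ⟨j, hj, t, ht, rfl⟩ := Submodule.mem_sup.1 hz
    obtain ⟨a, rfl⟩ := Submodule.mem_span_singleton.1 ht
    obtain ⟨j', hj', t', ht', rfl⟩ := Submodule.mem_sup.1 hw
    obtain ⟨a', rfl⟩ := Submodule.mem_span_singleton.1 ht'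
    by_cases hmm : m' = m
    · subst hmm
      have e1 : j = 0 := by
        apply hJ' j hj
        intro k hk
        have := hz1 k hk
        rwa [smul_add, smul_comm, hx k hk, smul_zero, add_zero] at this
      have e2 : j' = 0 := by
        apply hJ' j' hj'
        intro k hk
        have := hw1 k hk
        rwa [smul_add, smul_comm, hx k hk, smul_zero, add_zero] at this
      subst e1 e2
      rw [zero_add] at hz0
      have ha : a ∉ m' := fun h => hz0 (hx a h)
      obtain ⟨b, hb⟩ := exists_inv_mod K hm' ha
      refine ⟨a' * b, ?_⟩
      rw [zero_add, zero_add, mul_smul, smul_inv_mod K hx hb]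
    · have hco : m' ⊔ m = ⊤ := hm'.coprime_of_ne hm hmm
      obtain ⟨p, hp, q, hq, hpq⟩ := Submodule.mem_sup.1 ((Ideal.eq_top_iff_one _).1 hco)
      have key : ∀ j ∈ J, ∀ a : K, (∀ k ∈ m', k • (j + a • x) = 0) → j + a • x ∈ J := by
        intro j hj a h
        have e : j + a • x = q • j := by
          calc j + a • x = (p + q) • (j + a • x) := by rw [hpq, one_smul]
            _ = q • j := by
              rw [add_smul, h p hp, zero_add, smul_add, smul_comm, hx q hq, smul_zero, add_zero]
        rw [e]; exact J.smul_mem q hj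
      exact hJ.1 m' hm' _ (key j hj a hz1) _ (key j' hj' a' hw1) hz1 hw1 hz0
  have hle := hJ.2 hP le_sup_left
  have hxJ : x ∈ J := hle (Submodule.mem_sup_right (Submodule.mem_span_singleton_self x))
  exact hx0 (hJ' x hxJ hx)

theorem exists_retract_J {J : Submodule K (CharacterModule K)} (hJ : Maximal (MF K) J) :
    ∃ ρ : CharacterModule K →ₗ[K] J, ∀ j : J, ρ j = j := by
  obtain ⟨C, -, hC⟩ := zorn_le_nonempty₀
    {N : Submodule K (CharacterModule K) | ∀ x ∈ N, x ∈ J → x = 0}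
    (by
      intro c hc hch y hy
      refine ⟨sSup c, ?_, fun z hz => le_sSup hz⟩
      intro x hx
      rw [Submodule.mem_sSup_of_directed ⟨y, hy⟩ hch.directedOn] at hx
      obtain ⟨N1, hN1, hx⟩ := hx
      exact hc hN1 x hx) ⊥ (by intro x hx _; exact (Submodule.mem_bot K).1 hx)
  have hC1 : ∀ x ∈ C, x ∈ J → x = 0 := hC.1
  obtain ⟨s, hs⟩ := injK_char K J (CharacterModule K ⧸ C) (C.mkQ.comp J.subtype)
    (by
      rw [← LinearMap.ker_eq_bot, LinearMap.ker_eq_bot']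
      intro x hx
      have : (x : CharacterModule K) ∈ C := by simpa using hx
      exact Subtype.ext (hC1 x this x.2)) J.subtype
  let r : CharacterModule K →ₗ[K] CharacterModule K := s.comp C.mkQ
  have hrJ : ∀ j ∈ J, r j = j := fun j hj => LinearMap.congr_fun hs ⟨j, hj⟩
  have hrC : ∀ x ∈ C, r x = 0 := by
    intro x hx
    have : C.mkQ x = 0 := by simpa using hx
    simp only [r, LinearMap.comp_apply, this, map_zero]
  have hsoc : ∀ m : Ideal K, m.IsMaximal → ∀ z ∈ LinearMap.range r, (∀ k ∈ m, k • z = 0) →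
      z ∈ J := by
    rintro m hm z ⟨w, rfl⟩ hz
    by_cases hz0 : r w = 0
    · rw [hz0]; exact J.zero_mem
    have hw : w ∉ C := fun h => hz0 (hrC w h)
    have : ∃ x ∈ C ⊔ Submodule.span K {w}, x ∈ J ∧ x ≠ 0 := by
      by_contra hno
      push Not at hno
      have := hC.2 hno le_sup_left
      exact hw (this (Submodule.mem_sup_right (Submodule.mem_span_singleton_self w)))
    obtain ⟨j, hj, hjJ, hj0⟩ := this
    obtain ⟨t, ht, t', ht', rfl⟩ := Submodule.mem_sup.1 hj
    obtain ⟨a, rfl⟩ := Submodule.mem_span_singleton.1 ht'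
    have e := hrJ _ hjJ
    rw [map_add, hrC t ht, zero_add, map_smul] at e
    have ha : a ∉ m := fun h => hj0 (by rw [← e, hz a h])
    obtain ⟨b, hb⟩ := exists_inv_mod K hm ha
    rw [← smul_inv_mod K hz hb, e]
    exact J.smul_mem _ hjJ
  have hP : MF K (LinearMap.range r) := by
    intro m hm z hz w hw h1 h2 h3
    exact hJ.1 m hm z (hsoc m hm z hz h1) w (hsoc m hm w hw h2) h1 h2 h3
  have hle := hJ.2 hP (fun j hj => ⟨j, hrJ j hj⟩)
  refine ⟨r.codRestrict J (fun c => hle ⟨c, rfl⟩), fun j => Subtype.ext (hrJ j j.2)⟩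

/-- A dualizing module. -/
structure DualMod (J : Type u) [AddCommGroup J] [Module K J] : Prop where
  inj : InjK K J
  cog : ∀ (M : Type u) [AddCommGroup M] [Module K M] (x : M), x ≠ 0 → ∃ f : M →ₗ[K] J, f x ≠ 0
  noeth : ∀ (M : Type u) [AddCommGroup M] [Module K M], IsFiniteLength K M →
    IsNoetherian K (M →ₗ[K] J)
  rfl : ∀ (M : Type u) [AddCommGroup M] [Module K M], IsFiniteLength K M →
    ∀ F : (M →ₗ[K] J) →ₗ[K] J, ∃ x, ∀ φ, F φ = φ x

theorem exists_dual [IsArtinianRing K] : ∃ (J : Type u) (_ : AddCommGroup J) (_ : Module K J), DualMod K J := by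
  obtain ⟨J, hJ⟩ := exists_maxMF K
  obtain ⟨ρ, hρ⟩ := exists_retract_J K hJ
  have hinj : InjK K J := by
    intro A B _ _ _ _ f hf h
    obtain ⟨h', hh'⟩ := injK_char K A B f hf (J.subtype.comp h)
    refine ⟨ρ.comp h', ?_⟩
    refine LinearMap.ext fun a => ?_
    have := LinearMap.congr_fun hh' a
    simp only [LinearMap.comp_apply] at this ⊢
    rw [this]
    exact hρ (h a)
  have hcog : ∀ (M : Type u) [AddCommGroup M] [Module K M] (x : M), x ≠ 0 →
      ∃ f : M →ₗ[K] J, f x ≠ 0 := by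
    intro M _ _ x hx
    have hne : LinearMap.ker (LinearMap.toSpanSingleton K M x) ≠ ⊤ := by
      intro h
      have : (1 : K) ∈ LinearMap.ker (LinearMap.toSpanSingleton K M x) := by rw [h]; trivial
      exact hx (by simpa using this)
    obtain ⟨m, hm, hle⟩ := Ideal.exists_le_maximal _ hne
    obtain ⟨y, hyJ, hy0, hy⟩ := exists_J_max K hJ m hm
    obtain ⟨s, hs⟩ := InjK.ker K hinj (LinearMap.toSpanSingleton K M x)
      (LinearMap.toSpanSingleton K J ⟨y, hyJ⟩) (by
        intro k hk
        exact Subtype.ext (hy k (hle hk)))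
    refine ⟨s, ?_⟩
    have := LinearMap.congr_fun hs 1
    simp only [LinearMap.comp_apply, LinearMap.toSpanSingleton_apply, one_smul] at this
    rw [this]
    exact fun h => hy0 (congrArg Subtype.val h)
  have hone : ∀ (S : Type u) [AddCommGroup S] [Module K S] [IsSimpleModule K S],
      ∃ (x : S) (φ : S →ₗ[K] J), (∀ ψ : S →ₗ[K] J, ∃ k : K, ψ = k • φ) ∧
        ∀ F : (S →ₗ[K] J) →ₗ[K] J, ∃ k : K, F φ = φ (k • x) := by
    intro S _ _ hS
    obtain ⟨x, hx⟩ := @exists_ne S (IsSimpleModule.nontrivial K S) 0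
    have hm := IsSimpleModule.ker_toSpanSingleton_isMaximal K hx
    have hsp := IsSimpleModule.toSpanSingleton_surjective K hx
    obtain ⟨φ, hφ⟩ := hcog S x hx
    have hkill : ∀ k ∈ LinearMap.ker (LinearMap.toSpanSingleton K S x), k • x = 0 := by
      intro k hk; simpa using hk
    have hφk : ∀ k ∈ LinearMap.ker (LinearMap.toSpanSingleton K S x), k • φ = 0 := by
      intro k hk
      ext s
      obtain ⟨l, rfl⟩ := hsp s
      rw [LinearMap.smul_apply, LinearMap.toSpanSingleton_apply, ← map_smul, smul_comm, hkill k hk]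
      simp
    refine ⟨x, φ, ?_, ?_⟩
    · intro ψ
      obtain ⟨k, hk⟩ := hJ.1 _ hm (φ x) (φ x).2 (ψ x) (ψ x).2
        (fun k hk => by rw [← Submodule.coe_smul, ← map_smul, hkill k hk, map_zero]; rfl)
        (fun k hk => by rw [← Submodule.coe_smul, ← map_smul, hkill k hk, map_zero]; rfl)
        (fun h => hφ (Subtype.ext h))
      refine ⟨k, ?_⟩
      ext s
      obtain ⟨l, rfl⟩ := hsp s
      have hk' : ψ x = k • φ x := Subtype.ext hk
      rw [LinearMap.smul_apply, LinearMap.toSpanSingleton_apply, map_smul, map_smul, hk', smul_comm]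
    · intro F
      obtain ⟨k, hk⟩ := hJ.1 _ hm (φ x) (φ x).2 (F φ) (F φ).2
        (fun k hk => by rw [← Submodule.coe_smul, ← map_smul, hkill k hk, map_zero]; rfl)
        (fun k hk => by rw [← Submodule.coe_smul, ← map_smul, hφk k hk, map_zero]; rfl)
        (fun h => hφ (Subtype.ext h))
      refine ⟨k, ?_⟩
      rw [map_smul]
      exact Subtype.ext hk
  refine ⟨J, inferInstance, inferInstance, hinj, hcog, ?_, ?_⟩
  · intro M _ _ hM
    induction hM with
    | of_subsingleton => infer_instance
    | @of_simple_quotient M _ _ N hs _ ih =>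
      obtain ⟨x, φ, hφ, -⟩ := hone (M ⧸ N)
      have hn1 : IsNoetherian K (M ⧸ N →ₗ[K] J) := by
        apply isNoetherian_of_surjective (M := K) (LinearMap.toSpanSingleton K _ φ)
        rw [LinearMap.range_eq_top]
        intro ψ
        obtain ⟨k, rfl⟩ := hφ ψ
        exact ⟨k, rfl⟩
      refine isNoetherian_of_range_eq_ker (M := (M ⧸ N →ₗ[K] J)) (P := (N →ₗ[K] J))
        (LinearMap.lcomp K J N.mkQ) (LinearMap.lcomp K J N.subtype) ?_
      apply le_antisymm
      · rintro _ ⟨ψ, rfl⟩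
        refine LinearMap.ext fun n => ?_
        change ψ (N.mkQ n) = 0
        have : N.mkQ (n : M) = 0 := by simp
        rw [this, map_zero]
      · intro ψ hψ
        have : N ≤ LinearMap.ker ψ := fun n hn => LinearMap.congr_fun hψ ⟨n, hn⟩
        exact ⟨N.liftQ ψ this, Submodule.liftQ_mkQ N ψ this⟩
  · intro M _ _ hM
    induction hM with
    | of_subsingleton =>
      intro F
      refine ⟨0, fun φ => ?_⟩
      rw [Subsingleton.elim φ 0, map_zero, LinearMap.zero_apply]
    | @of_simple_quotient M _ _ N hs _ ih =>
      intro F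
      obtain ⟨x, φ, hφ, hF⟩ := hone (M ⧸ N)
      obtain ⟨k, hk⟩ := hF (F.comp (LinearMap.lcomp K J N.mkQ))
      obtain ⟨y, hy⟩ := N.mkQ_surjective (k • x)
      have h1 : ∀ ψ : M ⧸ N →ₗ[K] J, F (ψ.comp N.mkQ) = ψ (N.mkQ y) := by
        intro ψ
        obtain ⟨l, rfl⟩ := hφ ψ
        have : F ((l • φ).comp N.mkQ) = l • F (φ.comp N.mkQ) := by
          rw [← map_smul]; rfl
        rw [this, hy, LinearMap.smul_apply, ← hk]
        rfl
      let G : (M →ₗ[K] J) →ₗ[K] J := F - LinearMap.applyₗ y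
      obtain ⟨s, hs⟩ := InjK.ker K hinj (LinearMap.lcomp K J N.subtype) G (by
        intro ψ hψ
        have : N ≤ LinearMap.ker ψ := fun n hn => LinearMap.congr_fun hψ ⟨n, hn⟩
        have h2 := h1 (N.liftQ ψ this)
        rw [Submodule.liftQ_mkQ] at h2
        simp only [G, LinearMap.sub_apply, h2]
        simp)
      obtain ⟨n, hn⟩ := ih s
      refine ⟨y + n, fun ψ => ?_⟩
      have h3 := LinearMap.congr_fun hs ψ
      simp only [LinearMap.comp_apply, hn, G, LinearMap.sub_apply] at h3
      rw [map_add]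
      have h4 : ψ n = F ψ - ψ y := h3
      rw [h4]; abel

end Dual

end CF


namespace CF

section LasCore

variable {K : Type u} [CommRing K] {R : Type u} [Ring R] [Algebra K R]
  [IsArtinianRing K]

theorem las_core [Module.Finite K R] (U : Type u) [AddCommGroup U] [Module R U] [Module K U] [IsScalarTower K R U]
    (hU : IsFiniteLength K U) (𝔫 : Submodule K (U →ₗ[R] U))
    (h1 : LinearMap.id ∉ 𝔫) :
    ∃ (E : Type u) (_ : AddCommGroup E) (_ : Module R E) (lam : U →ₗ[R] E), Module.Finite R E ∧
      (¬ ∃ r : E →ₗ[R] U, r.comp lam = LinearMap.id) ∧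
      ∀ (Y : Type u) [AddCommGroup Y] [Module R Y] [Module K Y] [IsScalarTower K R Y]
        (h : U →ₗ[R] Y), (∀ g : Y →ₗ[R] U, g.comp h ∈ 𝔫) → ∃ h' : E →ₗ[R] Y, h'.comp lam = h := by
  obtain ⟨J, _, _, hJ⟩ := exists_dual K
  have hnU : IsNoetherian K U := (isFiniteLength_iff_isNoetherian_isArtinian.1 hU).1
  have hnD : IsNoetherian K (U →ₗ[K] J) := hJ.noeth U hU
  obtain ⟨m, ψ, hψ⟩ := Module.Finite.exists_fin (R := K) (M := U →ₗ[K] J)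
  let p : (Fin m → R) →ₗ[K] (U →ₗ[K] J) :=
    { toFun := fun r => ∑ i, (ψ i).comp (Algebra.lsmul K K U (r i))
      map_add' := by
        intro r s
        ext u
        simp [add_smul, Finset.sum_add_distrib]
      map_smul' := by
        intro k r
        ext u
        simp [Finset.smul_sum] }
  have hp : ∀ r u, p r u = ∑ i, ψ i (r i • u) := by
    intro r u
    simp [p]
  have hps : Function.Surjective p := by
    intro d
    have hd : d ∈ Submodule.span K (Set.range ψ) := by rw [hψ]; trivial
    obtain ⟨c, rfl⟩ := Submodule.mem_span_range_iff_exists_fun K |>.1 hd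
    refine ⟨fun i => algebraMap K R (c i), ?_⟩
    ext u
    simp [hp]
  have hsep : ∀ u : U, (∀ r, p r u = 0) → u = 0 := by
    intro u h
    by_contra hne
    obtain ⟨f, hf⟩ := hJ.cog U u hne
    obtain ⟨r, rfl⟩ := hps f
    exact hf (h r)
  have hnR : IsNoetherian K (Fin m → R) := inferInstance
  obtain ⟨n, a, ha⟩ := Submodule.fg_iff_exists_fin_generating_family.1
    (hnR.noetherian (LinearMap.ker p))
  have hpa : ∀ j, p (a j) = 0 := by
    intro j
    have : a j ∈ LinearMap.ker p := by rw [← ha]; exact Submodule.subset_span ⟨j, rfl⟩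
    exact this
  -- the functional
  obtain ⟨φ, hφ, hφ1⟩ : ∃ φ : (U →ₗ[R] U) →ₗ[K] J, (∀ g ∈ 𝔫, φ g = 0) ∧ φ LinearMap.id ≠ 0 := by
    have : 𝔫.mkQ LinearMap.id ≠ 0 := by simpa using h1
    obtain ⟨f, hf⟩ := hJ.cog _ _ this
    refine ⟨f.comp 𝔫.mkQ, fun g hg => ?_, hf⟩
    have : 𝔫.mkQ g = 0 := by simpa using hg
    rw [LinearMap.comp_apply, this, map_zero]
  obtain ⟨u, hu⟩ : ∃ u : Fin m → U, ∀ g : U →ₗ[R] U, φ g = ∑ i, ψ i (g (u i)) := by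
    let θ : (U →ₗ[R] U) →ₗ[K] (Fin m → (U →ₗ[K] J)) :=
      { toFun := fun g i => (ψ i).comp (g.restrictScalars K)
        map_add' := by
          intro g g'
          ext i x
          simp
        map_smul' := by
          intro k g
          ext i x
          simp }
    obtain ⟨s, hs⟩ := InjK.ker K hJ.inj θ φ (by
      intro g hg
      have : g = 0 := by
        ext x
        apply hsep
        intro r
        have h2 : ∀ d ∈ Submodule.span K (Set.range ψ), d (g x) = 0 := by
          intro d hd
          induction hd using Submodule.span_induction with
          | mem d hd =>
            obtain ⟨i, rfl⟩ := hd
            exact LinearMap.congr_fun (congrFun hg i) x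
          | zero => rfl
          | add d d' _ _ h h' => rw [LinearMap.add_apply, h, h', add_zero]
          | smul k d _ h => rw [LinearMap.smul_apply, h, smul_zero]
        exact h2 _ (by rw [hψ]; trivial)
      rw [this, map_zero])
    have : ∀ i, ∃ x : U, ∀ d, s (Pi.single i d) = d x := by
      intro i
      obtain ⟨x, hx⟩ := hJ.rfl U hU (s.comp (LinearMap.single K (fun _ => U →ₗ[K] J) i))
      exact ⟨x, hx⟩
    choose u hu using this
    refine ⟨u, fun g => ?_⟩
    have h3 : φ g = s (θ g) := (LinearMap.congr_fun hs g).symm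
    rw [h3, ← Finset.univ_sum_single (θ g), map_sum]
    apply Finset.sum_congr rfl
    intro i _
    rw [hu]
    rfl
  let w : Fin m → U × (Fin n → R) := fun i => (u i, fun j => - a j i)
  let B : Submodule R (U × (Fin n → R)) := Submodule.span R (Set.range w)
  have hfU : Module.Finite R U := Module.Finite.of_restrictScalars_finite K R U
  refine ⟨(U × (Fin n → R)) ⧸ B, inferInstance, inferInstance,
    B.mkQ.comp (LinearMap.inl R U (Fin n → R)), inferInstance, ?_, ?_⟩
  · rintro ⟨r, hr⟩
    let z : Fin n → U := fun j => r (B.mkQ (0, Pi.single j 1))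
    have hz : ∀ i, u i = ∑ j, a j i • z j := by
      intro i
      have e1 : B.mkQ (w i) = 0 := by
        have : w i ∈ B := Submodule.subset_span ⟨i, rfl⟩
        simpa using this
      have e2 : w i = LinearMap.inl R U (Fin n → R) (u i) -
          ∑ j, a j i • ((0, Pi.single j 1) : U × (Fin n → R)) := by
        apply Prod.ext
        · simp [w, Prod.fst_sum]
        · ext j
          simp [w, Prod.snd_sum, Pi.single_apply, Finset.sum_apply]
      rw [e2, map_sub] at e1
      have e3 := congrArg r e1
      rw [map_sub, map_zero, sub_eq_zero, map_sum, map_sum] at e3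
      have e4 : r (B.mkQ (LinearMap.inl R U (Fin n → R) (u i))) = u i := LinearMap.congr_fun hr (u i)
      rw [e4] at e3
      rw [e3]
      apply Finset.sum_congr rfl
      intro j _
      rw [map_smul, map_smul]
    apply hφ1
    rw [hu]
    calc ∑ i, ψ i (LinearMap.id (u i)) = ∑ i, ∑ j, ψ i (a j i • z j) := by
          apply Finset.sum_congr rfl
          intro i _
          rw [LinearMap.id_apply, hz i, map_sum]
      _ = ∑ j, p (a j) (z j) := by
          rw [Finset.sum_comm]
          apply Finset.sum_congr rfl
          intro j _
          rw [hp]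
      _ = 0 := by
          apply Finset.sum_eq_zero
          intro j _
          rw [hpa, LinearMap.zero_apply]
  · intro Y _ _ _ _ h hg
    by_cases hz : ∃ z : Fin n → Y, ∀ i, h (u i) = ∑ j, a j i • z j
    · obtain ⟨z, hz⟩ := hz
      refine ⟨B.liftQ (h.coprod (Fintype.linearCombination R z)) ?_, ?_⟩
      · rw [Submodule.span_le]
        rintro _ ⟨i, rfl⟩
        change h (u i) + Fintype.linearCombination R z (fun j => - a j i) = 0
        rw [hz i, Fintype.linearCombination_apply]
        simp [neg_smul]
      · ext x
        simp
    · exfalso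
      let T : (Fin n → Y) →ₗ[K] (Fin m → Y) :=
        { toFun := fun z i => ∑ j, a j i • z j
          map_add' := by
            intro z z'
            ext i
            simp [smul_add, Finset.sum_add_distrib]
          map_smul' := by
            intro k z
            ext i
            simp only [Pi.smul_apply, RingHom.id_apply, Finset.smul_sum]
            exact Finset.sum_congr rfl fun j _ => smul_comm _ _ _ }
      have hT : (LinearMap.range T).mkQ (fun i => h (u i)) ≠ 0 := by
        intro h0
        have : (fun i => h (u i)) ∈ LinearMap.range T := by simpa using h0
        obtain ⟨z, hz'⟩ := this
        exact hz ⟨z, fun i => (congrFun hz' i).symm⟩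
      obtain ⟨f, hf⟩ := hJ.cog _ _ hT
      let η : (Fin m → Y) →ₗ[K] J := f.comp (LinearMap.range T).mkQ
      have hη : ∀ z, η (T z) = 0 := by
        intro z
        have : (LinearMap.range T).mkQ (T z) = 0 := by simp
        rw [LinearMap.comp_apply, this, map_zero]
      have hex : ∀ y : Y, ∃ x : U, ∀ r, p r x = η (fun i => r i • y) := by
        intro y
        let q0 : (Fin m → R) →ₗ[K] (Fin m → Y) :=
          { toFun := fun r i => r i • y
            map_add' := by
              intro r s
              ext i
              simp [add_smul]
            map_smul' := by
              intro k r
              ext i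
              simp }
        let q : (Fin m → R) →ₗ[K] J := η.comp q0
        obtain ⟨s, hs⟩ := InjK.ker K hJ.inj p q (by
          intro r hr
          have hr' : r ∈ Submodule.span K (Set.range a) := by rw [ha]; exact hr
          obtain ⟨c, rfl⟩ := Submodule.mem_span_range_iff_exists_fun K |>.1 hr'
          rw [← hη (fun j => c j • y)]
          change η _ = η _
          congr 1
          ext i
          change (∑ j, c j • a j) i • y = ∑ j, a j i • (c j • y)
          rw [Finset.sum_apply, Finset.sum_smul]
          refine Finset.sum_congr rfl fun j _ => ?_
          rw [Pi.smul_apply, smul_assoc, smul_comm])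
        obtain ⟨x, hx⟩ := hJ.rfl U hU s
        refine ⟨x, fun r => ?_⟩
        rw [← hx]
        exact LinearMap.congr_fun hs r
      choose g hgp using hex
      have hext : ∀ x x' : U, (∀ r, p r x = p r x') → x = x' := by
        intro x x' hh
        rw [← sub_eq_zero]
        apply hsep
        intro r
        rw [map_sub, hh, sub_self]
      let G : Y →ₗ[R] U :=
        { toFun := g
          map_add' := by
            intro y y'
            apply hext
            intro r
            rw [map_add, hgp, hgp, hgp, ← map_add]
            congr 1
            ext i
            simp
          map_smul' := by
            intro t y
            apply hext
            intro r
            have : p r (t • g y) = p (fun i => r i * t) (g y) := by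
              rw [hp, hp]
              simp [mul_smul]
            rw [RingHom.id_apply, this, hgp, hgp]
            congr 1
            ext i
            simp [mul_smul] }
      apply hf
      have h5 := hφ _ (hg G)
      rw [hu] at h5
      have h6 : ∀ i y, ψ i (g y) = η (Pi.single i y) := by
        intro i y
        have := hgp y (Pi.single i 1)
        rw [hp] at this
        rw [Finset.sum_eq_single i (by intro b _ hb; simp [hb]) (by simp)] at this
        rw [Pi.single_eq_same, one_smul] at this
        rw [this]
        congr 1
        ext j
        by_cases hj : j = i
        · subst hj; simp
        · simp [hj]
      rw [← h5]
      change η (fun i => h (u i)) = _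
      rw [← Finset.univ_sum_single (fun i => h (u i)), map_sum]
      apply Finset.sum_congr rfl
      intro i _
      exact (h6 i (h (u i))).symm

theorem nice_of (K : Type u) [CommRing K] (R : Type u) [Ring R] [Algebra K R] [Module.Finite K R]
    [IsArtinianRing K] : Nice R := by
  have hA : IsArtinian R R := isArtinian_of_tower K inferInstance
  have hN : IsNoetherian R R := isNoetherian_of_tower K inferInstance
  have hA' : IsArtinianRing R := hA
  refine ⟨isFiniteLength_iff_isNoetherian_isArtinian.2 ⟨hN, hA⟩, ?_, ?_⟩
  · intro U hU
    let : Module K U.M := Module.compHom U.M (algebraMap K R)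
    have : IsScalarTower K R U.M := IsScalarTower.of_algebraMap_smul (fun _ _ => rfl)
    have : Module.Finite K U.M := Module.Finite.trans R U.M
    have hfl : IsFiniteLength K U.M :=
      isFiniteLength_iff_isNoetherian_isArtinian.2 ⟨inferInstance, inferInstance⟩
    let 𝔫 : Submodule K (U.M →ₗ[R] U.M) :=
      { carrier := {g | ¬ Function.Bijective g}
        add_mem' := by
          intro g g' hg hg' h
          rcases bij_add hU h with h | h
          · exact hg h
          · exact hg' h
        zero_mem' := zero_not_bij hU
        smul_mem' := by
          intro k g hg h
          apply hg
          refine ⟨fun x y hxy => h.1 ?_, fun y => ?_⟩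
          · rw [LinearMap.smul_apply, LinearMap.smul_apply, hxy]
          · obtain ⟨x, hx⟩ := h.2 y
            refine ⟨k • x, ?_⟩
            rw [← hx, LinearMap.smul_apply]
            exact LinearMap.map_smul_of_tower g k x }
    obtain ⟨E, _, _, lam, hE, hns, hfac⟩ := las_core (K := K) U.M hfl 𝔫
      (fun h => h Function.bijective_id)
    refine ⟨⟨E, isFiniteLength_iff_isNoetherian_isArtinian.2 ⟨inferInstance, inferInstance⟩⟩,
      lam, hns, ?_⟩
    intro Y h hh
    let : Module K Y.M := Module.compHom Y.M (algebraMap K R)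
    have : IsScalarTower K R Y.M := IsScalarTower.of_algebraMap_smul (fun _ _ => rfl)
    refine hfac Y.M h ?_
    intro g hg
    obtain ⟨s, hs, -⟩ := exists_inv (g.comp h) hg
    exact hh ⟨s.comp g, hs⟩
  · intro X Y
    let : Module K X.M := Module.compHom X.M (algebraMap K R)
    have : IsScalarTower K R X.M := IsScalarTower.of_algebraMap_smul (fun _ _ => rfl)
    have : Module.Finite K X.M := Module.Finite.trans R X.M
    let : Module K Y.M := Module.compHom Y.M (algebraMap K R)
    have : IsScalarTower K R Y.M := IsScalarTower.of_algebraMap_smul (fun _ _ => rfl)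
    have : Module.Finite K Y.M := Module.Finite.trans R Y.M
    have hart : IsArtinian K (X.M →ₗ[R] Y.M) := by
      let ι : (X.M →ₗ[R] Y.M) →ₗ[K] (X.M →ₗ[K] Y.M) :=
        LinearMap.restrictScalarsₗ K R X.M Y.M K
      exact isArtinian_of_injective ι (LinearMap.restrictScalars_injective K)
    let F : ℕ → Submodule K (X.M →ₗ[R] Y.M) := fun n =>
      { radPow R n X Y with
        smul_mem' := by
          intro k f hf
          have : k • f = (k • LinearMap.id : Y.M →ₗ[R] Y.M).comp f := rfl
          rw [this]
          exact radPow_comp_left hf _ }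
    have hF : ∀ n m, n ≤ m → F m ≤ F n := fun n m h f hf => radPow_anti h X Y hf
    obtain ⟨N, hN⟩ := IsArtinian.monotone_stabilizes
      (⟨fun n => OrderDual.toDual (F n), fun n m h => hF n m h⟩ : ℕ →o (Submodule K (X.M →ₗ[R] Y.M))ᵒᵈ)
    refine ⟨N, fun n hn => ?_⟩
    have := hN n hn
    have h2 : F N = F n := this
    ext f
    change f ∈ F n ↔ f ∈ F N
    rw [h2]

end LasCore

end CF


namespace CF

variable {R : Type u} [Ring R]

theorem injL_extend {I A B : ModA R} (hI : InjL I) (i : A.M →ₗ[R] B.M)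
    (hi : Function.Injective i) (a : A.M →ₗ[R] I.M) : ∃ b : B.M →ₗ[R] I.M, b.comp i = a := by
  let C : Submodule R (I.M × B.M) := LinearMap.range (a.prod (-i))
  have hfl : IsFiniteLength R (I.M × B.M) :=
    isFiniteLength_iff_isNoetherian_isArtinian.2 ⟨inferInstance, inferInstance⟩
  let P : ModA R := ⟨(I.M × B.M) ⧸ C, hfl.of_surjective C.mkQ_surjective⟩
  let f : I.M →ₗ[R] P.M := C.mkQ.comp (LinearMap.inl R I.M B.M)
  have hf : Function.Injective f := by
    rw [← LinearMap.ker_eq_bot, LinearMap.ker_eq_bot']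
    intro x hx
    have : (x, (0 : B.M)) ∈ C := (Submodule.Quotient.mk_eq_zero C).1 hx
    obtain ⟨y, hy⟩ := this
    have h1 : a y = x := congrArg Prod.fst hy
    have h2 : - i y = 0 := congrArg Prod.snd hy
    have h3 : y = 0 := hi (by rw [map_zero]; exact neg_eq_zero.1 h2)
    rw [← h1, h3, map_zero]
  obtain ⟨r, hr⟩ := hI P f hf
  refine ⟨(r.comp C.mkQ).comp (LinearMap.inr R I.M B.M), ?_⟩
  ext x
  have h0 : C.mkQ (a x, - i x) = 0 := (Submodule.Quotient.mk_eq_zero C).2 ⟨x, rfl⟩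
  have e : ((a x, - i x) : I.M × B.M) = (a x, 0) - (0, i x) := by simp
  rw [e, map_sub, sub_eq_zero] at h0
  have h1 : r (C.mkQ (a x, 0)) = a x := LinearMap.congr_fun hr (a x)
  change r (C.mkQ (0, i x)) = a x
  rw [← h0, h1]

section Quot

variable [Nice R] (I : Ideal R) [I.IsTwoSided]

theorem finLen_of_finite (M : Type u) [AddCommGroup M] [Module R M] [Module.Finite R M] :
    IsFiniteLength R M := by
  have h := isFiniteLength_iff_isNoetherian_isArtinian.1 (Nice.finLen (R := R))
  have h1 : IsNoetherianRing R := h.1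
  have h2 : IsArtinianRing R := h.2
  exact isFiniteLength_iff_isNoetherian_isArtinian.2 ⟨inferInstance, inferInstance⟩

theorem finLen_res (N : ModA (R ⧸ I)) :
    @IsFiniteLength R _ N.M _ (Module.compHom N.M (Ideal.Quotient.mk I)) := by
  let _ : Module R N.M := Module.compHom N.M (Ideal.Quotient.mk I)
  have : IsScalarTower R (R ⧸ I) N.M := ⟨fun r s x => by
    obtain ⟨s, rfl⟩ := Ideal.Quotient.mk_surjective s
    change (Ideal.Quotient.mk I (r * s)) • x = Ideal.Quotient.mk I r • (Ideal.Quotient.mk I s • x)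
    rw [map_mul, mul_smul]⟩
  have : Module.Finite R N.M := Module.Finite.trans (R ⧸ I) N.M
  exact finLen_of_finite N.M

/-- restriction of scalars -/
abbrev res (N : ModA (R ⧸ I)) : ModA R :=
  @ModA.mk R _ N.M N.acg (Module.compHom N.M (Ideal.Quotient.mk I)) (finLen_res I N)

variable {I}

abbrev down {N N' : ModA (R ⧸ I)} (f : (res I N).M →ₗ[R] (res I N').M) : N.M →ₗ[R ⧸ I] N'.M where
  toFun := f
  map_add' := f.map_add
  map_smul' := by
    intro r x
    obtain ⟨r, rfl⟩ := Ideal.Quotient.mk_surjective r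
    exact f.map_smul r x

abbrev up {N N' : ModA (R ⧸ I)} (f : N.M →ₗ[R ⧸ I] N'.M) : (res I N).M →ₗ[R] (res I N').M where
  toFun := f
  map_add' := f.map_add
  map_smul' := fun r x => f.map_smul (Ideal.Quotient.mk I r) x

theorem up_ne_zero {N N' : ModA (R ⧸ I)} {f : N.M →ₗ[R ⧸ I] N'.M} (h : f ≠ 0) : up f ≠ 0 := by
  intro h0
  exact h (LinearMap.ext fun x => LinearMap.congr_fun h0 x)

theorem down_ne_zero {N N' : ModA (R ⧸ I)} {f : (res I N).M →ₗ[R] (res I N').M} (h : f ≠ 0) :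
    down f ≠ 0 := by
  intro h0
  exact h (LinearMap.ext fun x => LinearMap.congr_fun h0 x)

theorem indec_res {N : ModA (R ⧸ I)} : (res I N).IsIndec ↔ N.IsIndec := by
  constructor
  · rintro ⟨h1, h2⟩
    refine ⟨h1, fun f hf => ?_⟩
    rcases h2 (up (N := N) (N' := N) f) (LinearMap.ext fun x => LinearMap.congr_fun hf x) with h | h
    · exact Or.inl (LinearMap.ext fun x => LinearMap.congr_fun h x)
    · exact Or.inr (LinearMap.ext fun x => LinearMap.congr_fun h x)
  · rintro ⟨h1, h2⟩
    refine ⟨h1, fun f hf => ?_⟩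
    rcases h2 (down (N := N) (N' := N) f) (LinearMap.ext fun x => LinearMap.congr_fun hf x) with h | h
    · exact Or.inl (LinearMap.ext fun x => LinearMap.congr_fun h x)
    · exact Or.inr (LinearMap.ext fun x => LinearMap.congr_fun h x)

theorem iso_res {N N' : ModA (R ⧸ I)} : (res I N).Iso (res I N') ↔ N.Iso N' := by
  constructor
  · rintro ⟨e⟩
    exact iso_of_bij (down (N := N) (N' := N') e.toLinearMap) e.bijective
  · rintro ⟨e⟩
    exact iso_of_bij (up (N := N) (N' := N') e.toLinearMap) e.bijective

theorem hn_res {N N' : ModA (R ⧸ I)} : HN (res I N) (res I N') ↔ HN N N' := by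
  constructor
  · rintro ⟨h1, h2, f, hf⟩
    exact ⟨indec_res.1 h1, indec_res.1 h2, down f, down_ne_zero hf⟩
  · rintro ⟨h1, h2, f, hf⟩
    exact ⟨indec_res.2 h1, indec_res.2 h2, up f, up_ne_zero hf⟩

theorem le_res {N N' : ModA (R ⧸ I)} (h : Le N N') : Le (res I N) (res I N') :=
  Relation.ReflTransGen.lift (res I) (fun _ _ h => hn_res.2 h) _ _ h

theorem finUp_res {P : ModA R → Prop} (h : FinUp P) : FinUp (fun N : ModA (R ⧸ I) => P (res I N)) := by
  classical
  obtain ⟨l, hl⟩ := h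
  have : ∀ l : List (ModA R), ∃ l' : List (ModA (R ⧸ I)), ∀ N : ModA (R ⧸ I),
      (∃ Y ∈ l, (res I N).Iso Y) → ∃ Y ∈ l', N.Iso Y := by
    intro l
    induction l with
    | nil => exact ⟨[], by rintro N ⟨Y, hY, _⟩; cases hY⟩
    | cons Y l ih =>
      obtain ⟨l', hl'⟩ := ih
      by_cases hY : ∃ N0 : ModA (R ⧸ I), (res I N0).Iso Y
      · obtain ⟨N0, hN0⟩ := hY
        refine ⟨N0 :: l', ?_⟩
        rintro N ⟨Y', hY', hi⟩
        rcases List.mem_cons.1 hY' with rfl | h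
        · exact ⟨N0, by simp, iso_res.1 (iso_trans hi (iso_symm hN0))⟩
        · obtain ⟨Z, hZ, hi'⟩ := hl' N ⟨Y', h, hi⟩
          exact ⟨Z, by simp [hZ], hi'⟩
      · refine ⟨l', ?_⟩
        rintro N ⟨Y', hY', hi⟩
        rcases List.mem_cons.1 hY' with rfl | h
        · exact absurd ⟨N, hi⟩ hY
        · exact hl' N ⟨Y', h, hi⟩
  obtain ⟨l', hl'⟩ := this l
  exact ⟨l', fun N hN hP => hl' N (hl _ (indec_res.2 hN) hP)⟩

theorem V_res {N : ModA (R ⧸ I)} (h : V (res I N)) : V N := by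
  refine ⟨indec_res.1 h.1, fun Y hY => ?_⟩
  have := finUp_res (I := I) (h.2 _ (le_res hY))
  exact this.mono fun U _ hU => hn_res.2 hU

theorem exists_lift (U : ModA R) (h : ∀ r ∈ I, ∀ u : U.M, r • u = 0) :
    ∃ N : ModA (R ⧸ I), U.Iso (res I N) := by
  have hT : Module.IsTorsionBySet R U.M (I : Set R) := fun x a => h a.1 a.2 x
  let _ : Module (R ⧸ I) U.M := hT.module
  have hfg : Module.Finite R U.M := inferInstance
  have : IsScalarTower R (R ⧸ I) U.M := ⟨fun r s x => by
    obtain ⟨s, rfl⟩ := Ideal.Quotient.mk_surjective s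
    exact mul_smul r s x⟩
  have hfl : IsFiniteLength (R ⧸ I) U.M :=
    isFiniteLength_iff_isNoetherian_isArtinian.2
      ⟨isNoetherian_of_tower R inferInstance, isArtinian_of_tower R inferInstance⟩
  refine ⟨⟨U.M, hfl⟩, ?_⟩
  refine ⟨{ toFun := fun x => x, invFun := fun x => x, map_add' := fun _ _ => rfl,
            map_smul' := fun _ _ => rfl, left_inv := fun _ => rfl, right_inv := fun _ => rfl }⟩

end Quot

end CF


namespace CF

variable {R : Type u} [Ring R]

/-- annihilator of all indecomposables without maps to `I`. -/
def annI (I : ModA R) : Ideal R where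
  carrier := {r | ∀ U : ModA R, U.IsIndec → ¬ HN U I → ∀ u : U.M, r • u = 0}
  zero_mem' := fun U _ _ u => zero_smul R u
  add_mem' := fun {a b} ha hb U h1 h2 u => by rw [add_smul, ha U h1 h2, hb U h1 h2, add_zero]
  smul_mem' := fun c x hx U h1 h2 u => by rw [smul_eq_mul, mul_smul, hx U h1 h2, smul_zero]

instance (I : ModA R) : (annI I).IsTwoSided :=
  ⟨fun {a} b ha U h1 h2 u => by rw [mul_smul]; exact ha U h1 h2 (b • u)⟩

theorem annI_ne_bot [Nice R] {I : ModA R} (hI : I.IsIndec) (hInj : InjL I) : annI I ≠ ⊥ := by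
  intro hbot
  let S : Set (Submodule R (RO R).M) := {N | ∃ (M : ModA R) (f : (RO R).M →ₗ[R] M.M),
    (∀ g : M.M →ₗ[R] I.M, g = 0) ∧ LinearMap.ker f = N}
  have hS : S.Nonempty := by
    let Zr : ModA R := ⟨PUnit.{u+1}, IsFiniteLength.of_subsingleton⟩
    exact ⟨_, Zr, 0, fun g => LinearMap.ext fun x => by
      rw [Subsingleton.elim (α := PUnit.{u+1}) x 0, map_zero, map_zero], rfl⟩
  have hArt : IsArtinian R R :=
    (isFiniteLength_iff_isNoetherian_isArtinian.1 (Nice.finLen (R := R))).2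
  obtain ⟨N, ⟨M, f, hM, rfl⟩, hmin⟩ := IsArtinian.set_has_minimal S hS
  have hf : Function.Injective f := by
    rw [← LinearMap.ker_eq_bot, LinearMap.ker_eq_bot']
    intro x hx
    by_contra hx0
    have hx' : (x : R) ∉ annI I := by rw [hbot]; exact hx0
    have : ∃ U : ModA R, U.IsIndec ∧ ¬ HN U I ∧ ∃ u : U.M, (x : R) • u ≠ 0 := by
      by_contra hno
      push Not at hno
      exact hx' fun U h1 h2 u => hno U h1 h2 u
    obtain ⟨U, hU, hUI, u, hu⟩ := this
    let M' : ModA R := ⟨M.M × U.M,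
      isFiniteLength_iff_isNoetherian_isArtinian.2 ⟨inferInstance, inferInstance⟩⟩
    let f' : (RO R).M →ₗ[R] M'.M := f.prod (LinearMap.toSpanSingleton R U.M u)
    have hlt : LinearMap.ker f' < LinearMap.ker f := by
      refine lt_of_le_of_ne ?_ ?_
      · intro y hy
        exact congrArg Prod.fst (show f' y = 0 from hy)
      · intro h
        have : x ∈ LinearMap.ker f' := by rw [h]; exact hx
        exact hu (congrArg Prod.snd (show f' x = 0 from this))
    refine hmin _ ⟨M', f', ?_, rfl⟩ hlt
    intro g
    have g1 := hM (g.comp (LinearMap.inl R M.M U.M))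
    have g2 : g.comp (LinearMap.inr R M.M U.M) = 0 := by
      by_contra h
      exact hUI ⟨hU, hI, _, h⟩
    refine LinearMap.ext fun y => ?_
    obtain ⟨y1, y2⟩ := y
    have e : ((y1, y2) : M.M × U.M) = (y1, 0) + (0, y2) := by simp
    have e1 : g (y1, 0) = 0 := LinearMap.congr_fun g1 y1
    have e2 : g (0, y2) = 0 := LinearMap.congr_fun g2 y2
    rw [e, map_add, e1, e2, add_zero]; rfl
  obtain ⟨a, ha⟩ := exists_from_RO (id_ne_zero hI)
  obtain ⟨b, hb⟩ := injL_extend hInj f hf a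
  apply ha
  rw [← hb, hM b]
  rfl

/-- Paths avoiding the modules with a map to `I`. -/
def LeA (I : ModA R) (X Y : ModA R) : Prop :=
  Relation.ReflTransGen (fun U W => HN U W ∧ ¬ HN U I) X Y

theorem entry {I X : ModA R} (hX : X.IsIndec) {U : ModA R} (h : Le U X) :
    HN U I ∨ ∃ Z, Z.IsIndec ∧ ¬ HN Z I ∧ LeA I U Z ∧ Le Z X ∧
      (Z.Iso X ∨ ∃ W, W.IsIndec ∧ HN W I ∧ HN Z W) := by
  induction h using Relation.ReflTransGen.head_induction_on with
  | refl =>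
    by_cases hI : HN X I
    · exact Or.inl hI
    · exact Or.inr ⟨X, hX, hI, Relation.ReflTransGen.refl, Le.refl X, Or.inl (iso_refl X)⟩
  | @head U W hUW hWX ih =>
    by_cases hI : HN U I
    · exact Or.inl hI
    · right
      rcases ih with ih | ⟨Z, h1, h2, h3, h4, h5⟩
      · exact ⟨U, hUW.1, hI, Relation.ReflTransGen.refl, Relation.ReflTransGen.head hUW hWX,
          Or.inr ⟨W, hUW.2.1, ih, hUW⟩⟩
      · exact ⟨Z, h1, h2, Relation.ReflTransGen.head ⟨hUW, hI⟩ h3, h4, h5⟩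

theorem leA_lift [Nice R] {I Z : ModA R} (N : ModA (R ⧸ annI I)) (hZ : Z.Iso (res _ N)) {U : ModA R}
    (h : LeA I U Z) : ∃ N' : ModA (R ⧸ annI I), U.Iso (res _ N') ∧ Le N' N := by
  induction h using Relation.ReflTransGen.head_induction_on with
  | refl => exact ⟨N, hZ, Le.refl N⟩
  | @head U W hUW _ ih =>
    obtain ⟨N', h1, h2⟩ := ih
    obtain ⟨N0, hN0⟩ := exists_lift (I := annI I) U
      (fun r hr u => hr U hUW.1.1 hUW.2 u)
    refine ⟨N0, hN0, Relation.ReflTransGen.head ?_ h2⟩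
    rw [← hn_res]
    obtain ⟨hU, hW, f, hf⟩ := hn_of_iso_left hN0 hUW.1
    obtain ⟨e⟩ := h1
    refine ⟨hU, indec_of_iso ⟨e⟩ hW, e.toLinearMap.comp f, fun h => hf ?_⟩
    refine LinearMap.ext fun x => e.injective ?_
    rw [LinearMap.zero_apply, map_zero]
    exact LinearMap.congr_fun h x

theorem leA_iso {I X Y Z : ModA R} (h : X.Iso Y) (hX : X.IsIndec) (hI : ¬ HN X I)
    (hl : LeA I Z X) : LeA I Z Y :=
  Relation.ReflTransGen.tail hl ⟨hn_of_iso hX h, hI⟩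

theorem exists_Z {I X : ModA R} (hX : V X) (hI : V I) (hinf : ¬ FinUp (fun U => Le U X)) :
    ∃ Z, V Z ∧ ¬ HN Z I ∧ ¬ FinUp (fun U => LeA I U Z) := by
  by_contra hno
  push Not at hno
  apply hinf
  have hQ : FinUp (fun Z => Z.Iso X ∨ ∃ W, W.IsIndec ∧ HN W I ∧ HN Z W) := by
    refine (finUp_iso X).or ?_
    refine (FinUp.bind (Q := fun W Z => HN Z W) hI.lf (fun W hW hWI => ?_) ?_)
    · exact hI.2 W (Relation.ReflTransGen.single hWI)
    · rintro W W' Z ⟨e⟩ ⟨h1, h2, f, hf⟩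
      refine ⟨h1, indec_of_iso ⟨e⟩ h2, e.toLinearMap.comp f, fun h => hf ?_⟩
      refine LinearMap.ext fun x => e.injective ?_
      rw [LinearMap.zero_apply, map_zero]
      exact LinearMap.congr_fun h x
  have hQ' : FinUp (fun Z => ¬ HN Z I ∧ V Z ∧ (Z.Iso X ∨ ∃ W, W.IsIndec ∧ HN W I ∧ HN Z W)) :=
    hQ.mono fun Z _ h => h.2.2
  have hB := FinUp.bind (Q := fun Z U => Z.IsIndec ∧ ¬ HN Z I ∧ LeA I U Z) hQ'
    (fun Z hZ h => (hno Z h.2.1 h.1).mono fun U _ hU => hU.2.2)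
    (by
      rintro Z Z' U h ⟨h1, h2, h3⟩
      exact ⟨indec_of_iso h h1, fun h' => h2 (hn_of_iso_left (iso_symm h) h'), leA_iso h h1 h2 h3⟩)
  have hLI : FinUp (fun U => HN U I) := hI.lf
  refine (hLI.or hB).mono ?_
  intro U hU hle
  rcases entry (I := I) hX.1 hle with h | ⟨Z, h1, h2, h3, h4, h5⟩
  · exact Or.inl h
  · exact Or.inr ⟨Z, h1, ⟨h2, hX.of_le h4, h5⟩, h1, h2, h3⟩

theorem finLenK (K : Type u) [CommRing K] [IsArtinianRing K] (R : Type u) [Ring R] [Algebra K R]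
    [Module.Finite K R] : IsFiniteLength K R :=
  isFiniteLength_iff_isNoetherian_isArtinian.2 ⟨inferInstance, inferInstance⟩

theorem lemmaC (K : Type u) [CommRing K] [IsArtinianRing K] : ∀ (n : ℕ) (R : Type u) [Ring R]
    [Algebra K R] [Module.Finite K R], len (⟨R, finLenK K R⟩ : ModA K) < n →
    ∀ X : ModA R, V X → FinUp (fun U => Le U X) := by
  intro n
  induction n with
  | zero => intro R _ _ _ h; omega
  | succ n ih =>
    intro R _ _ _ hlen X hX
    have hNice : Nice R := nice_of K R
    by_contra hinf
    have : ∃ I, Le I X ∧ InjL I := by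
      by_contra hno
      push Not at hno
      exact hinf (key_finite hX hno)
    obtain ⟨I, hIX, hInj⟩ := this
    have hVI := hX.of_le hIX
    obtain ⟨Z, hZ, hZI, hZinf⟩ := exists_Z hX hVI hinf
    have hne := annI_ne_bot hVI.1 hInj
    have hlt : len (⟨R ⧸ annI I, finLenK K (R ⧸ annI I)⟩ : ModA K) <
        len (⟨R, finLenK K R⟩ : ModA K) := by
      let π : R →ₗ[K] R ⧸ annI I := (Ideal.Quotient.mkₐ K (annI I)).toLinearMap
      have hπ : Function.Surjective π := Ideal.Quotient.mk_surjective
      let X0 : ModA K := ⟨R, finLenK K R⟩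
      have hk : LinearMap.ker π ≠ ⊥ := by
        intro h
        apply hne
        rw [eq_bot_iff]
        intro r hr
        have : r ∈ LinearMap.ker π := Ideal.Quotient.eq_zero_iff_mem.2 hr
        rw [h] at this
        exact this
      have h1 := len_quot_lt (X := X0) (LinearMap.ker π) hk
      refine lt_of_le_of_lt ?_ h1
      exact len_le_of_inj (X := ⟨R ⧸ annI I, finLenK K (R ⧸ annI I)⟩)
        (Y := quotObj X0 (LinearMap.ker π))
        (LinearMap.quotKerEquivOfSurjective π hπ).symm.toLinearMap
        (LinearMap.quotKerEquivOfSurjective π hπ).symm.injective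
    obtain ⟨N, hN⟩ := exists_lift (I := annI I) Z (fun r hr u => hr Z hZ.1 hZI u)
    have hVN : V N := V_res (I := annI I) (hZ.of_le (le_of_iso (indec_of_iso hN hZ.1) (iso_symm hN)))
    obtain ⟨l, hl⟩ := ih (R ⧸ annI I) (by omega) N hVN
    apply hZinf
    refine ⟨l.map (res (annI I)), ?_⟩
    intro U hU hle
    obtain ⟨N', h1, h2⟩ := leA_lift N hN hle
    obtain ⟨Y, hY, hi⟩ := hl N' (indec_res.1 (indec_of_iso h1 hU)) h2
    exact ⟨res _ Y, List.mem_map_of_mem hY, iso_trans h1 (iso_res.2 hi)⟩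

end CF


namespace CF

variable {R : Type u} [Ring R]

theorem indec_of_simple {S : ModA R} (h : IsSimpleModule R S.M) : S.IsIndec := by
  refine ⟨IsSimpleModule.nontrivial R S.M, fun f hf => ?_⟩
  by_cases h0 : f = 0
  · exact Or.inl h0
  · right
    have hb := LinearMap.bijective_of_ne_zero h0
    refine LinearMap.ext fun x => hb.1 ?_
    exact LinearMap.congr_fun hf x

theorem finUp_simple_quot (M : Type u) [AddCommGroup M] [Module R M] (hM : IsFiniteLength R M) :
    FinUp (fun S : ModA R => IsSimpleModule R S.M ∧ ∃ f : M →ₗ[R] S.M, f ≠ 0) := by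
  induction hM with
  | of_subsingleton =>
    refine ⟨[], ?_⟩
    rintro S _ ⟨_, f, hf⟩
    exact absurd (LinearMap.ext fun x => by rw [Subsingleton.elim x 0, map_zero, map_zero]) hf
  | @of_simple_quotient M _ _ N hs hN ih =>
    let Q : ModA R := ⟨M ⧸ N, (IsFiniteLength.of_simple_quotient (N := N) hN).of_surjective N.mkQ_surjective⟩
    refine (ih.or (finUp_iso Q)).mono ?_
    rintro S hS ⟨h1, f, hf⟩
    by_cases h0 : f.comp N.subtype = 0
    · right
      have hle : N ≤ LinearMap.ker f := fun n hn => LinearMap.congr_fun h0 ⟨n, hn⟩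
      have hne : N.liftQ f hle ≠ 0 := by
        intro h
        apply hf
        rw [← Submodule.liftQ_mkQ N f hle, h, LinearMap.zero_comp]
      exact iso_symm (iso_of_bij (X := Q) (N.liftQ f hle) (LinearMap.bijective_of_ne_zero hne))
    · exact Or.inl ⟨h1, _, h0⟩

theorem finUp_simple [Nice R] : FinUp (fun S : ModA R => IsSimpleModule R S.M) := by
  refine (finUp_simple_quot R (Nice.finLen (R := R))).mono ?_
  intro S hS h
  obtain ⟨x, hx⟩ := @exists_ne S.M hS.1 0
  refine ⟨h, LinearMap.toSpanSingleton R S.M x, fun h0 => hx ?_⟩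
  have := LinearMap.congr_fun h0 1
  simpa using this

theorem exists_simple_sub {X : ModA R} (hX : X.IsIndec) : ∃ (S : ModA R) (s : S.M →ₗ[R] X.M),
    IsSimpleModule R S.M ∧ Function.Injective s := by
  have hn := hX.1
  have : IsAtomic (Submodule R X.M) := isAtomic_of_orderBot_wellFounded_lt wellFounded_lt
  obtain ⟨A, hA, -⟩ := (eq_bot_or_exists_atom_le (⊤ : Submodule R X.M)).resolve_left top_ne_bot
  exact ⟨subObj X A, A.subtype, isSimpleModule_iff_isAtom.2 hA, A.injective_subtype⟩

theorem injL_unique {I I' S : ModA R} (hI : I.IsIndec) (hI' : I'.IsIndec) (hS : IsSimpleModule R S.M)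
    (h : InjL I) (h' : InjL I') {s : S.M →ₗ[R] I.M} {s' : S.M →ₗ[R] I'.M}
    (hs : Function.Injective s) (hs' : Function.Injective s') : I.Iso I' := by
  obtain ⟨f, hf⟩ := injL_extend h' s hs s'
  obtain ⟨g, hg⟩ := injL_extend h s' hs' s
  have hb : Function.Bijective (g.comp f) := by
    rcases fitting hI (g.comp f) with h | ⟨n, hn⟩
    · exact h
    · exfalso
      obtain ⟨x, hx⟩ := @exists_ne S.M (IsSimpleModule.nontrivial R S.M) 0
      have h1 : ∀ n : ℕ, ((g.comp f : Module.End R I.M) ^ n) (s x) = s x := by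
        intro n
        induction n with
        | zero => rfl
        | succ n ih =>
          rw [pow_succ, Module.End.mul_apply]
          have e1 : f (s x) = s' x := LinearMap.congr_fun hf x
          have e2 : g (s' x) = s x := LinearMap.congr_fun hg x
          rw [LinearMap.comp_apply, e1, e2, ih]
      have h2 := h1 n
      rw [hn] at h2
      exact hx (hs (by rw [← h2, map_zero]; rfl))
  exact iso_of_bij f (bij_of_comp_bij hI hI' hb).1

theorem finUp_injL [Nice R] : FinUp (fun I : ModA R => InjL I) := by
  refine (FinUp.bind (Q := fun S I => InjL I ∧ ∃ s : S.M →ₗ[R] I.M, Function.Injective s)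
    (finUp_simple (R := R)) ?_ ?_).mono ?_
  · intro S hS hs
    by_cases h : ∃ I : ModA R, I.IsIndec ∧ InjL I ∧ ∃ s : S.M →ₗ[R] I.M, Function.Injective s
    · obtain ⟨I, hI, h1, s, h2⟩ := h
      refine ⟨[I], fun X hX ⟨h3, s', h4⟩ => ⟨I, by simp, injL_unique hX hI hs h3 h1 h4 h2⟩⟩
    · exact ⟨[], fun X hX h' => absurd ⟨X, hX, h'⟩ h⟩
  · rintro S S' I ⟨e⟩ ⟨h, s, hs⟩
    exact ⟨h, s.comp e.symm.toLinearMap, hs.comp e.symm.injective⟩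
  · intro I hI h
    obtain ⟨S, s, h1, h2⟩ := exists_simple_sub hI
    exact ⟨S, indec_of_simple h1, h1, h, s, h2⟩

theorem main_directing (K : Type u) [CommRing K] [IsArtinianRing K] (R : Type u) [Ring R]
    [Algebra K R] [Module.Finite K R] (hcf : CycFin R)
    (hd : FinUp (fun X : ModA R => IsDirectingModule X)) : FinUp (fun _ : ModA R => True) := by
  have hNice : Nice R := nice_of K R
  by_contra hinf
  apply V_infinite hcf hinf
  have hC : ∀ X : ModA R, V X → FinUp (fun U => Le U X) :=
    lemmaC K _ R (Nat.lt_succ_self _)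
  have hB : FinUp (fun X : ModA R => ∃ I, I.IsIndec ∧ (InjL I ∧ V I) ∧ (I.IsIndec ∧ Le X I)) := by
    refine FinUp.bind (P := fun I => InjL I ∧ V I) (Q := fun I X => I.IsIndec ∧ Le X I) ?_ ?_ ?_
    · exact (finUp_injL (R := R)).mono fun I _ h => h.1
    · exact fun I _ h => (hC I h.2).mono fun U _ hU => hU.2
    · rintro I I' X h ⟨h1, h2⟩
      exact ⟨indec_of_iso h h1, h2.trans (le_of_iso h1 h)⟩
  refine (hd.or hB).mono ?_
  intro X hX hV
  by_cases h : IsDirectingModule X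
  · exact Or.inl h
  · obtain ⟨I, h1, h2, h3⟩ := lemmaD hV (hC X hV) h
    have hI := h2.indec_left hX
    exact Or.inr ⟨I, hI, ⟨h1, hV.of_le h2⟩, hI, h3⟩

end CF


/-- **Theorem 10.** Let `A` be a cycle-finite basic indecomposable artin algebra. Then the
following are equivalent:
(i) the number of isomorphism classes of `τ_A`-rigid modules in `ind A` is finite;
(ii) the number of isomorphism classes of rigid modules in `ind A` is finite;
(iii) the number of isomorphism classes of directing modules in `ind A` is finite;
(iv) `A` is of finite representation type. -/
theorem cycle_finite_algebra_tau_rigid_tfae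
    (K A : Type u) [CommRing K] [IsArtinianRing K] [Ring A] [Algebra K A]
    [Module.Finite K A] (hbasic : IsBasicAlgebra A) (hconn : IsConnectedAlgebra A)
    (hcf : IsCycleFiniteAlg A) :
    ({x : ARVertex Aᵐᵒᵖ | ∃ X : IndecModA Aᵐᵒᵖ,
        ARVertex.mk X = x ∧ IsTauRigid X.1}.Finite ↔ IsFiniteRepTypeAlg A) ∧
    ({x : ARVertex Aᵐᵒᵖ | ∃ X : IndecModA Aᵐᵒᵖ,
        ARVertex.mk X = x ∧ IsRigid X.1}.Finite ↔ IsFiniteRepTypeAlg A) ∧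
    ({x : ARVertex Aᵐᵒᵖ | ∃ X : IndecModA Aᵐᵒᵖ,
        ARVertex.mk X = x ∧ IsDirectingModule X.1}.Finite ↔ IsFiniteRepTypeAlg A) := by
  haveI : Module.Finite K Aᵐᵒᵖ := Module.Finite.equiv (MulOpposite.opLinearEquiv K)
  haveI : CF.Nice Aᵐᵒᵖ := CF.nice_of K Aᵐᵒᵖ
  have key : CF.FinUp (R := Aᵐᵒᵖ) IsDirectingModule → IsFiniteRepTypeAlg A := by
    intro hd
    have h := (CF.finUp_iff_finite _).1 (CF.main_directing K Aᵐᵒᵖ hcf hd)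
    refine h.subset fun x _ => ?_
    obtain ⟨X, hX⟩ := Quotient.exists_rep x
    exact ⟨X, hX, trivial⟩
  refine ⟨⟨fun h => key ?_, fun h => h.subset (Set.subset_univ _)⟩,
    ⟨fun h => key ?_, fun h => h.subset (Set.subset_univ _)⟩,
    ⟨fun h => key ?_, fun h => h.subset (Set.subset_univ _)⟩⟩
  · exact ((CF.finUp_iff_finite _).2 h).mono fun X hX hd => CF.tauRigid_of_directing hX hd
  · exact ((CF.finUp_iff_finite _).2 h).mono fun X hX hd => CF.rigid_of_directing hX hd
  · exact (CF.finUp_iff_finite _).2 h
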